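/- Let n ≥ 2, m > 1 and δ > 1/2. There exists a constant C > 0 such that for every Schwartz function f(t,x) on ℝ^{1+n}, ‖⟨x⟩^{-δ} |D_x|^{m-1} Gf‖_{L²(ℝ^{1+n})} ≤ C ‖⟨x⟩^{δ} f‖_{L²(ℝ^{1+n})}, where Gf(t,x) = ∫₀ᵗ e^{i(t-s)p(D_x)} f(s,·)(x) ds. -/

import Mathlib

open MeasureTheory Real Complex RealInnerProductSpace

noncomputable section

/-- Fourier transform with convention `(2π)^(-n/2) ∫ e^(-ix·ξ) f(x) dx`. -/
def FT (n : ℕ) (f : EuclideanSpace ℝ (Fin n) → ℂ) (ξ : EuclideanSpace ℝ (Fin n)) : ℂ :=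
  ((2 * π) ^ (-(n : ℝ) / 2) : ℝ) •
    ∫ x : EuclideanSpace ℝ (Fin n), Complex.exp (-Complex.I * ((⟪x, ξ⟫ : ℝ) : ℂ)) * f x

/-- Inverse Fourier transform. -/
def IFT (n : ℕ) (F : EuclideanSpace ℝ (Fin n) → ℂ) (x : EuclideanSpace ℝ (Fin n)) : ℂ :=
  ((2 * π) ^ (-(n : ℝ) / 2) : ℝ) •
    ∫ ξ : EuclideanSpace ℝ (Fin n), Complex.exp (Complex.I * ((⟪x, ξ⟫ : ℝ) : ℂ)) * F ξ

/-- Fourier multiplier with symbol `q`: `q(D_x) f = IFT (q · FT f)`. -/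
def mult (n : ℕ) (q : EuclideanSpace ℝ (Fin n) → ℂ) (f : EuclideanSpace ℝ (Fin n) → ℂ) :
    EuclideanSpace ℝ (Fin n) → ℂ :=
  IFT n fun ξ => q ξ * FT n f ξ

/-!
Damping by `e^(-εt)` and taking the Fourier transform in time turns the Duhamel operator into the
multiplier `|ξ|^(m-1) / (τ - a(ξ)^m - iε)`. By Plancherel in time, letting `ε → 0`, it suffices to
bound this resolvent from `L²(⟨x⟩^(2δ) dx)` to `L²(⟨x⟩^(-2δ) dx)` uniformly in `τ` and `ε ≠ 0`.
Negative times reduce to positive ones by time reversal.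

On each ray the symbol is a rescaled Cauchy kernel `r^(m-1) / (τ - r^m - iε)` in the variable `r^m`.
Its integral over a window symmetric about the singularity is bounded because the real parts cancel,
so the densities which are Hölder continuous in `r` have uniformly bounded integrals against it. If
`φ` is supported in a ball of radius `R`, a derivative of `𝓕 φ` costs a factor `R`, and Sobolev
embedding on rays shows that `𝓕 φ` is Hölder of some small order `κ > 0` on almost every ray, with
constants of size `R^(1/2+κ) ‖φ‖` in the square mean over all directions. A dyadic decomposition of
space sums these bounds, since `1/2 + κ < δ`.
-/

section CauchySchwarz

variable {α : Type*} [MeasurableSpace α] {μ : Measure α}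

theorem integral_norm_mul_norm_le_sqrt {E F : Type*} [NormedAddCommGroup E]
    [NormedAddCommGroup F] {f : α → E} {g : α → F} (hf : MemLp f 2 μ) (hg : MemLp g 2 μ) :
    ∫ x, ‖f x‖ * ‖g x‖ ∂μ ≤ √(∫ x, ‖f x‖ ^ 2 ∂μ) * √(∫ x, ‖g x‖ ^ 2 ∂μ) := by
  simpa [Real.sqrt_eq_rpow] using
    integral_mul_norm_le_Lp_mul_Lq (μ := μ) (f := fun x => ‖f x‖) (g := fun x => ‖g x‖)
      Real.HolderConjugate.two_two (by simpa using hf.norm) (by simpa using hg.norm)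

theorem eLpNorm_two_sq {E : Type*} [NormedAddCommGroup E] (f : α → E) :
    eLpNorm f 2 μ ^ 2 = ∫⁻ x, ‖f x‖ₑ ^ 2 ∂μ := by
  simpa using eLpNorm_nnreal_pow_eq_lintegral (μ := μ) (f := f) (p := 2) (by norm_num)

theorem inner_toLp_toLp {f g : α → ℂ} (hf : MemLp f 2 μ) (hg : MemLp g 2 μ) :
    inner ℂ (hg.toLp g) (hf.toLp f) = ∫ x, f x * (starRingEnd ℂ) (g x) ∂μ := by
  rw [L2.inner_def]
  refine integral_congr_ae ?_
  filter_upwards [hf.coeFn_toLp, hg.coeFn_toLp] with x hfx hgx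
  rw [hfx, hgx, RCLike.inner_apply]

end CauchySchwarz

section Plancherel

open FourierTransform SchwartzMap

variable {V : Type*} [NormedAddCommGroup V] [InnerProductSpace ℝ V] [FiniteDimensional ℝ V]
  [MeasurableSpace V] [BorelSpace V]

theorem integral_fourier_mul_eq_of_integrable {f g : V → ℂ} (hf : Integrable f)
    (hg : Integrable g) : ∫ ξ, 𝓕 f ξ * g ξ = ∫ x, f x * 𝓕 g x := by
  simpa using! VectorFourier.integral_fourierIntegral_smul_eq_flip (L := innerₗ V)
    Real.continuous_fourierChar continuous_inner hf hg

theorem continuous_fourier_of_integrable {f : V → ℂ} (hf : Integrable f) : Continuous (𝓕 f) :=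
  VectorFourier.fourierIntegral_continuous Real.continuous_fourierChar continuous_inner hf

theorem norm_fourier_le_integral_norm (f : V → ℂ) (ξ : V) : ‖𝓕 f ξ‖ ≤ ∫ x, ‖f x‖ :=
  VectorFourier.norm_fourierIntegral_le_integral_norm _ _ _ _ _

-- Both sides define the same tempered distribution, which is tested against `C_c^∞`.
theorem fourier_toLp_ae_eq {f : V → ℂ} (hf : Integrable f) (hf2 : MemLp f 2) :
    ((𝓕 (hf2.toLp f) : Lp ℂ 2 (volume : Measure V)) : V → ℂ) =ᵐ[volume] 𝓕 f := by
  refine ae_eq_of_integral_contDiff_smul_eq ((Lp.memLp _).locallyIntegrable (by norm_num))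
    (continuous_fourier_of_integrable hf).locallyIntegrable fun g hg hgc => ?_
  have hgc' : HasCompactSupport (fun x => (g x : ℂ)) := hgc.comp_left ofReal_zero
  have hg' : ContDiff ℝ (⊤ : ℕ∞) (fun x => (g x : ℂ)) := ofRealCLM.contDiff.comp hg
  let G : 𝓢(V, ℂ) := hgc'.toSchwartzMap hg'
  have hG : ∀ x, G x = (g x : ℂ) := fun x => rfl
  have h := congrArg (fun T => T G) (Lp.fourier_toTemperedDistribution_eq (hf2.toLp f))
  simp only [TemperedDistribution.fourier_apply, Lp.toTemperedDistribution_apply] at h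
  calc ∫ x, g x • ((𝓕 (hf2.toLp f) : Lp ℂ 2 (volume : Measure V)) : V → ℂ) x
      = ∫ x, G x • ((𝓕 (hf2.toLp f) : Lp ℂ 2 (volume : Measure V)) : V → ℂ) x := by simp [hG]
    _ = ∫ x, (𝓕 G) x • (hf2.toLp f) x := h.symm
    _ = ∫ x, 𝓕 (G : V → ℂ) x * f x := by
        refine integral_congr_ae ?_
        filter_upwards [hf2.coeFn_toLp] with x hx
        rw [hx, SchwartzMap.fourier_coe, smul_eq_mul]
    _ = ∫ x, G x * 𝓕 f x := integral_fourier_mul_eq_of_integrable G.integrable hf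
    _ = ∫ x, g x • 𝓕 f x := by simp [hG]

theorem memLp_two_fourier {f : V → ℂ} (hf : Integrable f) (hf2 : MemLp f 2) :
    MemLp (𝓕 f) 2 :=
  (memLp_congr_ae (fourier_toLp_ae_eq hf hf2)).1 (Lp.memLp _)

theorem fourier_toLp_two {f : V → ℂ} (hf : Integrable f) (hf2 : MemLp f 2) :
    𝓕 (hf2.toLp f) = (memLp_two_fourier hf hf2).toLp (𝓕 f) :=
  Lp.ext ((fourier_toLp_ae_eq hf hf2).trans (MemLp.coeFn_toLp _).symm)

theorem lintegral_enorm_sq_fourier {f : V → ℂ} (hf : Integrable f) (hf2 : MemLp f 2) :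
    ∫⁻ ξ, ‖𝓕 f ξ‖ₑ ^ 2 = ∫⁻ x, ‖f x‖ₑ ^ 2 := by
  have hnorm : ‖(memLp_two_fourier hf hf2).toLp (𝓕 f)‖ₑ = ‖hf2.toLp f‖ₑ := by
    rw [← fourier_toLp_two hf hf2, ← ofReal_norm, ← ofReal_norm, Lp.norm_fourier_eq]
  rw [Lp.enorm_toLp, Lp.enorm_toLp] at hnorm
  rw [← eLpNorm_two_sq, ← eLpNorm_two_sq, hnorm]

theorem exists_memLp_integral_mul_conj_eq {Ψ : V → ℂ} (hΨ : MemLp Ψ 2) :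
    ∃ g : V → ℂ, MemLp g 2 ∧ ∀ φ : V → ℂ, Integrable φ → MemLp φ 2 →
      ∫ x, g x * (starRingEnd ℂ) (φ x) = ∫ η, Ψ η * (starRingEnd ℂ) (𝓕 φ η) := by
  set g : Lp ℂ 2 (volume : Measure V) := 𝓕⁻ (hΨ.toLp Ψ) with hg
  refine ⟨g, Lp.memLp g, fun φ hφ hφ2 => ?_⟩
  rw [← inner_toLp_toLp (Lp.memLp g) hφ2, ← inner_toLp_toLp hΨ (memLp_two_fourier hφ hφ2),
    Lp.toLp_coeFn, ← fourier_toLp_two hφ hφ2, ← Lp.inner_fourier_eq, hg,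
    FourierTransform.fourier_fourierInv_eq]

theorem integral_fourierInv_mul_conj {Ψ γ : V → ℂ} (hΨ : Integrable Ψ) (hγ : Integrable γ) :
    ∫ x, 𝓕⁻ Ψ x * (starRingEnd ℂ) (γ x) = ∫ η, Ψ η * (starRingEnd ℂ) (𝓕 γ η) := by
  have hconj : ∀ η, (starRingEnd ℂ) (𝓕 γ η) = 𝓕 (fun x => (starRingEnd ℂ) (γ (-x))) η := by
    intro η
    rw [Real.fourier_eq, Real.fourier_eq, ← integral_conj, ← integral_neg_eq_self]
    refine integral_congr_ae (.of_forall fun x => ?_)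
    simp [Circle.smul_def, ← Circle.coe_inv_eq_conj, AddChar.map_neg_eq_inv]
  have hInt : Integrable fun x => (starRingEnd ℂ) (γ (-x)) :=
    (LinearIsometryEquiv.integrable_comp_iff conjLIE).2 hγ.comp_neg
  simp_rw [hconj]
  rw [← integral_fourier_mul_eq_of_integrable hΨ hInt, ← integral_neg_eq_self]
  simp only [Real.fourierInv_eq_fourier_neg, neg_neg]

end Plancherel

section RadialKernel

/-- The kernel `r ^ (m - 1) / (τ - r ^ m - iε)` of the resolvent of `r ^ m` in polar coordinates. -/
def radialKernel (m τ ε r : ℝ) : ℂ :=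
  ((r ^ (m - 1) : ℝ) : ℂ) / ((τ : ℂ) - ((r ^ m : ℝ) : ℂ) - ε * I)

theorem rpow_sub_one_mul_self {r : ℝ} (hr : 0 < r) (m : ℝ) : r ^ (m - 1) * r = r ^ m := by
  rw [← rpow_add_one hr.ne', sub_add_cancel]

theorem rpow_sub_one_mul_abs_sub_le {m : ℝ} (hm : 1 ≤ m) {r s : ℝ} (hr : 0 < r) (hs : 0 < s) :
    s ^ (m - 1) * |r - s| ≤ |r ^ m - s ^ m| := by
  have hm' : 0 ≤ m - 1 := sub_nonneg.2 hm
  rw [← rpow_sub_one_mul_self hr m, ← rpow_sub_one_mul_self hs m]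
  rcases le_total s r with h | h
  · have hpow : s ^ (m - 1) ≤ r ^ (m - 1) := rpow_le_rpow hs.le h hm'
    rw [abs_of_nonneg (sub_nonneg.2 h),
      abs_of_nonneg (sub_nonneg.2 (mul_le_mul hpow h hs.le (by positivity)))]
    nlinarith
  · have hpow : r ^ (m - 1) ≤ s ^ (m - 1) := rpow_le_rpow hr.le h hm'
    rw [abs_of_nonpos (sub_nonpos.2 h),
      abs_of_nonpos (sub_nonpos.2 (mul_le_mul hpow h hr.le (by positivity)))]
    nlinarith

theorem abs_sub_le_norm_sub_sub_mul_I (τ x ε : ℝ) : |x - τ| ≤ ‖(τ : ℂ) - x - ε * I‖ := by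
  simpa [abs_sub_comm] using abs_re_le_norm ((τ : ℂ) - x - ε * I)

theorem sub_sub_mul_I_ne_zero {τ x ε : ℝ} (hε : ε ≠ 0) : (τ : ℂ) - x - ε * I ≠ 0 := fun h =>
  hε (by simpa using congrArg Complex.im h)

theorem measurable_radialKernel (m τ ε : ℝ) : Measurable (radialKernel m τ ε) := by
  unfold radialKernel
  fun_prop

theorem continuousOn_radialKernel (m τ : ℝ) {ε : ℝ} (hε : ε ≠ 0) :
    ContinuousOn (radialKernel m τ ε) (Set.Ioi 0) := by
  have hpow : ∀ p : ℝ, ContinuousOn (fun r : ℝ => ((r ^ p : ℝ) : ℂ)) (Set.Ioi 0) := fun p =>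
    continuous_ofReal.comp_continuousOn
      (continuousOn_id.rpow_const fun r hr => Or.inl (ne_of_gt hr))
  exact (hpow _).div ((continuousOn_const.sub (hpow _)).sub continuousOn_const)
    fun r _ => sub_sub_mul_I_ne_zero hε

theorem norm_radialKernel_le {m τ r : ℝ} (ε : ℝ) (hr : 0 < r) (hne : r ^ m ≠ τ) :
    ‖radialKernel m τ ε r‖ ≤ r ^ (m - 1) / |r ^ m - τ| := by
  have : 0 < |r ^ m - τ| := abs_pos.2 (sub_ne_zero.2 hne)
  rw [radialKernel, norm_div, norm_real, Real.norm_of_nonneg (by positivity)]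
  gcongr
  exact abs_sub_le_norm_sub_sub_mul_I τ (r ^ m) ε

theorem norm_log_sub_log_le_two_pi {z w : ℂ} (h : ‖z‖ = ‖w‖) :
    ‖Complex.log z - Complex.log w‖ ≤ 2 * π := by
  have hlog : Complex.log z - Complex.log w = ((arg z - arg w : ℝ) : ℂ) * I := by
    rw [Complex.log, Complex.log, h]; push_cast; ring
  rw [hlog, norm_mul, norm_I, mul_one, norm_real, Real.norm_eq_abs]
  linarith [abs_sub (arg z) (arg w), abs_arg_le_pi z, abs_arg_le_pi w]

theorem hasDerivAt_log_radialKernel {m τ ε r : ℝ} (hm : m ≠ 0) (hε : ε ≠ 0) (hr : 0 < r) :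
    HasDerivAt (fun r : ℝ => (-(1 / m) : ℂ) * Complex.log ((τ : ℂ) - ((r ^ m : ℝ) : ℂ) - ε * I))
      (radialKernel m τ ε r) r := by
  have hslit : (τ : ℂ) - ((r ^ m : ℝ) : ℂ) - ε * I ∈ slitPlane :=
    mem_slitPlane_iff.2 (Or.inr (by simpa using hε))
  have hpow : HasDerivAt (fun r : ℝ => ((r ^ m : ℝ) : ℂ)) ((m * r ^ (m - 1) : ℝ) : ℂ) r :=
    (Real.hasDerivAt_rpow_const (Or.inl hr.ne')).ofReal_comp
  have hlog := ((hpow.const_sub (τ : ℂ)).sub_const (ε * I)).clog_real hslit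
  refine (hlog.const_mul (-(1 / m) : ℂ)).congr_deriv ?_
  have hm0 : (m : ℂ) ≠ 0 := ofReal_ne_zero.2 hm
  have hz := sub_sub_mul_I_ne_zero (τ := τ) (x := r ^ m) hε
  rw [radialKernel, ofReal_mul]
  field_simp

-- On an interval which `r ↦ r ^ m` maps to one centred at `τ`, the real parts of the logarithms at
-- the two endpoints cancel, whatever the size of `ε`.
theorem norm_integral_radialKernel_le_two_pi {m τ ε h r₁ r₂ : ℝ} (hm : 1 ≤ m) (hε : ε ≠ 0)
    (hr₁ : 0 < r₁) (h12 : r₁ ≤ r₂) (e₁ : r₁ ^ m = τ - h) (e₂ : r₂ ^ m = τ + h) :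
    ‖∫ r in r₁..r₂, radialKernel m τ ε r‖ ≤ 2 * π := by
  have hm0 : 0 < m := by linarith
  have hpos : Set.uIcc r₁ r₂ ⊆ Set.Ioi 0 := fun r hr => by
    rw [Set.uIcc_of_le h12] at hr
    exact hr₁.trans_le hr.1
  rw [intervalIntegral.integral_eq_sub_of_hasDerivAt
      (fun r hr => hasDerivAt_log_radialKernel hm0.ne' hε (hpos hr))
      ((continuousOn_radialKernel m τ hε).mono hpos).intervalIntegrable,
    ← mul_sub, norm_mul, e₁, e₂]
  have hreflect : (τ : ℂ) - ((τ + h : ℝ) : ℂ) - ε * I =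
      -(starRingEnd ℂ) ((τ : ℂ) - ((τ - h : ℝ) : ℂ) - ε * I) := by
    apply Complex.ext <;> simp
  have hlog := norm_log_sub_log_le_two_pi (z := (τ : ℂ) - ((τ + h : ℝ) : ℂ) - ε * I)
    (w := (τ : ℂ) - ((τ - h : ℝ) : ℂ) - ε * I) (by rw [hreflect, norm_neg, RCLike.norm_conj])
  have hcoef : ‖(-(1 / m) : ℂ)‖ ≤ 1 := by
    rw [norm_neg, norm_div, norm_one, norm_real, Real.norm_of_nonneg hm0.le, div_le_one hm0]
    exact hm
  simpa using mul_le_mul hcoef hlog (norm_nonneg _) zero_le_one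

end RadialKernel

section HolderDensity

open Set

/-- `G` is integrable on `(0, ∞)`, bounded, Hölder continuous of order `κ` on dyadic scales, and
vanishes to order `κ` at the origin, all with the same constant `A`. -/
structure HolderDensity (κ : ℝ) (G : ℝ → ℂ) (A : ℝ) : Prop where
  integrable : IntegrableOn G (Ioi 0)
  integral_norm_le : ∫ r in Ioi (0 : ℝ), ‖G r‖ ≤ A
  norm_le : ∀ r, 0 < r → ‖G r‖ ≤ A
  norm_le_rpow : ∀ r, 0 < r → ‖G r‖ ≤ A * r ^ κ
  norm_sub_le : ∀ r s, 0 < s → |r - s| ≤ s / 2 → ‖G r - G s‖ ≤ A * |r - s| ^ κ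

namespace HolderDensity

variable {κ A : ℝ} {G : ℝ → ℂ}

theorem nonneg (h : HolderDensity κ G A) : 0 ≤ A :=
  (norm_nonneg _).trans (h.norm_le 1 one_pos)

theorem norm_div_le_rpow (h : HolderDensity κ G A) {r : ℝ} (hr : 0 < r) :
    ‖G r‖ / r ≤ A * r ^ (κ - 1) := by
  rw [rpow_sub_one hr.ne', ← mul_div_assoc]
  gcongr
  exact h.norm_le_rpow r hr

theorem integrableOn_Ioc_norm_div (h : HolderDensity κ G A) (hκ : 0 < κ) :
    IntegrableOn (fun r => ‖G r‖ / r) (Ioc 0 1) ∧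
      ∫ r in Ioc (0 : ℝ) 1, ‖G r‖ / r ≤ A * (1 / κ) := by
  have hpow : IntegrableOn (fun r : ℝ => A * r ^ (κ - 1)) (Ioc 0 1) := by
    rw [← intervalIntegrable_iff_integrableOn_Ioc_of_le zero_le_one]
    exact (intervalIntegral.intervalIntegrable_rpow' (by linarith)).const_mul A
  have hmeas : AEStronglyMeasurable (fun r => ‖G r‖ / r) (volume.restrict (Ioc 0 1)) :=
    ((h.integrable.aestronglyMeasurable.mono_set Ioc_subset_Ioi_self).norm.aemeasurable.div
      aemeasurable_id).aestronglyMeasurable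
  have hle : ∀ᵐ r ∂volume.restrict (Ioc (0 : ℝ) 1), ‖‖G r‖ / r‖ ≤ A * r ^ (κ - 1) := by
    filter_upwards [ae_restrict_mem measurableSet_Ioc] with r hr
    rw [Real.norm_of_nonneg (div_nonneg (norm_nonneg _) hr.1.le)]
    exact h.norm_div_le_rpow hr.1
  refine ⟨hpow.mono' hmeas hle, ?_⟩
  calc ∫ r in Ioc (0 : ℝ) 1, ‖G r‖ / r ≤ ∫ r in Ioc (0 : ℝ) 1, A * r ^ (κ - 1) :=
        setIntegral_mono_on (hpow.mono' hmeas hle) hpow measurableSet_Ioc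
          fun r hr => h.norm_div_le_rpow hr.1
    _ = A * (1 / κ) := by
        rw [integral_const_mul, ← intervalIntegral.integral_of_le zero_le_one,
          integral_rpow (Or.inl (by linarith))]
        simp [hκ.ne']

theorem integrableOn_Ioi_one_norm_div (h : HolderDensity κ G A) :
    IntegrableOn (fun r => ‖G r‖ / r) (Ioi 1) ∧ ∫ r in Ioi (1 : ℝ), ‖G r‖ / r ≤ A := by
  have hsub : Ioi (1 : ℝ) ⊆ Ioi 0 := Ioi_subset_Ioi zero_le_one
  have hG : IntegrableOn (fun r => ‖G r‖) (Ioi 1) := (h.integrable.mono_set hsub).norm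
  have hle : ∀ r ∈ Ioi (1 : ℝ), ‖G r‖ / r ≤ ‖G r‖ := fun r hr =>
    div_le_self (norm_nonneg _) (le_of_lt hr)
  have hint : IntegrableOn (fun r => ‖G r‖ / r) (Ioi 1) := by
    refine hG.mono' (hG.aemeasurable.div aemeasurable_id).aestronglyMeasurable ?_
    filter_upwards [ae_restrict_mem measurableSet_Ioi] with r hr
    rw [Real.norm_of_nonneg (div_nonneg (norm_nonneg _) (hsub hr).le)]
    exact hle r hr
  refine ⟨hint, ?_⟩
  calc ∫ r in Ioi (1 : ℝ), ‖G r‖ / r ≤ ∫ r in Ioi (1 : ℝ), ‖G r‖ :=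
        setIntegral_mono_on hint hG measurableSet_Ioi hle
    _ ≤ ∫ r in Ioi (0 : ℝ), ‖G r‖ :=
        setIntegral_mono_set h.integrable.norm (.of_forall fun _ => norm_nonneg _)
          (.of_forall hsub)
    _ ≤ A := h.integral_norm_le

theorem integrableOn_norm_div (h : HolderDensity κ G A) (hκ : 0 < κ) :
    IntegrableOn (fun r => ‖G r‖ / r) (Ioi 0) := by
  rw [← Ioc_union_Ioi_eq_Ioi zero_le_one]
  exact (h.integrableOn_Ioc_norm_div hκ).1.union h.integrableOn_Ioi_one_norm_div.1

theorem integral_norm_div_le (h : HolderDensity κ G A) (hκ : 0 < κ) :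
    ∫ r in Ioi (0 : ℝ), ‖G r‖ / r ≤ A * (1 / κ + 1) := by
  obtain ⟨hi₁, hle₁⟩ := h.integrableOn_Ioc_norm_div hκ
  obtain ⟨hi₂, hle₂⟩ := h.integrableOn_Ioi_one_norm_div
  rw [← Ioc_union_Ioi_eq_Ioi zero_le_one,
    setIntegral_union (Ioc_disjoint_Ioi le_rfl) measurableSet_Ioi hi₁ hi₂]
  linarith

theorem norm_setIntegral_mul_le (h : HolderDensity κ G A) (hκ : 0 < κ) {k : ℝ → ℂ}
    (hk : Measurable k) {S : Set ℝ} (hS : MeasurableSet S) (hS0 : S ⊆ Ioi 0)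
    (hb : ∀ r ∈ S, ‖k r‖ ≤ 3 / r + 4) :
    IntegrableOn (fun r => k r * G r) S ∧
      ‖∫ r in S, k r * G r‖ ≤ (3 * (1 / κ + 1) + 4) * A := by
  have hdiv := (h.integrableOn_norm_div hκ).const_mul 3
  have hG := h.integrable.norm.const_mul 4
  have hdom : IntegrableOn (fun r => 3 * (‖G r‖ / r) + 4 * ‖G r‖) (Ioi 0) := hdiv.add hG
  have hle : ∀ᵐ r ∂volume.restrict S, ‖k r * G r‖ ≤ 3 * (‖G r‖ / r) + 4 * ‖G r‖ := by
    filter_upwards [ae_restrict_mem hS] with r hr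
    calc ‖k r * G r‖ = ‖k r‖ * ‖G r‖ := norm_mul _ _
      _ ≤ (3 / r + 4) * ‖G r‖ := by gcongr; exact hb r hr
      _ = 3 * (‖G r‖ / r) + 4 * ‖G r‖ := by ring
  refine ⟨(hdom.mono_set hS0).mono' (hk.aestronglyMeasurable.mul
    (h.integrable.aestronglyMeasurable.mono_set hS0)) hle, ?_⟩
  calc ‖∫ r in S, k r * G r‖ ≤ ∫ r in S, (3 * (‖G r‖ / r) + 4 * ‖G r‖) :=
        norm_integral_le_of_norm_le (hdom.mono_set hS0) hle
    _ ≤ ∫ r in Ioi (0 : ℝ), (3 * (‖G r‖ / r) + 4 * ‖G r‖) := by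
        refine setIntegral_mono_set hdom ?_ (.of_forall hS0)
        filter_upwards [ae_restrict_mem measurableSet_Ioi] with r (hr : 0 < r)
        rw [Pi.zero_apply]
        positivity
    _ = 3 * (∫ r in Ioi (0 : ℝ), ‖G r‖ / r) + 4 * ∫ r in Ioi (0 : ℝ), ‖G r‖ := by
        rw [integral_add hdiv hG, integral_const_mul, integral_const_mul]
    _ ≤ 3 * (A * (1 / κ + 1)) + 4 * A := by
        gcongr
        exacts [h.integral_norm_div_le hκ, h.integral_norm_le]
    _ = (3 * (1 / κ + 1) + 4) * A := by ring

end HolderDensity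

end HolderDensity

section ResonantWindow

open Set

/-- Half of `min 1 r₀⁻¹`: the relative width of the resonant window around the radius `r₀`. -/
def windowRatio (r₀ : ℝ) : ℝ := min 1 r₀⁻¹ / 2

/-- The radii `r` for which `r ^ m` lies within `windowRatio r₀ * r₀ ^ m` of `r₀ ^ m`, up to an
endpoint; see `mem_resonantWindow`. -/
def resonantWindow (m r₀ : ℝ) : Set ℝ :=
  Ioc (r₀ * (1 - windowRatio r₀) ^ m⁻¹) (r₀ * (1 + windowRatio r₀) ^ m⁻¹)

variable {m r₀ : ℝ}

theorem windowRatio_pos (hr₀ : 0 < r₀) : 0 < windowRatio r₀ := by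
  unfold windowRatio
  positivity

theorem windowRatio_le_half (r₀ : ℝ) : windowRatio r₀ ≤ 1 / 2 := by
  unfold windowRatio
  gcongr
  exact min_le_left _ _

theorem windowRatio_mul_le_half (hr₀ : 0 < r₀) : windowRatio r₀ * r₀ ≤ 1 / 2 := by
  calc windowRatio r₀ * r₀ ≤ r₀⁻¹ / 2 * r₀ := by
        unfold windowRatio
        gcongr
        exact min_le_right _ _
    _ = 1 / 2 := by field_simp

theorem le_mul_windowRatio (hr₀ : 0 < r₀) : 1 ≤ 2 * (1 + r₀) * windowRatio r₀ := by
  have hle : 1 / (1 + r₀) ≤ min 1 r₀⁻¹ := by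
    refine le_min ((div_le_one (by linarith)).2 (by linarith)) ?_
    rw [one_div]
    exact inv_anti₀ hr₀ (by linarith)
  calc (1 : ℝ) = 2 * (1 + r₀) * (1 / (1 + r₀) / 2) := by field_simp
    _ ≤ 2 * (1 + r₀) * windowRatio r₀ := by unfold windowRatio; gcongr

theorem windowRatio_one_sub_pos (r₀ : ℝ) : 0 < 1 - windowRatio r₀ := by
  linarith [windowRatio_le_half r₀]

theorem mul_rpow_inv_rpow {c : ℝ} (hm : m ≠ 0) (hr₀ : 0 < r₀) (hc : 0 ≤ c) :
    (r₀ * c ^ m⁻¹) ^ m = c * r₀ ^ m := by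
  rw [mul_rpow hr₀.le (rpow_nonneg hc _), rpow_inv_rpow hc hm, mul_comm]

theorem resonantWindow_subset_Ioi (hr₀ : 0 < r₀) : resonantWindow m r₀ ⊆ Ioi 0 := fun _ hr =>
  (mul_pos hr₀ (rpow_pos_of_pos (windowRatio_one_sub_pos r₀) _)).trans hr.1

theorem measurableSet_resonantWindow : MeasurableSet (resonantWindow m r₀) := measurableSet_Ioc

theorem mem_resonantWindow (hm : 0 < m) (hr₀ : 0 < r₀) {r : ℝ} (hr : 0 < r) :
    r ∈ resonantWindow m r₀ ↔
      (1 - windowRatio r₀) * r₀ ^ m < r ^ m ∧ r ^ m ≤ (1 + windowRatio r₀) * r₀ ^ m := by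
  have hq := windowRatio_one_sub_pos r₀
  have hq' : 0 < 1 + windowRatio r₀ := by linarith [windowRatio_pos hr₀]
  rw [resonantWindow, mem_Ioc, ← mul_rpow_inv_rpow hm.ne' hr₀ hq.le,
    ← mul_rpow_inv_rpow hm.ne' hr₀ hq'.le, rpow_lt_rpow_iff (by positivity) hr.le hm,
    rpow_le_rpow_iff hr.le (by positivity) hm]

theorem abs_rpow_sub_le_of_mem_resonantWindow (hm : 0 < m) (hr₀ : 0 < r₀) {r : ℝ}
    (hr : r ∈ resonantWindow m r₀) : |r ^ m - r₀ ^ m| ≤ windowRatio r₀ * r₀ ^ m := by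
  have := (mem_resonantWindow hm hr₀ (resonantWindow_subset_Ioi hr₀ hr)).1 hr
  rw [abs_le]
  constructor <;> linarith

theorem le_abs_rpow_sub_of_notMem_resonantWindow (hm : 0 < m) (hr₀ : 0 < r₀) {r : ℝ} (hr : 0 < r)
    (hmem : r ∉ resonantWindow m r₀) : windowRatio r₀ * r₀ ^ m ≤ |r ^ m - r₀ ^ m| := by
  rw [mem_resonantWindow hm hr₀ hr, not_and_or, not_lt, not_le] at hmem
  rw [le_abs']
  rcases hmem with h | h
  · left; linarith
  · right; linarith

theorem abs_sub_le_of_mem_resonantWindow (hm : 1 ≤ m) (hr₀ : 0 < r₀) {r : ℝ}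
    (hr : r ∈ resonantWindow m r₀) : |r - r₀| ≤ windowRatio r₀ * r₀ := by
  have hpow : 0 < r₀ ^ (m - 1) := rpow_pos_of_pos hr₀ _
  refine le_of_mul_le_mul_left ?_ hpow
  calc r₀ ^ (m - 1) * |r - r₀| ≤ |r ^ m - r₀ ^ m| :=
        rpow_sub_one_mul_abs_sub_le hm (resonantWindow_subset_Ioi hr₀ hr) hr₀
    _ ≤ windowRatio r₀ * r₀ ^ m :=
        abs_rpow_sub_le_of_mem_resonantWindow (by linarith) hr₀ hr
    _ = r₀ ^ (m - 1) * (windowRatio r₀ * r₀) := by rw [← rpow_sub_one_mul_self hr₀]; ring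

theorem resonantWindow_subset_Ioc (hm : 1 ≤ m) (hr₀ : 0 < r₀) :
    resonantWindow m r₀ ⊆ Ioc (r₀ - 1) (r₀ + 1) := fun r hr => by
  have := abs_le.1 ((abs_sub_le_of_mem_resonantWindow hm hr₀ hr).trans
    (windowRatio_mul_le_half hr₀))
  constructor <;> linarith

theorem rpow_le_of_notMem_resonantWindow (hm : 1 ≤ m) (hr₀ : 0 < r₀) {r : ℝ} (hr : 0 < r)
    (hmem : r ∉ resonantWindow m r₀) : r ^ m ≤ (3 + 4 * r) * |r ^ m - r₀ ^ m| := by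
  set D := |r ^ m - r₀ ^ m|
  have hD0 : 0 ≤ D := abs_nonneg _
  rcases le_total (r₀ / 2) r with h | h
  · have hfar := le_abs_rpow_sub_of_notMem_resonantWindow (by linarith) hr₀ hr hmem
    have hrD : r ^ m ≤ r₀ ^ m + D := by linarith [le_abs_self (r ^ m - r₀ ^ m)]
    have hr₀D : r₀ ^ m ≤ 2 * (1 + r₀) * D := by
      calc r₀ ^ m = 1 * r₀ ^ m := (one_mul _).symm
        _ ≤ 2 * (1 + r₀) * windowRatio r₀ * r₀ ^ m := by gcongr; exact le_mul_windowRatio hr₀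
        _ = 2 * (1 + r₀) * (windowRatio r₀ * r₀ ^ m) := by ring
        _ ≤ 2 * (1 + r₀) * D := by gcongr
    nlinarith
  · have hdist : r ≤ |r - r₀| := by
      rw [abs_sub_comm]
      exact le_trans (by linarith) (le_abs_self _)
    calc r ^ m = r ^ (m - 1) * r := (rpow_sub_one_mul_self hr m).symm
      _ ≤ r₀ ^ (m - 1) * |r - r₀| := by
          gcongr
          linarith
      _ ≤ D := rpow_sub_one_mul_abs_sub_le hm hr hr₀
      _ ≤ (3 + 4 * r) * D := le_mul_of_one_le_left hD0 (by linarith)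

theorem norm_radialKernel_le_of_notMem_resonantWindow (hm : 1 ≤ m) (ε : ℝ) (hr₀ : 0 < r₀) {r : ℝ}
    (hr : 0 < r) (hmem : r ∉ resonantWindow m r₀) :
    ‖radialKernel m (r₀ ^ m) ε r‖ ≤ 3 / r + 4 := by
  have hD : 0 < |r ^ m - r₀ ^ m| :=
    (mul_pos (windowRatio_pos hr₀) (rpow_pos_of_pos hr₀ _)).trans_le
      (le_abs_rpow_sub_of_notMem_resonantWindow (by linarith) hr₀ hr hmem)
  refine (norm_radialKernel_le ε hr (sub_ne_zero.1 (abs_pos.1 hD))).trans ?_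
  have hle : r ^ (m - 1) * r ≤ (3 + 4 * r) * |r ^ m - r₀ ^ m| :=
    (rpow_sub_one_mul_self hr m).trans_le (rpow_le_of_notMem_resonantWindow hm hr₀ hr hmem)
  calc r ^ (m - 1) / |r ^ m - r₀ ^ m| ≤ (3 + 4 * r) / r := (div_le_div_iff₀ hD hr).2 hle
    _ = 3 / r + 4 := by field_simp

theorem norm_radialKernel_le_of_nonpos {τ r : ℝ} (ε : ℝ) (hτ : τ ≤ 0) (hr : 0 < r) :
    ‖radialKernel m τ ε r‖ ≤ 3 / r + 4 := by
  have hrm : 0 < r ^ m := rpow_pos_of_pos hr m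
  calc ‖radialKernel m τ ε r‖ ≤ r ^ (m - 1) / |r ^ m - τ| :=
        norm_radialKernel_le ε hr (by linarith)
    _ ≤ r ^ (m - 1) / r ^ m := by
        rw [abs_of_pos (by linarith)]
        gcongr
        linarith
    _ = 1 / r := by rw [rpow_sub_one hr.ne']; field_simp
    _ ≤ 3 / r + 4 := by
        have : 1 / r ≤ 3 / r := by gcongr; norm_num
        linarith

theorem norm_radialKernel_le_div_abs_sub (hm : 1 ≤ m) (ε : ℝ) (hr₀ : 0 < r₀) {r : ℝ}
    (hclose : |r - r₀| ≤ r₀ / 2) (hne : r ≠ r₀) :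
    ‖radialKernel m (r₀ ^ m) ε r‖ ≤ (3 / 2 : ℝ) ^ (m - 1) / |r - r₀| := by
  obtain ⟨hlo, hhi⟩ := abs_le.1 hclose
  have hr : 0 < r := by linarith
  have hdist : 0 < |r - r₀| := abs_pos.2 (sub_ne_zero.2 hne)
  have hpow : 0 < r₀ ^ (m - 1) := rpow_pos_of_pos hr₀ _
  have hgap := rpow_sub_one_mul_abs_sub_le hm hr hr₀
  have hne' : r ^ m ≠ r₀ ^ m := sub_ne_zero.1 (abs_pos.1 ((mul_pos hpow hdist).trans_le hgap))
  calc ‖radialKernel m (r₀ ^ m) ε r‖ ≤ r ^ (m - 1) / |r ^ m - r₀ ^ m| :=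
        norm_radialKernel_le ε hr hne'
    _ ≤ (3 / 2 * r₀) ^ (m - 1) / (r₀ ^ (m - 1) * |r - r₀|) := by
        gcongr
        linarith
    _ = (3 / 2 : ℝ) ^ (m - 1) / |r - r₀| := by
        rw [mul_rpow (by norm_num) hr₀.le]; field_simp

theorem norm_setIntegral_radialKernel_resonantWindow_le (hm : 1 ≤ m) {ε : ℝ} (hε : ε ≠ 0)
    (hr₀ : 0 < r₀) : ‖∫ r in resonantWindow m r₀, radialKernel m (r₀ ^ m) ε r‖ ≤ 2 * π := by
  have hm0 : 0 < m := by linarith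
  have hq := windowRatio_pos hr₀
  have hq1 := windowRatio_one_sub_pos r₀
  have hle : r₀ * (1 - windowRatio r₀) ^ m⁻¹ ≤ r₀ * (1 + windowRatio r₀) ^ m⁻¹ := by
    gcongr
    linarith
  rw [resonantWindow, ← intervalIntegral.integral_of_le hle]
  refine norm_integral_radialKernel_le_two_pi (h := windowRatio r₀ * r₀ ^ m) hm hε
    (by positivity) hle ?_ ?_
  · rw [mul_rpow_inv_rpow hm0.ne' hr₀ hq1.le]; ring
  · rw [mul_rpow_inv_rpow hm0.ne' hr₀ (by linarith)]; ring

theorem integrableOn_radialKernel_resonantWindow {ε : ℝ} (hε : ε ≠ 0)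
    (hr₀ : 0 < r₀) (τ : ℝ) : IntegrableOn (radialKernel m τ ε) (resonantWindow m r₀) := by
  have hpos : 0 < r₀ * (1 - windowRatio r₀) ^ m⁻¹ :=
    mul_pos hr₀ (rpow_pos_of_pos (windowRatio_one_sub_pos r₀) _)
  have hcont : ContinuousOn (radialKernel m τ ε)
      (Icc (r₀ * (1 - windowRatio r₀) ^ m⁻¹) (r₀ * (1 + windowRatio r₀) ^ m⁻¹)) :=
    (continuousOn_radialKernel m τ hε).mono fun _ hr => hpos.trans_le hr.1
  exact (hcont.integrableOn_compact isCompact_Icc).mono_set Ioc_subset_Icc_self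

end ResonantWindow

section RadialResolventBound

open Set

theorem intervalIntegrable_abs_rpow {κ : ℝ} (hκ : 0 < κ) :
    IntervalIntegrable (fun x : ℝ => |x| ^ (κ - 1)) volume (-1) 1 := by
  have hright : IntervalIntegrable (fun x : ℝ => |x| ^ (κ - 1)) volume 0 1 := by
    have hpow := intervalIntegral.intervalIntegrable_rpow' (a := 0) (b := 1) (r := κ - 1)
      (by linarith)
    refine hpow.congr fun x hx => ?_
    rw [uIoc_of_le zero_le_one] at hx
    simp only [abs_of_pos hx.1]
  have hleft : IntervalIntegrable (fun x : ℝ => |x| ^ (κ - 1)) volume 0 (-1) := by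
    simpa using hright.comp_mul_left (c := -1)
  exact hleft.symm.trans hright

theorem integrableOn_abs_sub_rpow {κ : ℝ} (hκ : 0 < κ) (x₀ : ℝ) :
    IntegrableOn (fun x : ℝ => |x - x₀| ^ (κ - 1)) (Ioc (x₀ - 1) (x₀ + 1)) := by
  rw [← intervalIntegrable_iff_integrableOn_Ioc_of_le (by linarith)]
  convert (intervalIntegrable_abs_rpow hκ).comp_sub_right x₀ using 1 <;> ring

theorem setIntegral_abs_sub_rpow (κ x₀ : ℝ) :
    ∫ x in Ioc (x₀ - 1) (x₀ + 1), |x - x₀| ^ (κ - 1) = ∫ x in (-1 : ℝ)..1, |x| ^ (κ - 1) := by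
  rw [← intervalIntegral.integral_of_le (by linarith),
    intervalIntegral.integral_comp_sub_right (fun x => |x| ^ (κ - 1)) x₀]
  congr 1 <;> ring

variable {m κ ε r₀ A : ℝ} {G : ℝ → ℂ}

namespace HolderDensity

theorem norm_radialKernel_mul_sub_le (h : HolderDensity κ G A) (hm : 1 ≤ m) (hr₀ : 0 < r₀) {r : ℝ}
    (hclose : |r - r₀| ≤ r₀ / 2) :
    ‖radialKernel m (r₀ ^ m) ε r * (G r - G r₀)‖ ≤
      (3 / 2 : ℝ) ^ (m - 1) * A * |r - r₀| ^ (κ - 1) := by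
  have hA := h.nonneg
  rcases eq_or_ne r r₀ with rfl | hne
  · rw [sub_self, mul_zero, norm_zero]
    positivity
  have hdist : 0 < |r - r₀| := abs_pos.2 (sub_ne_zero.2 hne)
  calc ‖radialKernel m (r₀ ^ m) ε r * (G r - G r₀)‖
      ≤ (3 / 2 : ℝ) ^ (m - 1) / |r - r₀| * (A * |r - r₀| ^ κ) := by
        rw [norm_mul]
        gcongr
        exacts [norm_radialKernel_le_div_abs_sub hm ε hr₀ hclose hne, h.norm_sub_le r r₀ hr₀ hclose]
    _ = (3 / 2 : ℝ) ^ (m - 1) * A * |r - r₀| ^ (κ - 1) := by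
        rw [rpow_sub_one hdist.ne']; field_simp

theorem norm_setIntegral_resonantWindow_mul_sub_le (h : HolderDensity κ G A) (hm : 1 ≤ m)
    (hκ : 0 < κ) (hr₀ : 0 < r₀) :
    IntegrableOn (fun r => radialKernel m (r₀ ^ m) ε r * (G r - G r₀)) (resonantWindow m r₀) ∧
      ‖∫ r in resonantWindow m r₀, radialKernel m (r₀ ^ m) ε r * (G r - G r₀)‖ ≤
        (3 / 2 : ℝ) ^ (m - 1) * A * ∫ x in (-1 : ℝ)..1, |x| ^ (κ - 1) := by
  let g : ℝ → ℝ := fun r => (3 / 2 : ℝ) ^ (m - 1) * A * |r - r₀| ^ (κ - 1)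
  have hA := h.nonneg
  have hsub := resonantWindow_subset_Ioc hm hr₀
  have hgint : IntegrableOn g (Ioc (r₀ - 1) (r₀ + 1)) :=
    (integrableOn_abs_sub_rpow hκ r₀).const_mul _
  have hle : ∀ᵐ r ∂volume.restrict (resonantWindow m r₀),
      ‖radialKernel m (r₀ ^ m) ε r * (G r - G r₀)‖ ≤ g r := by
    filter_upwards [ae_restrict_mem measurableSet_resonantWindow] with r hr
    refine h.norm_radialKernel_mul_sub_le hm hr₀ ?_
    linarith [abs_sub_le_of_mem_resonantWindow hm hr₀ hr,
      mul_le_mul_of_nonneg_right (windowRatio_le_half r₀) hr₀.le]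
  have hmeas : AEStronglyMeasurable (fun r => radialKernel m (r₀ ^ m) ε r * (G r - G r₀))
      (volume.restrict (resonantWindow m r₀)) :=
    (measurable_radialKernel _ _ _).aestronglyMeasurable.mul
      ((h.integrable.aestronglyMeasurable.mono_set (resonantWindow_subset_Ioi hr₀)).sub
        aestronglyMeasurable_const)
  refine ⟨(hgint.mono_set hsub).mono' hmeas hle, ?_⟩
  calc ‖∫ r in resonantWindow m r₀, radialKernel m (r₀ ^ m) ε r * (G r - G r₀)‖
      ≤ ∫ r in resonantWindow m r₀, g r := norm_integral_le_of_norm_le (hgint.mono_set hsub) hle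
    _ ≤ ∫ r in Ioc (r₀ - 1) (r₀ + 1), g r :=
        setIntegral_mono_set hgint (.of_forall fun r => by positivity) (.of_forall hsub)
    _ = _ := by rw [integral_const_mul, setIntegral_abs_sub_rpow]

theorem norm_setIntegral_resonantWindow_le (h : HolderDensity κ G A) (hm : 1 ≤ m)
    (hκ : 0 < κ) (hε : ε ≠ 0) (hr₀ : 0 < r₀) :
    IntegrableOn (fun r => radialKernel m (r₀ ^ m) ε r * G r) (resonantWindow m r₀) ∧
      ‖∫ r in resonantWindow m r₀, radialKernel m (r₀ ^ m) ε r * G r‖ ≤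
        ((3 / 2 : ℝ) ^ (m - 1) * (∫ x in (-1 : ℝ)..1, |x| ^ (κ - 1)) + 2 * π) * A := by
  obtain ⟨hdiff, hdiff_le⟩ := h.norm_setIntegral_resonantWindow_mul_sub_le (ε := ε) hm hκ hr₀
  have hconst := (integrableOn_radialKernel_resonantWindow (m := m) hε hr₀
    (r₀ ^ m)).mul_const (G r₀)
  have hconst_le : ‖∫ r in resonantWindow m r₀, radialKernel m (r₀ ^ m) ε r * G r₀‖ ≤
      2 * π * A := by
    rw [integral_mul_const, norm_mul]
    gcongr
    exacts [norm_setIntegral_radialKernel_resonantWindow_le hm hε hr₀, h.norm_le r₀ hr₀]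
  have hsplit : (fun r => radialKernel m (r₀ ^ m) ε r * G r) = fun r =>
      radialKernel m (r₀ ^ m) ε r * (G r - G r₀) + radialKernel m (r₀ ^ m) ε r * G r₀ := by
    ext r; ring
  rw [hsplit]
  refine ⟨hdiff.add hconst, ?_⟩
  rw [integral_add hdiff hconst]
  calc _ ≤ _ := norm_add_le _ _
    _ ≤ _ := add_le_add hdiff_le hconst_le
    _ = _ := by ring

end HolderDensity

theorem exists_forall_norm_integral_radialKernel_mul_le (hm : 1 ≤ m) (hκ : 0 < κ) :
    ∃ C : ℝ, 0 ≤ C ∧ ∀ (τ ε : ℝ), ε ≠ 0 → ∀ (G : ℝ → ℂ) (A : ℝ), HolderDensity κ G A →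
      ‖∫ r in Ioi (0 : ℝ), radialKernel m τ ε r * G r‖ ≤ C * A := by
  let Cfar : ℝ := 3 * (1 / κ + 1) + 4
  let Cnear : ℝ := (3 / 2 : ℝ) ^ (m - 1) * (∫ x in (-1 : ℝ)..1, |x| ^ (κ - 1)) + 2 * π
  have hnear0 : 0 ≤ Cnear := by
    have : 0 ≤ ∫ x in (-1 : ℝ)..1, |x| ^ (κ - 1) :=
      intervalIntegral.integral_nonneg (by norm_num) fun x _ => by positivity
    positivity
  refine ⟨Cfar + Cnear, by positivity, fun τ ε hε G A h => ?_⟩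
  have hk := measurable_radialKernel m τ ε
  rcases le_or_gt τ 0 with hτ | hτ
  · calc _ ≤ Cfar * A := (h.norm_setIntegral_mul_le hκ hk measurableSet_Ioi subset_rfl
          fun r hr => norm_radialKernel_le_of_nonpos ε hτ hr).2
      _ ≤ (Cfar + Cnear) * A :=
          mul_le_mul_of_nonneg_right (le_add_of_nonneg_right hnear0) h.nonneg
  obtain ⟨r₀, hr₀, rfl⟩ : ∃ r₀ : ℝ, 0 < r₀ ∧ r₀ ^ m = τ :=
    ⟨τ ^ m⁻¹, rpow_pos_of_pos hτ _, rpow_inv_rpow hτ.le (by linarith)⟩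
  have hsub := resonantWindow_subset_Ioi (m := m) hr₀
  obtain ⟨hfar, hfar_le⟩ := h.norm_setIntegral_mul_le hκ hk
    (measurableSet_Ioi.diff measurableSet_resonantWindow) sdiff_subset fun r hr =>
      norm_radialKernel_le_of_notMem_resonantWindow hm ε hr₀ hr.1 hr.2
  obtain ⟨hnear, hnear_le⟩ := h.norm_setIntegral_resonantWindow_le hm hκ hε hr₀
  calc ‖∫ r in Ioi (0 : ℝ), radialKernel m (r₀ ^ m) ε r * G r‖
      = ‖(∫ r in Ioi 0 \ resonantWindow m r₀, radialKernel m (r₀ ^ m) ε r * G r) +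
          ∫ r in resonantWindow m r₀, radialKernel m (r₀ ^ m) ε r * G r‖ := by
        rw [← setIntegral_union disjoint_sdiff_left measurableSet_resonantWindow hfar hnear,
          sdiff_union_of_subset hsub]
    _ ≤ Cfar * A + Cnear * A := (norm_add_le _ _).trans (add_le_add hfar_le hnear_le)
    _ = (Cfar + Cnear) * A := (add_mul _ _ _).symm

end RadialResolventBound

section Rays

open Set

/-- A function on the half-line `(0, ∞)` that is square integrable, bounded and Hölder continuous of
order `κ` at scale-invariant distances, vanishes to order `κ` at the origin, all with constant `N`.
Products of two such functions are `HolderDensity`s. -/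
structure HolderRay (κ : ℝ) (u : ℝ → ℂ) (N : ℝ) : Prop where
  memLp : MemLp u 2 (volume.restrict (Ioi 0))
  integral_sq_le : ∫ r in Ioi (0 : ℝ), ‖u r‖ ^ 2 ≤ N ^ 2
  norm_le : ∀ r, 0 < r → ‖u r‖ ≤ N
  norm_le_rpow : ∀ r, 0 < r → ‖u r‖ ≤ N * r ^ κ
  norm_sub_le : ∀ r s, 0 < s → |r - s| ≤ s / 2 → ‖u r - u s‖ ≤ N * |r - s| ^ κ

namespace HolderRay

variable {κ N M : ℝ} {u w : ℝ → ℂ}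

theorem nonneg (h : HolderRay κ u N) : 0 ≤ N :=
  (norm_nonneg _).trans (h.norm_le 1 one_pos)

theorem mul_conj (hu : HolderRay κ u N) (hw : HolderRay κ w M) :
    HolderDensity κ (fun r => u r * (starRingEnd ℂ) (w r)) (2 * (N * M)) := by
  have hN := hu.nonneg
  have hNM : 0 ≤ N * M := mul_nonneg hN hw.nonneg
  have hnorm : ∀ r, ‖u r * (starRingEnd ℂ) (w r)‖ = ‖u r‖ * ‖w r‖ := fun r => by
    rw [norm_mul, RCLike.norm_conj]
  constructor
  · exact hu.memLp.integrable_mul hw.memLp.star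
  · simp only [hnorm]
    calc ∫ r in Ioi (0 : ℝ), ‖u r‖ * ‖w r‖
        ≤ √(∫ r in Ioi (0 : ℝ), ‖u r‖ ^ 2) * √(∫ r in Ioi (0 : ℝ), ‖w r‖ ^ 2) :=
          integral_norm_mul_norm_le_sqrt hu.memLp hw.memLp
      _ ≤ √(N ^ 2) * √(M ^ 2) := by gcongr; exacts [hu.integral_sq_le, hw.integral_sq_le]
      _ = N * M := by rw [sqrt_sq hN, sqrt_sq hw.nonneg]
      _ ≤ 2 * (N * M) := by linarith
  · intro r hr
    rw [hnorm]
    have := mul_le_mul (hu.norm_le r hr) (hw.norm_le r hr) (norm_nonneg _) hN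
    linarith
  · intro r hr
    have := mul_le_mul (hu.norm_le_rpow r hr) (hw.norm_le r hr) (norm_nonneg _) (by positivity)
    have : 0 ≤ N * M * r ^ κ := by positivity
    rw [hnorm]
    linarith
  · intro r s hs hrs
    have hr : 0 < r := by linarith [(abs_le.1 hrs).1]
    calc ‖u r * (starRingEnd ℂ) (w r) - u s * (starRingEnd ℂ) (w s)‖
        = ‖u r * (starRingEnd ℂ) (w r - w s) + (u r - u s) * (starRingEnd ℂ) (w s)‖ := by
          rw [map_sub]; congr 1; ring
      _ ≤ ‖u r‖ * ‖w r - w s‖ + ‖u r - u s‖ * ‖w s‖ := by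
          refine (norm_add_le _ _).trans_eq ?_
          rw [norm_mul, norm_mul, RCLike.norm_conj, RCLike.norm_conj]
      _ ≤ N * (M * |r - s| ^ κ) + N * |r - s| ^ κ * M := by
          gcongr
          exacts [hu.norm_le r hr, hw.norm_sub_le r s hs hrs, hu.norm_sub_le r s hs hrs,
            hw.norm_le s hs]
      _ = 2 * (N * M) * |r - s| ^ κ := by ring

end HolderRay

theorem sq_norm_sub_le_integral {v v' : ℝ → ℂ} (hv : ∀ r, HasDerivAt v (v' r) r)
    (hv' : Continuous v') {r s : ℝ} (hrs : r ≤ s) :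
    ‖v s - v r‖ ^ 2 ≤ (s - r) * ∫ ρ in Ioc r s, ‖v' ρ‖ ^ 2 := by
  have hftc : ∫ ρ in r..s, v' ρ = v s - v r :=
    intervalIntegral.integral_eq_sub_of_hasDerivAt (fun x _ => hv x) (hv'.intervalIntegrable _ _)
  have hmem : MemLp v' 2 (volume.restrict (Ioc r s)) :=
    (memLp_two_iff_integrable_sq_norm hv'.aestronglyMeasurable).2
      ((hv'.norm.pow 2).integrableOn_Ioc)
  have hcs := integral_norm_mul_norm_le_sqrt hmem
    (memLp_const (μ := volume.restrict (Ioc r s)) (1 : ℝ))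
  simp only [norm_one, mul_one, one_pow, integral_const, MeasurableSet.univ,
    measureReal_restrict_apply, univ_inter, smul_eq_mul, Real.volume_real_Ioc_of_le hrs] at hcs
  have hsub : ‖v s - v r‖ ≤ ∫ ρ in Ioc r s, ‖v' ρ‖ := by
    rw [← hftc, intervalIntegral.integral_of_le hrs]
    exact norm_integral_le_integral_norm _
  have hint : 0 ≤ ∫ ρ in Ioc r s, ‖v' ρ‖ ^ 2 := integral_nonneg fun _ => by positivity
  calc ‖v s - v r‖ ^ 2 ≤ (√(∫ ρ in Ioc r s, ‖v' ρ‖ ^ 2) * √(s - r)) ^ 2 := by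
        gcongr; exact hsub.trans hcs
    _ = _ := by rw [mul_pow, sq_sqrt hint, sq_sqrt (by linarith), mul_comm]

theorem pow_mul_setIntegral_Ioc_le {d : ℕ} {f : ℝ → ℝ} (hf : Continuous f) (hf0 : ∀ r, 0 ≤ f r)
    (hi : IntegrableOn (fun r => r ^ d * f r) (Ioi 0)) {r : ℝ} (hr : 0 < r) (s : ℝ) :
    r ^ d * ∫ ρ in Ioc r s, f ρ ≤ ∫ ρ in Ioi (0 : ℝ), ρ ^ d * f ρ := by
  have hsub : Ioc r s ⊆ Ioi 0 := fun x hx => hr.trans hx.1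
  calc r ^ d * ∫ ρ in Ioc r s, f ρ = ∫ ρ in Ioc r s, r ^ d * f ρ := (integral_const_mul _ _).symm
    _ ≤ ∫ ρ in Ioc r s, ρ ^ d * f ρ := by
        refine setIntegral_mono_on (hf.integrableOn_Ioc.const_mul _) (hi.mono_set hsub)
          measurableSet_Ioc fun ρ hρ => mul_le_mul_of_nonneg_right ?_ (hf0 ρ)
        exact pow_le_pow_left₀ hr.le hρ.1.le d
    _ ≤ ∫ ρ in Ioi (0 : ℝ), ρ ^ d * f ρ := by
        refine setIntegral_mono_set hi ?_ (.of_forall hsub)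
        filter_upwards [ae_restrict_mem measurableSet_Ioi] with ρ hρ
        exact mul_nonneg (pow_nonneg (le_of_lt hρ) d) (hf0 ρ)

theorem le_mul_rpow_of_sq_le {x N c t κ : ℝ} (hN : 0 ≤ N) (hc : 1 ≤ c) (ht : 0 ≤ t) (hκ : 0 < κ)
    (hκ2 : κ ≤ 1 / 2) (hx : x ≤ c * N) (hsq : t ≤ 1 → x ^ 2 ≤ t * N ^ 2) :
    x ≤ c * N * t ^ κ := by
  rcases le_total 1 t with h | h
  · exact hx.trans (le_mul_of_one_le_right (by positivity) (one_le_rpow h hκ.le))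
  · have ht2 : t ≤ (t ^ κ) ^ 2 := by
      rw [← rpow_mul_natCast ht]
      exact self_le_rpow_of_le_one ht h (by push_cast; linarith)
    have hx2 : x ^ 2 ≤ (N * t ^ κ) ^ 2 := (hsq h).trans (by rw [mul_pow]; nlinarith [sq_nonneg N])
    calc x ≤ N * t ^ κ := (le_abs_self x).trans (abs_le_of_sq_le_sq hx2 (by positivity))
      _ ≤ c * (N * t ^ κ) := le_mul_of_one_le_left (by positivity) hc
      _ = _ := by ring

theorem sqrt_pow_le_of_le_mul {d : ℕ} {r s : ℝ} (hr : 0 ≤ r) (h : r ≤ 3 * s) :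
    √(r ^ d) ≤ 3 ^ d * √(s ^ d) := by
  have hs : 0 ≤ s := by linarith
  calc √(r ^ d) ≤ √((3 ^ d) ^ 2 * s ^ d) := by
        apply Real.sqrt_le_sqrt
        calc r ^ d ≤ (3 * s) ^ d := by gcongr
          _ = 3 ^ d * s ^ d := mul_pow _ _ _
          _ ≤ (3 ^ d) ^ 2 * s ^ d := by
            gcongr; exact le_self_pow₀ (one_le_pow₀ (by norm_num)) (by norm_num)
    _ = _ := by rw [Real.sqrt_mul (by positivity), sqrt_sq (by positivity)]

theorem abs_pow_sub_pow_le_mul {d : ℕ} {r s : ℝ} (hs : 0 < s) (h : |r - s| ≤ s / 2) :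
    |r ^ d - s ^ d| ≤ d * 2 ^ d * (|r - s| / s) * s ^ d := by
  rcases Nat.eq_zero_or_pos d with rfl | hd
  · simp
  have hr := abs_le.1 h
  have hmax : max |r| |s| ≤ 2 * s := by
    rw [abs_of_nonneg (by linarith), abs_of_pos hs]; exact max_le (by linarith) (by linarith)
  calc |r ^ d - s ^ d| ≤ |r - s| * d * (2 * s) ^ (d - 1) :=
        (abs_pow_sub_pow_le r s d).trans (by gcongr)
    _ = d * 2 ^ (d - 1) * (|r - s| / s) * (s ^ (d - 1) * s) := by rw [mul_pow]; field_simp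
    _ = d * 2 ^ (d - 1) * (|r - s| / s) * s ^ d := by rw [← pow_succ, Nat.sub_add_cancel hd]
    _ ≤ _ := by gcongr <;> [norm_num; omega]

theorem abs_sqrt_pow_sub_sqrt_pow_le {d : ℕ} {r s : ℝ} (hs : 0 < s) (h : |r - s| ≤ s / 2) :
    |√(r ^ d) - √(s ^ d)| ≤ d * 2 ^ d * (|r - s| / s) * √(s ^ d) := by
  have hr : 0 ≤ r := by linarith [(abs_le.1 h).1]
  have hsq : √(s ^ d) * √(s ^ d) = s ^ d := mul_self_sqrt (by positivity)
  have hpos : 0 < √(s ^ d) := by positivity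
  refine le_of_mul_le_mul_right ?_ hpos
  calc |√(r ^ d) - √(s ^ d)| * √(s ^ d)
      ≤ |√(r ^ d) - √(s ^ d)| * |√(r ^ d) + √(s ^ d)| := by
        gcongr; exact (le_add_of_nonneg_left (sqrt_nonneg _)).trans (le_abs_self _)
    _ = |r ^ d - s ^ d| := by
        rw [← abs_mul, mul_comm, ← sq_sub_sq, sq_sqrt (by positivity), sq_sqrt (by positivity)]
    _ ≤ d * 2 ^ d * (|r - s| / s) * s ^ d := abs_pow_sub_pow_le_mul hs h
    _ = _ := by rw [mul_assoc _ √(s ^ d), hsq]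

/-- A `C¹` function `v` with derivative `v'` whose size is that of a function of frequency at most
`R` on a ray of `ℝ^(d+1)`: `R` and `N` control the norms of `v` and `v'` in `L²(r^d dr)` and the
supremum of `v` as Bernstein's inequality would. -/
structure SobolevRay (d : ℕ) (v v' : ℝ → ℂ) (R N : ℝ) : Prop where
  one_le : 1 ≤ R
  nonneg : 0 ≤ N
  hasDerivAt : ∀ r, HasDerivAt v (v' r) r
  continuous_deriv : Continuous v'
  integrable : IntegrableOn (fun r => r ^ d * ‖v r‖ ^ 2) (Ioi 0)
  integral_le : R * ∫ r in Ioi (0 : ℝ), r ^ d * ‖v r‖ ^ 2 ≤ N ^ 2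
  integrable_deriv : IntegrableOn (fun r => r ^ d * ‖v' r‖ ^ 2) (Ioi 0)
  integral_deriv_le : ∫ r in Ioi (0 : ℝ), r ^ d * ‖v' r‖ ^ 2 ≤ R * N ^ 2
  sq_le : ∀ r, ‖v r‖ ^ 2 ≤ R ^ d * N ^ 2

namespace SobolevRay

variable {d : ℕ} {v v' : ℝ → ℂ} {R N κ : ℝ}

theorem continuous (h : SobolevRay d v v' R N) : Continuous v :=
  continuous_iff_continuousAt.2 fun r => (h.hasDerivAt r).continuousAt

theorem pow_mul_sq_sub_le (h : SobolevRay d v v' R N) {r s : ℝ} (hr : 0 < r) (hrs : r ≤ s) :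
    r ^ d * ‖v s - v r‖ ^ 2 ≤ (s - r) * (R * N ^ 2) := by
  have hrs' : 0 ≤ s - r := by linarith
  calc r ^ d * ‖v s - v r‖ ^ 2 ≤ r ^ d * ((s - r) * ∫ ρ in Ioc r s, ‖v' ρ‖ ^ 2) := by
        gcongr; exact sq_norm_sub_le_integral h.hasDerivAt h.continuous_deriv hrs
    _ = (s - r) * (r ^ d * ∫ ρ in Ioc r s, ‖v' ρ‖ ^ 2) := by ring
    _ ≤ (s - r) * (R * N ^ 2) := by
        refine mul_le_mul_of_nonneg_left ?_ hrs'
        exact (pow_mul_setIntegral_Ioc_le (h.continuous_deriv.norm.pow 2) (fun _ => sq_nonneg _)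
          h.integrable_deriv hr s).trans h.integral_deriv_le

theorem pow_mul_sq_le_add (h : SobolevRay d v v' R N) {r ρ : ℝ} (hr : 0 < r) (hrρ : r ≤ ρ)
    (hρ : ρ - r ≤ 1 / R) : r ^ d * ‖v r‖ ^ 2 ≤ 2 * r ^ d * ‖v ρ‖ ^ 2 + 2 * N ^ 2 := by
  have hR : 0 < R := zero_lt_one.trans_le h.one_le
  have hdiff : r ^ d * ‖v ρ - v r‖ ^ 2 ≤ N ^ 2 := by
    calc r ^ d * ‖v ρ - v r‖ ^ 2 ≤ (ρ - r) * (R * N ^ 2) := h.pow_mul_sq_sub_le hr hrρ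
      _ ≤ 1 / R * (R * N ^ 2) := by gcongr
      _ = N ^ 2 := by field_simp
  have htri : ‖v r‖ ≤ ‖v ρ‖ + ‖v ρ - v r‖ := by
    simpa only [sub_sub_cancel] using norm_sub_le (v ρ) (v ρ - v r)
  calc r ^ d * ‖v r‖ ^ 2 ≤ r ^ d * (2 * ‖v ρ‖ ^ 2 + 2 * ‖v ρ - v r‖ ^ 2) := by
        gcongr
        nlinarith [norm_nonneg (v r), sq_nonneg (‖v ρ‖ - ‖v ρ - v r‖)]
    _ ≤ _ := by linarith

-- Average `pow_mul_sq_le_add` over `ρ ∈ (r, r + 1/R]`.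
theorem pow_mul_sq_le (h : SobolevRay d v v' R N) {r : ℝ} (hr : 0 < r) :
    r ^ d * ‖v r‖ ^ 2 ≤ 4 * N ^ 2 := by
  have hR : 0 < R := zero_lt_one.trans_le h.one_le
  set J := Ioc r (r + 1 / R)
  have hvol : volume.real J = 1 / R := by
    rw [Real.volume_real_Ioc_of_le (by linarith [show 0 < 1 / R by positivity]),
      add_sub_cancel_left]
  have hint : IntegrableOn (fun ρ => 2 * r ^ d * ‖v ρ‖ ^ 2) J :=
    (h.continuous.norm.pow 2).integrableOn_Ioc.const_mul _
  have hconst (c : ℝ) : IntegrableOn (fun _ => c) J :=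
    integrableOn_const (by simp only [J, Real.volume_Ioc]; exact ENNReal.ofReal_ne_top)
  have hmean : 1 / R * (r ^ d * ‖v r‖ ^ 2) ≤
      2 * (r ^ d * ∫ ρ in J, ‖v ρ‖ ^ 2) + 1 / R * (2 * N ^ 2) := by
    calc 1 / R * (r ^ d * ‖v r‖ ^ 2) = ∫ _ in J, r ^ d * ‖v r‖ ^ 2 := by
          rw [setIntegral_const, hvol, smul_eq_mul]
      _ ≤ ∫ ρ in J, (2 * r ^ d * ‖v ρ‖ ^ 2 + 2 * N ^ 2) := by
          refine setIntegral_mono_on (hconst _) (hint.add (hconst _)) measurableSet_Ioc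
            fun ρ hρ => ?_
          exact h.pow_mul_sq_le_add hr hρ.1.le (by linarith [hρ.2])
      _ = _ := by
          rw [integral_add hint (hconst _), integral_const_mul, setIntegral_const, hvol,
            smul_eq_mul, mul_assoc 2]
  have htail := pow_mul_setIntegral_Ioc_le (h.continuous.norm.pow 2) (fun _ => sq_nonneg _)
    h.integrable hr (r + 1 / R)
  calc r ^ d * ‖v r‖ ^ 2 = R * (1 / R * (r ^ d * ‖v r‖ ^ 2)) := by field_simp
    _ ≤ R * (2 * (∫ ρ in Ioi (0 : ℝ), ρ ^ d * ‖v ρ‖ ^ 2) + 1 / R * (2 * N ^ 2)) := by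
        gcongr; exact hmean.trans (by gcongr; exact htail)
    _ = 2 * (R * ∫ ρ in Ioi (0 : ℝ), ρ ^ d * ‖v ρ‖ ^ 2) + 2 * N ^ 2 := by field_simp
    _ ≤ 4 * N ^ 2 := by linarith [h.integral_le]

theorem sqrt_mul_norm_le (h : SobolevRay d v v' R N) {r : ℝ} (hr : 0 < r) :
    √(r ^ d) * ‖v r‖ ≤ 2 * N := by
  have hN := h.nonneg
  refine le_of_sq_le_sq ?_ (by positivity)
  rw [mul_pow, sq_sqrt (by positivity)]
  linarith [h.pow_mul_sq_le hr]

theorem sqrt_mul_norm_le_rpow (h : SobolevRay d v v' R N) (hd : 1 ≤ d) (hκ : 0 < κ)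
    (hκ2 : κ ≤ 1 / 2) {r : ℝ} (hr : 0 < r) : √(r ^ d) * ‖v r‖ ≤ 2 * N * (r * R) ^ κ := by
  have hR : 0 < R := zero_lt_one.trans_le h.one_le
  refine le_mul_rpow_of_sq_le h.nonneg one_le_two (by positivity) hκ hκ2 (h.sqrt_mul_norm_le hr)
    fun hrR => ?_
  rw [mul_pow, sq_sqrt (by positivity)]
  calc r ^ d * ‖v r‖ ^ 2 ≤ r ^ d * (R ^ d * N ^ 2) := by gcongr; exact h.sq_le r
    _ = (r * R) ^ d * N ^ 2 := by rw [mul_pow]; ring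
    _ ≤ (r * R) * N ^ 2 := by
      gcongr; exact pow_le_of_le_one (by positivity) hrR (by omega)

theorem sqrt_mul_norm_sub_le (h : SobolevRay d v v' R N) (hκ : 0 < κ) (hκ2 : κ ≤ 1 / 2)
    {r s : ℝ} (hr : 0 < r) (hs : 0 < s) :
    √(min r s ^ d) * ‖v r - v s‖ ≤ 4 * N * (R * |r - s|) ^ κ := by
  wlog hrs : r ≤ s generalizing r s
  · rw [min_comm, norm_sub_rev, abs_sub_comm]
    exact this hs hr (le_of_not_ge hrs)
  have hR : 0 < R := zero_lt_one.trans_le h.one_le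
  rw [min_eq_left hrs, norm_sub_rev, abs_sub_comm, abs_of_nonneg (sub_nonneg.2 hrs)]
  refine le_mul_rpow_of_sq_le h.nonneg (by norm_num)
    (mul_nonneg hR.le (sub_nonneg.2 hrs)) hκ hκ2 ?_ fun _ => ?_
  · calc √(r ^ d) * ‖v s - v r‖ ≤ √(r ^ d) * (‖v s‖ + ‖v r‖) := by
          gcongr; exact norm_sub_le _ _
      _ ≤ √(s ^ d) * ‖v s‖ + √(r ^ d) * ‖v r‖ := by rw [mul_add]; gcongr
      _ ≤ 4 * N := by linarith [h.sqrt_mul_norm_le hr, h.sqrt_mul_norm_le hs]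
  · rw [mul_pow, sq_sqrt (by positivity)]
    exact (h.pow_mul_sq_sub_le hr hrs).trans_eq (by ring)

theorem abs_sqrt_sub_sqrt_mul_norm_le (h : SobolevRay d v v' R N) (hd : 1 ≤ d) (hκ : 0 < κ)
    (hκ2 : κ ≤ 1 / 2) {r s : ℝ} (hs : 0 < s) (hrs : |r - s| ≤ s / 2) :
    |√(r ^ d) - √(s ^ d)| * ‖v s‖ ≤ 2 * d * 2 ^ d * N * (R * |r - s|) ^ κ := by
  have hR : 0 < R := zero_lt_one.trans_le h.one_le
  have hle : |r - s| / s ≤ 1 := by rw [div_le_one hs]; linarith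
  have hself : |r - s| / s ≤ (|r - s| / s) ^ κ :=
    self_le_rpow_of_le_one (by positivity) hle (by linarith)
  calc |√(r ^ d) - √(s ^ d)| * ‖v s‖ ≤ d * 2 ^ d * (|r - s| / s) * √(s ^ d) * ‖v s‖ := by
        gcongr; exact abs_sqrt_pow_sub_sqrt_pow_le hs hrs
    _ = d * 2 ^ d * (|r - s| / s) * (√(s ^ d) * ‖v s‖) := by ring
    _ ≤ d * 2 ^ d * (|r - s| / s) ^ κ * (2 * N * (s * R) ^ κ) := by
        gcongr d * 2 ^ d * ?_ * ?_; exact h.sqrt_mul_norm_le_rpow hd hκ hκ2 hs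
    _ = 2 * d * 2 ^ d * N * ((|r - s| / s) ^ κ * (s * R) ^ κ) := by ring
    _ = _ := by
        rw [← mul_rpow (by positivity) (by positivity)]
        congr 2
        field_simp

theorem norm_sqrt_mul_sub_le (h : SobolevRay d v v' R N) (hd : 1 ≤ d) (hκ : 0 < κ)
    (hκ2 : κ ≤ 1 / 2) {r s : ℝ} (hs : 0 < s) (hrs : |r - s| ≤ s / 2) :
    ‖(√(r ^ d) : ℂ) * v r - (√(s ^ d) : ℂ) * v s‖ ≤
      (4 * 3 ^ d + 2 * d * 2 ^ d) * N * (R * |r - s|) ^ κ := by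
  obtain ⟨hlo, hhi⟩ := abs_le.1 hrs
  have hr : 0 < r := by linarith
  have hmin : r ≤ 3 * min r s := by
    rcases min_choice r s with h' | h' <;> rw [h'] <;> linarith
  calc ‖(√(r ^ d) : ℂ) * v r - (√(s ^ d) : ℂ) * v s‖
      = ‖(√(r ^ d) : ℂ) * (v r - v s) + ((√(r ^ d) - √(s ^ d) : ℝ) : ℂ) * v s‖ := by
        push_cast; congr 1; ring
    _ ≤ √(r ^ d) * ‖v r - v s‖ + |√(r ^ d) - √(s ^ d)| * ‖v s‖ := by
        refine (norm_add_le _ _).trans_eq ?_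
        rw [norm_mul, norm_mul, norm_real, norm_real, norm_eq_abs, norm_eq_abs,
          abs_of_nonneg (sqrt_nonneg _)]
    _ ≤ 3 ^ d * √(min r s ^ d) * ‖v r - v s‖ + 2 * d * 2 ^ d * N * (R * |r - s|) ^ κ := by
        gcongr ?_ * ‖v r - v s‖ + ?_
        exacts [sqrt_pow_le_of_le_mul hr.le hmin, h.abs_sqrt_sub_sqrt_mul_norm_le hd hκ hκ2 hs hrs]
    _ ≤ 3 ^ d * (4 * N * (R * |r - s|) ^ κ) + 2 * d * 2 ^ d * N * (R * |r - s|) ^ κ := by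
        rw [mul_assoc (3 ^ d : ℝ)]
        gcongr 3 ^ d * ?_ + _
        exact h.sqrt_mul_norm_sub_le hκ hκ2 hr hs
    _ = _ := by ring

theorem holderRay (h : SobolevRay d v v' R N) (hd : 1 ≤ d) (hκ : 0 < κ) (hκ2 : κ ≤ 1 / 2) :
    HolderRay κ (fun r => (√(r ^ d) : ℂ) * v r)
      ((4 * 3 ^ d + 2 * d * 2 ^ d) * (R ^ κ * N)) := by
  have hR : 0 < R := zero_lt_one.trans_le h.one_le
  have hRκ : 1 ≤ R ^ κ := one_le_rpow h.one_le hκ.le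
  have hN := h.nonneg
  have hC : (2 : ℝ) ≤ 4 * 3 ^ d + 2 * d * 2 ^ d := by
    have : (1 : ℝ) ≤ 3 ^ d := one_le_pow₀ (by norm_num)
    have : (0 : ℝ) ≤ 2 * d * 2 ^ d := by positivity
    linarith
  have hN' : 2 * N ≤ (4 * 3 ^ d + 2 * d * 2 ^ d) * (R ^ κ * N) :=
    mul_le_mul hC (le_mul_of_one_le_left hN hRκ) hN (by positivity)
  have hnorm (r : ℝ) : ‖(√(r ^ d) : ℂ) * v r‖ = √(r ^ d) * ‖v r‖ := by
    rw [norm_mul, norm_real, norm_of_nonneg (sqrt_nonneg _)]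
  have hsq : EqOn (fun r => r ^ d * ‖v r‖ ^ 2) (fun r => ‖(√(r ^ d) : ℂ) * v r‖ ^ 2) (Ioi 0) :=
    fun r hr => by simp only [hnorm, mul_pow, sq_sqrt (pow_nonneg (le_of_lt hr) d)]
  constructor
  · have := h.continuous
    exact (memLp_two_iff_integrable_sq_norm (by fun_prop)).2
      (h.integrable.congr_fun hsq measurableSet_Ioi)
  · have hle := h.integral_le
    rw [setIntegral_congr_fun measurableSet_Ioi hsq] at hle
    have hint : 0 ≤ ∫ r in Ioi (0 : ℝ), ‖(√(r ^ d) : ℂ) * v r‖ ^ 2 :=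
      integral_nonneg fun _ => sq_nonneg _
    calc ∫ r in Ioi (0 : ℝ), ‖(√(r ^ d) : ℂ) * v r‖ ^ 2 ≤ N ^ 2 :=
          (le_mul_of_one_le_left hint h.one_le).trans hle
      _ ≤ _ := by gcongr; linarith
  · exact fun r hr => (hnorm r).trans_le ((h.sqrt_mul_norm_le hr).trans hN')
  · intro r hr
    calc ‖(√(r ^ d) : ℂ) * v r‖ ≤ 2 * N * (r * R) ^ κ :=
          (hnorm r).trans_le (h.sqrt_mul_norm_le_rpow hd hκ hκ2 hr)
      _ = 2 * (R ^ κ * N) * r ^ κ := by rw [mul_rpow hr.le hR.le]; ring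
      _ ≤ _ := by gcongr
  · intro r s hs hrs
    refine (h.norm_sqrt_mul_sub_le hd hκ hκ2 hs hrs).trans_eq ?_
    rw [mul_rpow hR.le (abs_nonneg _)]
    ring

end SobolevRay

end Rays

section Polar

open Set Metric

theorem integral_volumeIoiPow {X : Type*} [NormedAddCommGroup X] [NormedSpace ℝ X] (d : ℕ)
    (g : ℝ → X) :
    ∫ r : Ioi (0 : ℝ), g r ∂(Measure.volumeIoiPow d) = ∫ r in Ioi (0 : ℝ), r ^ d • g r := by
  simp only [Measure.volumeIoiPow, ENNReal.ofReal]
  rw [integral_withDensity_eq_integral_smul,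
    integral_subtype_comap measurableSet_Ioi fun a ↦ Real.toNNReal (a ^ d) • g a,
    setIntegral_congr_fun measurableSet_Ioi fun x hx ↦ ?_]
  · rw [NNReal.smul_def, Real.coe_toNNReal _ (pow_nonneg hx.out.le _)]
  · exact (measurable_subtype_coe.pow_const _).real_toNNReal

theorem integrable_volumeIoiPow {X : Type*} [NormedAddCommGroup X] [NormedSpace ℝ X] (d : ℕ)
    {g : ℝ → X} :
    Integrable (fun r : Ioi (0 : ℝ) => g r) (Measure.volumeIoiPow d) ↔
      IntegrableOn (fun r => r ^ d • g r) (Ioi 0) := by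
  rw [integrableOn_iff_comap_subtypeVal measurableSet_Ioi, Measure.volumeIoiPow,
    integrable_withDensity_iff_integrable_smul' (by fun_prop) (by simp)]
  refine integrable_congr (.of_forall ?_)
  rintro ⟨x, hx : 0 < x⟩
  simp (disch := positivity) [ENNReal.toReal_ofReal]

variable {V : Type*} [NormedAddCommGroup V] [InnerProductSpace ℝ V] [FiniteDimensional ℝ V]
  [MeasurableSpace V] [BorelSpace V]
  {X : Type*} [NormedAddCommGroup X] [NormedSpace ℝ X] {d : ℕ} {F : V → X}

theorem integrable_polar_and_integral_eq (hd : Module.finrank ℝ V = d + 1) (hF : Integrable F) :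
    Integrable (fun p : sphere (0 : V) 1 × Ioi (0 : ℝ) => F ((p.2 : ℝ) • (p.1 : V)))
        ((volume : Measure V).toSphere.prod (Measure.volumeIoiPow d)) ∧
      ∫ p : sphere (0 : V) 1 × Ioi (0 : ℝ), F ((p.2 : ℝ) • (p.1 : V))
        ∂((volume : Measure V).toSphere.prod (Measure.volumeIoiPow d)) = ∫ x, F x := by
  have : Nontrivial V := Module.nontrivial_of_finrank_pos (R := ℝ) (by omega)
  have hmp := (volume : Measure V).measurePreserving_homeomorphUnitSphereProd
  rw [show Module.finrank ℝ V - 1 = d by omega] at hmp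
  set G : sphere (0 : V) 1 × Ioi (0 : ℝ) → X := fun p => F ((p.2 : ℝ) • (p.1 : V))
  have hG : ∀ x, G (homeomorphUnitSphereProd V x) = F x := by
    intro x
    have hx : ‖(x : V)‖ ≠ 0 := norm_ne_zero_iff.2 x.2
    simp [G, smul_smul, hx]
  have hF' : Integrable (fun x : ({0}ᶜ : Set V) => F x)
      (Measure.comap Subtype.val (volume : Measure V)) :=
    (integrableOn_iff_comap_subtypeVal (measurableSet_singleton (0 : V)).compl).1 hF.integrableOn
  constructor
  · rw [← hmp.integrable_comp_emb (Homeomorph.measurableEmbedding _)]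
    exact hF'.congr (.of_forall fun x => (hG x).symm)
  · refine (hmp.integral_comp (Homeomorph.measurableEmbedding _) G).symm.trans ?_
    simp_rw [hG]
    rw [integral_subtype_comap (measurableSet_singleton (0 : V)).compl F,
      restrict_compl_singleton]

theorem ae_integrableOn_polar (hd : Module.finrank ℝ V = d + 1) (hF : Integrable F) :
    ∀ᵐ ω : sphere (0 : V) 1 ∂(volume : Measure V).toSphere,
      IntegrableOn (fun r : ℝ => r ^ d • F (r • (ω : V))) (Ioi 0) := by
  filter_upwards [(integrable_polar_and_integral_eq hd hF).1.prod_right_ae] with ω hω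
  exact (integrable_volumeIoiPow d (g := fun r => F (r • (ω : V)))).1 hω

theorem integrable_integral_polar (hd : Module.finrank ℝ V = d + 1) (hF : Integrable F) :
    Integrable (fun ω : sphere (0 : V) 1 => ∫ r in Ioi (0 : ℝ), r ^ d • F (r • (ω : V)))
      (volume : Measure V).toSphere := by
  have hint := (integrable_polar_and_integral_eq hd hF).1.integral_prod_left
  exact hint.congr (.of_forall fun ω => integral_volumeIoiPow d fun r => F (r • (ω : V)))

theorem integral_integral_polar (hd : Module.finrank ℝ V = d + 1) (hF : Integrable F) :
    ∫ ω : sphere (0 : V) 1, (∫ r in Ioi (0 : ℝ), r ^ d • F (r • (ω : V)))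
      ∂(volume : Measure V).toSphere = ∫ x, F x := by
  obtain ⟨hint, heq⟩ := integrable_polar_and_integral_eq hd hF
  rw [← heq, integral_prod _ hint]
  refine integral_congr_ae (.of_forall fun ω => ?_)
  exact (integral_volumeIoiPow d (fun r => F (r • (ω : V)))).symm

end Polar

section BallSupported

open Set Metric FourierTransform VectorFourier

theorem norm_sq_apply_le_sum {V ι : Type*} [NormedAddCommGroup V] [InnerProductSpace ℝ V]
    [Fintype ι] (b : OrthonormalBasis ι ℝ V) (L : V →L[ℝ] ℂ) {ω : V} (hω : ‖ω‖ = 1) :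
    ‖L ω‖ ^ 2 ≤ ∑ j, ‖L (b j)‖ ^ 2 := by
  have hsum : L ω = ∑ j, ⟪b j, ω⟫ • L (b j) := by
    conv_lhs => rw [← b.sum_repr' ω, map_sum]
    simp only [map_smul]
  have hnorm : ‖L ω‖ ≤ ∑ j, |⟪b j, ω⟫| * ‖L (b j)‖ := by
    rw [hsum]
    refine (norm_sum_le _ _).trans_eq ?_
    simp only [norm_smul, norm_eq_abs]
  have hone : ∑ j, |⟪b j, ω⟫| ^ 2 = 1 := by
    simpa [hω] using b.sum_sq_norm_inner_right ω
  calc ‖L ω‖ ^ 2 ≤ (∑ j, |⟪b j, ω⟫| * ‖L (b j)‖) ^ 2 := by gcongr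
    _ ≤ (∑ j, |⟪b j, ω⟫| ^ 2) * ∑ j, ‖L (b j)‖ ^ 2 := Finset.sum_mul_sq_le_sq_mul_sq _ _ _
    _ = _ := by rw [hone, one_mul]

variable {V : Type*} [NormedAddCommGroup V] [InnerProductSpace ℝ V]

/-- The function whose Fourier transform is the derivative of `𝓕 φ` in the direction `e`. -/
def directionalMoment (e : V) (φ : V → ℂ) : V → ℂ :=
  fun x => -(2 * π * I) * ((⟪x, e⟫ : ℝ) : ℂ) * φ x

theorem norm_directionalMoment (e : V) (φ : V → ℂ) (x : V) :
    ‖directionalMoment e φ x‖ = 2 * π * |⟪x, e⟫| * ‖φ x‖ := by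
  simp [directionalMoment, abs_of_pos pi_pos]

variable [FiniteDimensional ℝ V]

theorem sum_norm_sq_directionalMoment (φ : V → ℂ) (x : V) :
    ∑ j, ‖directionalMoment (stdOrthonormalBasis ℝ V j) φ x‖ ^ 2 =
      (2 * π * ‖x‖) ^ 2 * ‖φ x‖ ^ 2 := by
  rw [mul_pow _ ‖x‖, ← (stdOrthonormalBasis ℝ V).sum_sq_norm_inner_left x, Finset.mul_sum,
    Finset.sum_mul]
  exact Finset.sum_congr rfl fun j _ => by
    rw [norm_directionalMoment, mul_pow, mul_pow, norm_eq_abs]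

variable [MeasurableSpace V] [BorelSpace V]

/-- A square-integrable function supported in the ball of radius `R ≥ 1`. -/
structure BallSupported (φ : V → ℂ) (R : ℝ) : Prop where
  one_le : 1 ≤ R
  memLp : MemLp φ 2
  eq_zero : ∀ x, R < ‖x‖ → φ x = 0

/-- The squared length of the gradient of `𝓕 φ`. -/
def fourierGradSq (φ : V → ℂ) (ξ : V) : ℝ :=
  ∑ j, ‖𝓕 (directionalMoment (stdOrthonormalBasis ℝ V j) φ) ξ‖ ^ 2

theorem fourierGradSq_nonneg (φ : V → ℂ) (ξ : V) : 0 ≤ fourierGradSq φ ξ :=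
  Finset.sum_nonneg fun _ _ => sq_nonneg _

namespace BallSupported

variable {φ : V → ℂ} {R : ℝ}

theorem pos (h : BallSupported φ R) : 0 < R := zero_lt_one.trans_le h.one_le

theorem integrable_norm_sq (h : BallSupported φ R) : Integrable fun x => ‖φ x‖ ^ 2 :=
  (memLp_two_iff_integrable_sq_norm h.memLp.1).1 h.memLp

theorem integrable (h : BallSupported φ R) : Integrable φ := by
  have : IsFiniteMeasure (volume.restrict (closedBall (0 : V) R)) :=
    ⟨by simpa using measure_closedBall_lt_top⟩
  have hball : IntegrableOn φ (closedBall 0 R) :=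
    (h.memLp.restrict _).integrable (by norm_num)
  refine (integrableOn_iff_integrable_of_support_subset fun x hx => ?_).1 hball
  by_contra hc
  exact hx (h.eq_zero x (by simpa using hc))

theorem norm_mul_norm_le (h : BallSupported φ R) (x : V) : ‖x‖ * ‖φ x‖ ≤ R * ‖φ x‖ := by
  rcases le_or_gt ‖x‖ R with hx | hx
  · gcongr
  · rw [h.eq_zero x hx, norm_zero, mul_zero, mul_zero]

theorem directionalMoment (h : BallSupported φ R) (e : V) :
    BallSupported (directionalMoment e φ) R where
  one_le := h.one_le
  eq_zero x hx := by rw [_root_.directionalMoment, h.eq_zero x hx, mul_zero]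
  memLp := by
    refine h.memLp.of_le_mul (c := 2 * π * (R * ‖e‖)) ?_ (.of_forall fun x => ?_)
    · exact (by fun_prop : Continuous fun x : V =>
        -(2 * π * I) * ((⟪x, e⟫ : ℝ) : ℂ)).aestronglyMeasurable.mul h.memLp.1
    · calc ‖_root_.directionalMoment e φ x‖ = 2 * π * |⟪x, e⟫| * ‖φ x‖ :=
            norm_directionalMoment e φ x
        _ ≤ 2 * π * (‖x‖ * ‖e‖) * ‖φ x‖ := by gcongr; exact abs_real_inner_le_norm x e
        _ = 2 * π * ‖e‖ * (‖x‖ * ‖φ x‖) := by ring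
        _ ≤ 2 * π * ‖e‖ * (R * ‖φ x‖) := by
            gcongr 2 * π * ‖e‖ * ?_; exact h.norm_mul_norm_le x
        _ = 2 * π * (R * ‖e‖) * ‖φ x‖ := by ring

theorem exists_hasFDerivAt_fourier (h : BallSupported φ R) (ξ : V) :
    ∃ L : V →L[ℝ] ℂ, HasFDerivAt (𝓕 φ) L ξ ∧
      ∀ e, L e = 𝓕 (_root_.directionalMoment e φ) ξ := by
  have hi : Integrable (fun v => ‖v‖ * ‖φ v‖) := by
    refine (h.integrable.norm.const_mul R).mono' ?_ (.of_forall fun x => ?_)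
    · exact continuous_norm.aestronglyMeasurable.mul h.integrable.norm.1
    · rw [norm_mul, norm_norm, norm_norm]
      exact h.norm_mul_norm_le x
  refine ⟨_, Real.hasFDerivAt_fourier h.integrable hi ξ, fun e => ?_⟩
  have hi2 : Integrable (fourierSMulRight (innerSL ℝ) φ) :=
    (hi.const_mul (2 * π * ‖(innerSL ℝ : V →L[ℝ] V →L[ℝ] ℝ)‖)).mono'
      h.integrable.1.fourierSMulRight (.of_forall fun v =>
        (norm_fourierSMulRight_le _ _ _).trans_eq (by ring))
  rw [Real.fourier_continuousLinearMap_apply hi2]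
  refine congrArg (fun g : V → ℂ => 𝓕 g ξ) (funext fun x => ?_)
  simp only [fourierSMulRight_apply, smul_eq_mul, real_smul, ← mul_assoc]
  rfl

theorem hasDerivAt_fourier_ray (h : BallSupported φ R) (ω : V) (r : ℝ) :
    HasDerivAt (fun r : ℝ => 𝓕 φ (r • ω)) (𝓕 (_root_.directionalMoment ω φ) (r • ω)) r := by
  obtain ⟨L, hL, hLe⟩ := h.exists_hasFDerivAt_fourier (r • ω)
  have hray : HasDerivAt (fun r : ℝ => r • ω) ((1 : ℝ) • ω) r := (hasDerivAt_id r).smul_const ω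
  have hcomp := hL.comp_hasDerivAt r hray
  rwa [one_smul, hLe] at hcomp

theorem norm_sq_fourier_directionalMoment_le (h : BallSupported φ R) {ω : V} (hω : ‖ω‖ = 1)
    (ξ : V) : ‖𝓕 (_root_.directionalMoment ω φ) ξ‖ ^ 2 ≤ fourierGradSq φ ξ := by
  obtain ⟨L, -, hLe⟩ := h.exists_hasFDerivAt_fourier ξ
  simpa only [hLe, fourierGradSq] using norm_sq_apply_le_sum (stdOrthonormalBasis ℝ V) L hω

theorem sq_integral_norm_le (h : BallSupported φ R) :
    (∫ x, ‖φ x‖) ^ 2 ≤ (volume : Measure V).real (ball 0 1) * R ^ Module.finrank ℝ V *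
      ∫ x, ‖φ x‖ ^ 2 := by
  set B := closedBall (0 : V) R
  have : IsFiniteMeasure (volume.restrict B) := ⟨by simpa using measure_closedBall_lt_top⟩
  have hset : ∫ x, ‖φ x‖ = ∫ x in B, ‖φ x‖ * ‖(1 : ℝ)‖ := by
    simp only [norm_one, mul_one]
    refine (setIntegral_eq_integral_of_forall_compl_eq_zero fun x hx => ?_).symm
    rw [h.eq_zero x (by simpa [B] using hx), norm_zero]
  have hle : ∫ x in B, ‖φ x‖ ^ 2 ≤ ∫ x, ‖φ x‖ ^ 2 :=
    setIntegral_le_integral h.integrable_norm_sq (.of_forall fun x => sq_nonneg _)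
  have hvol : (volume : Measure V).real B =
      R ^ Module.finrank ℝ V * (volume : Measure V).real (ball 0 1) :=
    Measure.addHaar_real_closedBall _ _ h.pos.le
  have hnonneg : 0 ≤ ∫ x in B, ‖φ x‖ ^ 2 := integral_nonneg fun _ => by positivity
  calc (∫ x, ‖φ x‖) ^ 2
      ≤ (√(∫ x in B, ‖φ x‖ ^ 2) * √(∫ x in B, ‖(1 : ℝ)‖ ^ 2)) ^ 2 := by
        gcongr
        exact hset.trans_le (integral_norm_mul_norm_le_sqrt (h.memLp.restrict B)
          (memLp_const (μ := volume.restrict B) (1 : ℝ)))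
    _ = (∫ x in B, ‖φ x‖ ^ 2) * (volume : Measure V).real B := by
        rw [mul_pow, sq_sqrt hnonneg, sq_sqrt (by positivity)]; simp
    _ ≤ (∫ x, ‖φ x‖ ^ 2) * (volume : Measure V).real B := by gcongr
    _ = _ := by rw [hvol]; ring

theorem memLp_fourier (h : BallSupported φ R) : MemLp (𝓕 φ) 2 :=
  memLp_two_fourier h.integrable h.memLp

theorem integrable_norm_sq_fourier (h : BallSupported φ R) : Integrable fun ξ => ‖𝓕 φ ξ‖ ^ 2 :=
  (memLp_two_iff_integrable_sq_norm h.memLp_fourier.1).1 h.memLp_fourier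

theorem integral_norm_sq_fourier (h : BallSupported φ R) :
    ∫ ξ, ‖𝓕 φ ξ‖ ^ 2 = ∫ x, ‖φ x‖ ^ 2 := by
  have hlin := lintegral_enorm_sq_fourier h.integrable h.memLp
  rw [integral_eq_lintegral_of_nonneg_ae (.of_forall fun _ => sq_nonneg _)
      h.integrable_norm_sq_fourier.1,
    integral_eq_lintegral_of_nonneg_ae (.of_forall fun _ => sq_nonneg _) h.integrable_norm_sq.1]
  simpa only [← ofReal_norm, ENNReal.ofReal_pow (norm_nonneg _)] using congrArg ENNReal.toReal hlin

theorem integrable_fourierGradSq (h : BallSupported φ R) : Integrable (fourierGradSq φ) :=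
  integrable_finsetSum _ fun _ _ => (h.directionalMoment _).integrable_norm_sq_fourier

theorem integral_fourierGradSq_le (h : BallSupported φ R) :
    ∫ ξ, fourierGradSq φ ξ ≤ (2 * π * R) ^ 2 * ∫ x, ‖φ x‖ ^ 2 := by
  have hmoment := fun j => (h.directionalMoment (stdOrthonormalBasis ℝ V j)).integrable_norm_sq
  calc ∫ ξ, fourierGradSq φ ξ
      = ∑ j, ∫ x, ‖_root_.directionalMoment (stdOrthonormalBasis ℝ V j) φ x‖ ^ 2 := by
        unfold fourierGradSq
        rw [integral_finsetSum _ fun _ _ => (h.directionalMoment _).integrable_norm_sq_fourier]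
        exact Finset.sum_congr rfl fun _ _ => (h.directionalMoment _).integral_norm_sq_fourier
    _ = ∫ x, (2 * π * ‖x‖) ^ 2 * ‖φ x‖ ^ 2 := by
        rw [← integral_finsetSum _ fun j _ => hmoment j]
        simp only [sum_norm_sq_directionalMoment]
    _ ≤ ∫ x, (2 * π * R) ^ 2 * ‖φ x‖ ^ 2 := by
        refine integral_mono_of_nonneg (.of_forall fun _ => by positivity)
          (h.integrable_norm_sq.const_mul _) (.of_forall fun x => ?_)
        have := h.norm_mul_norm_le x
        calc (2 * π * ‖x‖) ^ 2 * ‖φ x‖ ^ 2 = (2 * π * (‖x‖ * ‖φ x‖)) ^ 2 := by ring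
          _ ≤ (2 * π * (R * ‖φ x‖)) ^ 2 := by gcongr
          _ = (2 * π * R) ^ 2 * ‖φ x‖ ^ 2 := by ring
    _ = _ := integral_const_mul _ _

end BallSupported

/-- The squared constant in the `SobolevRay` bounds for `𝓕 φ` along the ray in direction `ω`: the
radial energies of `𝓕 φ` and of its gradient, weighted by powers of the frequency `R`, plus a
constant term that accounts for the supremum of `𝓕 φ`. -/
def rayEnergy (d : ℕ) (φ : V → ℂ) (R : ℝ) (ω : V) : ℝ :=
  R * (∫ r in Ioi (0 : ℝ), r ^ d * ‖𝓕 φ (r • ω)‖ ^ 2) +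
    R⁻¹ * (∫ r in Ioi (0 : ℝ), r ^ d * fourierGradSq φ (r • ω)) +
    (volume : Measure V).real (ball 0 1) * R * ∫ x, ‖φ x‖ ^ 2

theorem integral_pow_mul_nonneg (d : ℕ) {f : ℝ → ℝ} (hf : ∀ r, 0 ≤ f r) :
    0 ≤ ∫ r in Ioi (0 : ℝ), r ^ d * f r :=
  setIntegral_nonneg measurableSet_Ioi fun r hr => mul_nonneg (pow_nonneg (le_of_lt hr) d) (hf r)

namespace BallSupported

variable {φ : V → ℂ} {R : ℝ} {d : ℕ}

theorem rayEnergy_nonneg (h : BallSupported φ R) (d : ℕ) (ω : V) : 0 ≤ rayEnergy d φ R ω := by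
  have hR := h.pos
  have := integral_pow_mul_nonneg d fun r => sq_nonneg ‖𝓕 φ (r • ω)‖
  have := integral_pow_mul_nonneg d fun r => fourierGradSq_nonneg φ (r • ω)
  have : 0 ≤ ∫ x, ‖φ x‖ ^ 2 := integral_nonneg fun _ => sq_nonneg _
  rw [rayEnergy]
  positivity

theorem integrable_rayEnergy (h : BallSupported φ R) (hd : Module.finrank ℝ V = d + 1) :
    Integrable (fun ω : sphere (0 : V) 1 => rayEnergy d φ R ω) (volume : Measure V).toSphere :=
  (((integrable_integral_polar hd h.integrable_norm_sq_fourier).const_mul R).add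
    ((integrable_integral_polar hd h.integrable_fourierGradSq).const_mul R⁻¹)).add
    (integrable_const _)

theorem integral_rayEnergy_le (h : BallSupported φ R) (hd : Module.finrank ℝ V = d + 1) :
    ∫ ω : sphere (0 : V) 1, rayEnergy d φ R ω ∂(volume : Measure V).toSphere ≤
      (1 + (2 * π) ^ 2 + (volume : Measure V).real (ball 0 1) *
        (volume : Measure V).toSphere.real univ) * (R * ∫ x, ‖φ x‖ ^ 2) := by
  have hR := h.pos
  have hval := (integrable_integral_polar hd h.integrable_norm_sq_fourier).const_mul R
  have hgrad := (integrable_integral_polar hd h.integrable_fourierGradSq).const_mul R⁻¹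
  have hval_eq := integral_integral_polar hd h.integrable_norm_sq_fourier
  have hgrad_eq := integral_integral_polar hd h.integrable_fourierGradSq
  simp only [smul_eq_mul] at hval hgrad hval_eq hgrad_eq
  simp only [rayEnergy]
  rw [integral_add (by exact hval.add hgrad) (integrable_const _), integral_add hval hgrad,
    integral_const_mul, integral_const_mul, integral_const, smul_eq_mul, hval_eq, hgrad_eq,
    h.integral_norm_sq_fourier]
  set P := ∫ x, ‖φ x‖ ^ 2
  set c := (volume : Measure V).real (ball 0 1)
  set s := (volume : Measure V).toSphere.real univ
  calc R * P + R⁻¹ * (∫ ξ, fourierGradSq φ ξ) + s * (c * R * P)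
      ≤ R * P + R⁻¹ * ((2 * π * R) ^ 2 * P) + s * (c * R * P) := by
        gcongr; exact h.integral_fourierGradSq_le
    _ = _ := by field_simp

theorem ae_sobolevRay (h : BallSupported φ R) (hd : Module.finrank ℝ V = d + 1) :
    ∀ᵐ ω : sphere (0 : V) 1 ∂(volume : Measure V).toSphere,
      SobolevRay d (fun r : ℝ => 𝓕 φ (r • (ω : V)))
        (fun r : ℝ => 𝓕 (_root_.directionalMoment (ω : V) φ) (r • (ω : V))) R
        √(rayEnergy d φ R ω) := by
  have hR := h.pos
  filter_upwards [ae_integrableOn_polar hd h.integrable_norm_sq_fourier,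
    ae_integrableOn_polar hd h.integrable_fourierGradSq] with ω hval hgrad
  simp only [smul_eq_mul] at hval hgrad
  have hω : ‖(ω : V)‖ = 1 := norm_eq_of_mem_sphere ω
  have hsq : √(rayEnergy d φ R ω) ^ 2 = rayEnergy d φ R ω := sq_sqrt (h.rayEnergy_nonneg d ω)
  have hcont : Continuous fun r : ℝ => 𝓕 (_root_.directionalMoment (ω : V) φ) (r • (ω : V)) :=
    (continuous_fourier_of_integrable (h.directionalMoment _).integrable).comp (by fun_prop)
  have hderiv_le : ∀ r ∈ Ioi (0 : ℝ), r ^ d * ‖𝓕 (_root_.directionalMoment (ω : V) φ)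
      (r • (ω : V))‖ ^ 2 ≤ r ^ d * fourierGradSq φ (r • (ω : V)) := fun r hr =>
    mul_le_mul_of_nonneg_left (h.norm_sq_fourier_directionalMoment_le hω _)
      (pow_nonneg (le_of_lt hr) d)
  have hderiv : IntegrableOn (fun r : ℝ => r ^ d * ‖𝓕 (_root_.directionalMoment (ω : V) φ)
      (r • (ω : V))‖ ^ 2) (Ioi 0) := by
    refine Integrable.mono' hgrad (by fun_prop) ?_
    filter_upwards [ae_restrict_mem measurableSet_Ioi] with r hr
    rw [norm_of_nonneg (mul_nonneg (pow_nonneg (le_of_lt hr) d) (sq_nonneg _))]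
    exact hderiv_le r hr
  have hval0 := integral_pow_mul_nonneg d fun r => sq_nonneg ‖𝓕 φ (r • (ω : V))‖
  have hgrad0 := integral_pow_mul_nonneg d fun r => fourierGradSq_nonneg φ (r • (ω : V))
  have : 0 ≤ ∫ x, ‖φ x‖ ^ 2 := integral_nonneg fun _ => sq_nonneg _
  refine ⟨h.one_le, sqrt_nonneg _, h.hasDerivAt_fourier_ray ω, hcont, hval, ?_, hderiv, ?_,
    fun r => ?_⟩ <;> rw [hsq, rayEnergy]
  · rw [add_assoc]
    exact le_add_of_nonneg_right (by positivity)
  · calc _ ≤ ∫ r in Ioi (0 : ℝ), r ^ d * fourierGradSq φ (r • (ω : V)) :=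
          setIntegral_mono_on hderiv hgrad measurableSet_Ioi hderiv_le
      _ = R * (R⁻¹ * ∫ r in Ioi (0 : ℝ), r ^ d * fourierGradSq φ (r • (ω : V))) := by field_simp
      _ ≤ _ := by
          gcongr R * ?_
          rw [add_right_comm]
          exact le_add_of_nonneg_left (by positivity)
  · calc ‖𝓕 φ (r • (ω : V))‖ ^ 2 ≤ (∫ x, ‖φ x‖) ^ 2 := by
          gcongr; exact norm_fourier_le_integral_norm _ _
      _ ≤ _ := h.sq_integral_norm_le
      _ = R ^ d * ((volume : Measure V).real (ball 0 1) * R * ∫ x, ‖φ x‖ ^ 2) := by rw [hd]; ring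
      _ ≤ _ := by gcongr R ^ d * ?_; exact le_add_of_nonneg_left (by positivity)

end BallSupported

theorem exists_forall_ballSupported_holderRay {d : ℕ} (hd : 1 ≤ d)
    (hV : Module.finrank ℝ V = d + 1) {κ : ℝ} (hκ : 0 < κ) (hκ2 : κ ≤ 1 / 2) :
    ∃ C, 0 ≤ C ∧ ∀ (φ : V → ℂ) (R : ℝ), BallSupported φ R → ∃ N : sphere (0 : V) 1 → ℝ,
      (∀ᵐ ω : sphere (0 : V) 1 ∂(volume : Measure V).toSphere,
        HolderRay κ (fun r : ℝ => (√(r ^ d) : ℂ) * 𝓕 φ (r • (ω : V))) (N ω)) ∧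
      MemLp N 2 (volume : Measure V).toSphere ∧
      √(∫ ω, ‖N ω‖ ^ 2 ∂(volume : Measure V).toSphere) ≤
        C * (R ^ (κ + 1 / 2) * √(∫ x, ‖φ x‖ ^ 2)) := by
  set c : ℝ := 4 * 3 ^ d + 2 * d * 2 ^ d
  set C : ℝ := 1 + (2 * π) ^ 2 + (volume : Measure V).real (ball 0 1) *
    (volume : Measure V).toSphere.real univ
  refine ⟨c * √C, by positivity, fun φ R h => ⟨fun ω => c * (R ^ κ * √(rayEnergy d φ R ω)),
    ?_, ?_, ?_⟩⟩
  · filter_upwards [h.ae_sobolevRay hV] with ω hω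
    exact hω.holderRay hd hκ hκ2
  all_goals
    have hR := h.pos
    have hsq : ∀ ω : sphere (0 : V) 1, ‖c * (R ^ κ * √(rayEnergy d φ R ω))‖ ^ 2 =
        (c * R ^ κ) ^ 2 * rayEnergy d φ R ω := fun ω => by
      rw [norm_eq_abs, sq_abs, ← mul_assoc, mul_pow, sq_sqrt (h.rayEnergy_nonneg d ω)]
    have hint := h.integrable_rayEnergy hV
  · refine (memLp_two_iff_integrable_sq_norm ?_).2 ?_
    · exact ((Real.continuous_sqrt.comp_aestronglyMeasurable hint.1).const_mul _).const_mul _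
    · simpa only [hsq] using hint.const_mul _
  · simp only [hsq, integral_const_mul]
    calc √((c * R ^ κ) ^ 2 * ∫ ω : sphere (0 : V) 1, rayEnergy d φ R ω
          ∂(volume : Measure V).toSphere)
        ≤ √((c * R ^ κ) ^ 2 * (C * (R * ∫ x, ‖φ x‖ ^ 2))) := by
          gcongr; exact h.integral_rayEnergy_le hV
      _ = c * √C * (R ^ κ * R ^ (1 / 2 : ℝ) * √(∫ x, ‖φ x‖ ^ 2)) := by
          rw [Real.sqrt_mul (by positivity), sqrt_sq (by positivity), Real.sqrt_mul (by positivity),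
            Real.sqrt_mul hR.le, Real.sqrt_eq_rpow R]
          ring
      _ = _ := by rw [← rpow_add hR]

end BallSupported

section Resolvent

open Set Metric FourierTransform

variable {V : Type*} [NormedAddCommGroup V]

/-- The symbol `|η|^(m-1) / (τ - a(η)^m - iε)`: a derivative of order `m - 1` composed with the
resolvent of `a(D)^m` at the spectral parameter `τ - iε`. -/
def resolventSymbol (a : V → ℝ) (m τ ε : ℝ) (η : V) : ℂ :=
  ((‖η‖ ^ (m - 1) : ℝ) : ℂ) / ((τ : ℂ) - ((a η ^ m : ℝ) : ℂ) - ε * I)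

theorem measurable_resolventSymbol [MeasurableSpace V] [BorelSpace V] {a : V → ℝ}
    (ha : Continuous a) (m τ ε : ℝ) : Measurable (resolventSymbol a m τ ε) := by
  have := ha.measurable
  unfold resolventSymbol
  fun_prop

theorem rpow_sub_one_le_one_add_rpow {r m : ℝ} (hr : 0 ≤ r) (hm : 1 ≤ m) :
    r ^ (m - 1) ≤ 1 + r ^ m := by
  rcases le_total r 1 with h | h
  · exact (rpow_le_one hr h (sub_nonneg.2 hm)).trans (le_add_of_nonneg_right (by positivity))
  · exact (rpow_le_rpow_of_exponent_le h (by linarith)).trans (le_add_of_nonneg_left zero_le_one)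

variable [InnerProductSpace ℝ V]

/-- A continuous elliptic symbol, positively homogeneous of degree one. -/
structure EllipticSymbol (a : V → ℝ) : Prop where
  cont : Continuous a
  hom : ∀ t : ℝ, 0 < t → ∀ ξ, a (t • ξ) = t * a ξ
  pos : ∀ ξ, ξ ≠ 0 → 0 < a ξ

namespace EllipticSymbol

variable {a : V → ℝ} {m : ℝ}

theorem map_zero (h : EllipticSymbol a) : a 0 = 0 := by
  have := h.hom 2 two_pos 0
  rw [smul_zero] at this
  linarith

theorem nonneg (h : EllipticSymbol a) (ξ : V) : 0 ≤ a ξ := by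
  rcases eq_or_ne ξ 0 with rfl | hξ
  · exact h.map_zero.ge
  · exact (h.pos ξ hξ).le

theorem resolventSymbol_smul (h : EllipticSymbol a) (m τ ε : ℝ) {r : ℝ} (hr : 0 < r) {ω : V}
    (hω : ‖ω‖ = 1) :
    resolventSymbol a m τ ε (r • ω) =
      ((a ω ^ m)⁻¹ : ℝ) * radialKernel m (τ / a ω ^ m) (ε / a ω ^ m) r := by
  have hpos : 0 < a ω ^ m := rpow_pos_of_pos (h.pos ω (norm_ne_zero_iff.1 (by simp [hω]))) m
  rw [resolventSymbol, norm_smul, hω, mul_one, norm_of_nonneg hr.le, h.hom r hr,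
    mul_rpow hr.le (h.nonneg _), radialKernel]
  set β := a ω ^ m
  have hβ : (β : ℂ) ≠ 0 := by exact_mod_cast hpos.ne'
  have hden : ((τ / β : ℝ) : ℂ) - ((r ^ m : ℝ) : ℂ) - ((ε / β : ℝ) : ℂ) * I =
      ((τ : ℂ) - ((r ^ m * β : ℝ) : ℂ) - ε * I) / β := by
    push_cast; field_simp
  rw [hden]
  push_cast
  field_simp

variable [FiniteDimensional ℝ V]

theorem exists_lower_bound (h : EllipticSymbol a) : ∃ c, 0 < c ∧ ∀ ξ, c * ‖ξ‖ ≤ a ξ := by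
  obtain ⟨c, hc, hcs⟩ : ∃ c, 0 < c ∧ ∀ ω ∈ sphere (0 : V) 1, c ≤ a ω := by
    rcases (sphere (0 : V) 1).eq_empty_or_nonempty with he | hne
    · exact ⟨1, one_pos, by simp [he]⟩
    · obtain ⟨ω, hω, hmin⟩ := (isCompact_sphere (0 : V) 1).exists_isMinOn hne h.cont.continuousOn
      exact ⟨a ω, h.pos ω (ne_zero_of_mem_unit_sphere ⟨ω, hω⟩), fun ω' hω' => hmin hω'⟩
  refine ⟨c, hc, fun ξ => ?_⟩
  rcases eq_or_ne ξ 0 with rfl | hξ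
  · rw [norm_zero, mul_zero, h.map_zero]
  · have hn : 0 < ‖ξ‖ := norm_pos_iff.2 hξ
    have hunit := hcs (‖ξ‖⁻¹ • ξ) (by simp [norm_smul, hn.ne'])
    rwa [h.hom _ (inv_pos.2 hn), inv_mul_eq_div, le_div_iff₀ hn] at hunit

theorem exists_forall_norm_resolventSymbol_le (h : EllipticSymbol a) (hm : 1 ≤ m) (τ : ℝ) {ε : ℝ}
    (hε : ε ≠ 0) : ∃ K, ∀ η, ‖resolventSymbol a m τ ε η‖ ≤ K := by
  obtain ⟨c, hc, hca⟩ := h.exists_lower_bound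
  have hcm : 0 < c ^ m := rpow_pos_of_pos hc m
  have hε' : 0 < |ε| := abs_pos.2 hε
  refine ⟨(1 + |τ| / c ^ m) / |ε| + 1 / c ^ m, fun η => ?_⟩
  set z : ℂ := (τ : ℂ) - ((a η ^ m : ℝ) : ℂ) - ε * I with hz
  have him : |ε| ≤ ‖z‖ := by simpa [hz] using abs_im_le_norm z
  have hre : |τ - a η ^ m| ≤ ‖z‖ := by simpa [hz] using abs_re_le_norm z
  have hpow : ‖η‖ ^ m ≤ (‖z‖ + |τ|) / c ^ m := by
    rw [le_div_iff₀ hcm, mul_comm, ← mul_rpow hc.le (norm_nonneg η)]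
    calc (c * ‖η‖) ^ m ≤ a η ^ m := by gcongr; exact hca η
      _ ≤ |τ - a η ^ m| + |τ| := by linarith [neg_abs_le (τ - a η ^ m), le_abs_self τ]
      _ ≤ ‖z‖ + |τ| := by gcongr
  rw [resolventSymbol, norm_div, norm_real, norm_of_nonneg (by positivity), ← hz,
    div_le_iff₀ (hε'.trans_le him)]
  calc ‖η‖ ^ (m - 1) ≤ 1 + (‖z‖ + |τ|) / c ^ m :=
        (rpow_sub_one_le_one_add_rpow (norm_nonneg η) hm).trans (by gcongr)
    _ = (1 + |τ| / c ^ m) / |ε| * |ε| + 1 / c ^ m * ‖z‖ := by field_simp; ring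
    _ ≤ (1 + |τ| / c ^ m) / |ε| * ‖z‖ + 1 / c ^ m * ‖z‖ := by gcongr
    _ = _ := by ring

theorem exists_forall_norm_integral_ray_le (h : EllipticSymbol a) (hm : 1 ≤ m) (d : ℕ) {κ : ℝ}
    (hκ : 0 < κ) :
    ∃ C, 0 ≤ C ∧ ∀ τ ε : ℝ, ε ≠ 0 → ∀ (ω : V) (f g : V → ℂ) (N M : ℝ), ‖ω‖ = 1 →
      HolderRay κ (fun r : ℝ => (√(r ^ d) : ℂ) * f (r • ω)) N →
      HolderRay κ (fun r : ℝ => (√(r ^ d) : ℂ) * g (r • ω)) M →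
      ‖∫ r in Ioi (0 : ℝ), r ^ d • (resolventSymbol a m τ ε (r • ω) *
        (f (r • ω) * (starRingEnd ℂ) (g (r • ω))))‖ ≤ C * (‖N‖ * ‖M‖) := by
  obtain ⟨C, hC, hradial⟩ := exists_forall_norm_integral_radialKernel_mul_le hm hκ
  obtain ⟨c, hc, hca⟩ := h.exists_lower_bound
  refine ⟨(c ^ m)⁻¹ * (C * 2), by positivity, fun τ ε hε ω f g N M hω hf hg => ?_⟩
  have hcω : c ≤ a ω := by simpa [hω] using hca ω
  have hβ : c ^ m ≤ a ω ^ m := by gcongr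
  have hcm : 0 < c ^ m := by positivity
  set β := a ω ^ m
  have hβ0 : 0 < β := hcm.trans_le hβ
  have hscale : ∫ r in Ioi (0 : ℝ), r ^ d • (resolventSymbol a m τ ε (r • ω) *
        (f (r • ω) * (starRingEnd ℂ) (g (r • ω)))) =
      (β⁻¹ : ℝ) * ∫ r in Ioi (0 : ℝ), radialKernel m (τ / β) (ε / β) r *
        ((√(r ^ d) : ℂ) * f (r • ω) * (starRingEnd ℂ) ((√(r ^ d) : ℂ) * g (r • ω))) := by
    rw [← integral_const_mul]
    refine setIntegral_congr_fun measurableSet_Ioi fun r (hr : 0 < r) => ?_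
    have hsqrt : (√(r ^ d) : ℂ) * (√(r ^ d) : ℂ) = ((r ^ d : ℝ) : ℂ) := by
      rw [← ofReal_mul, mul_self_sqrt (by positivity)]
    simp only [h.resolventSymbol_smul m τ ε hr hω, real_smul, map_mul, conj_ofReal, ← hsqrt]
    ring
  rw [hscale, norm_mul, norm_real, norm_of_nonneg (by positivity), norm_of_nonneg hf.nonneg,
    norm_of_nonneg hg.nonneg]
  calc β⁻¹ * ‖∫ r in Ioi (0 : ℝ), radialKernel m (τ / β) (ε / β) r *
        ((√(r ^ d) : ℂ) * f (r • ω) * (starRingEnd ℂ) ((√(r ^ d) : ℂ) * g (r • ω)))‖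
      ≤ (c ^ m)⁻¹ * (C * (2 * (N * M))) := by
        gcongr
        exact hradial _ _ (div_ne_zero hε hβ0.ne') _ _ (hf.mul_conj hg)
    _ = _ := by ring

variable [MeasurableSpace V] [BorelSpace V]

theorem integrable_resolventSymbol_mul {f : V → ℂ} (h : EllipticSymbol a) (hm : 1 ≤ m) (τ : ℝ)
    {ε : ℝ} (hε : ε ≠ 0) (hf : Integrable f) :
    Integrable fun η => resolventSymbol a m τ ε η * f η := by
  obtain ⟨K, hK⟩ := h.exists_forall_norm_resolventSymbol_le hm τ hε
  exact hf.bdd_mul (measurable_resolventSymbol h.cont m τ ε).aestronglyMeasurable (.of_forall hK)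

theorem exists_forall_norm_integral_resolventSymbol_mul_le {d : ℕ} (h : EllipticSymbol a)
    (hm : 1 ≤ m) (hd : 1 ≤ d) (hV : Module.finrank ℝ V = d + 1) {κ : ℝ} (hκ : 0 < κ)
    (hκ2 : κ ≤ 1 / 2) :
    ∃ C, 0 ≤ C ∧ ∀ τ ε : ℝ, ε ≠ 0 → ∀ (φ γ : V → ℂ) (R S : ℝ), BallSupported φ R →
      BallSupported γ S →
      ‖∫ η, resolventSymbol a m τ ε η * (𝓕 φ η * (starRingEnd ℂ) (𝓕 γ η))‖ ≤
        C * (R ^ (κ + 1 / 2) * √(∫ x, ‖φ x‖ ^ 2)) * (S ^ (κ + 1 / 2) * √(∫ x, ‖γ x‖ ^ 2)) := by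
  obtain ⟨C, hC, hray⟩ := h.exists_forall_norm_integral_ray_le hm d hκ
  obtain ⟨B, hB, hsphere⟩ := exists_forall_ballSupported_holderRay (V := V) hd hV hκ hκ2
  refine ⟨C * B * B, by positivity, fun τ ε hε φ γ R S hφ hγ => ?_⟩
  obtain ⟨N, hφN, hN, hNle⟩ := hsphere φ R hφ
  obtain ⟨M, hγM, hM, hMle⟩ := hsphere γ S hγ
  have hint : Integrable fun η => 𝓕 φ η * (starRingEnd ℂ) (𝓕 γ η) :=
    hφ.memLp_fourier.integrable_mul hγ.memLp_fourier.star
  rw [← integral_integral_polar hV (h.integrable_resolventSymbol_mul hm τ hε hint)]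
  calc ‖∫ ω : sphere (0 : V) 1, (∫ r in Ioi (0 : ℝ), r ^ d •
        (resolventSymbol a m τ ε (r • (ω : V)) *
          (𝓕 φ (r • (ω : V)) * (starRingEnd ℂ) (𝓕 γ (r • (ω : V))))))
        ∂(volume : Measure V).toSphere‖
      ≤ ∫ ω, C * (‖N ω‖ * ‖M ω‖) ∂(volume : Measure V).toSphere := by
        refine norm_integral_le_of_norm_le ((hN.norm.integrable_mul hM.norm).const_mul C) ?_
        filter_upwards [hφN, hγM] with ω hω₁ hω₂
        exact hray τ ε hε ω _ _ _ _ (norm_eq_of_mem_sphere ω) hω₁ hω₂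
    _ = C * ∫ ω, ‖N ω‖ * ‖M ω‖ ∂(volume : Measure V).toSphere := integral_const_mul _ _
    _ ≤ C * ((B * (R ^ (κ + 1 / 2) * √(∫ x, ‖φ x‖ ^ 2))) *
          (B * (S ^ (κ + 1 / 2) * √(∫ x, ‖γ x‖ ^ 2)))) := by
        gcongr
        exact (integral_norm_mul_norm_le_sqrt hN hM).trans
          (mul_le_mul hNle hMle (Real.sqrt_nonneg _) ((Real.sqrt_nonneg _).trans hNle))
    _ = _ := by ring

end EllipticSymbol

end Resolvent

section Weighted

open Set Metric
open scoped ENNReal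

variable {V : Type*} [NormedAddCommGroup V]

/-- The weight `⟨x⟩ = (1 + |x|²)^(1/2)`. -/
def bracket (x : V) : ℝ := √(1 + ‖x‖ ^ 2)

theorem one_le_bracket (x : V) : 1 ≤ bracket x := by
  rw [bracket, Real.one_le_sqrt]
  exact le_add_of_nonneg_right (sq_nonneg _)

theorem bracket_pos (x : V) : 0 < bracket x := zero_lt_one.trans_le (one_le_bracket x)

theorem norm_le_bracket (x : V) : ‖x‖ ≤ bracket x :=
  Real.le_sqrt_of_sq_le (by linarith)

theorem continuous_bracket : Continuous (bracket : V → ℝ) := by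
  unfold bracket; fun_prop

theorem continuous_bracket_rpow (δ : ℝ) : Continuous fun x : V => bracket x ^ δ :=
  continuous_bracket.rpow_const fun x => .inl (bracket_pos x).ne'

variable [MeasureSpace V]

/-- The square of the norm of `φ` in the weighted space `L²(⟨x⟩^(2δ) dx)`, possibly infinite. -/
def weightedEnergy (δ : ℝ) (φ : V → ℂ) : ℝ≥0∞ :=
  ∫⁻ x, ‖((bracket x ^ δ : ℝ) : ℂ) * φ x‖ₑ ^ 2

theorem weightedEnergy_const_mul (δ : ℝ) (c : ℂ) (φ : V → ℂ) :
    weightedEnergy δ (fun x => c * φ x) = ‖c‖ₑ ^ 2 * weightedEnergy δ φ := by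
  simp only [weightedEnergy, mul_left_comm _ c, enorm_mul c, mul_pow ‖c‖ₑ]
  exact lintegral_const_mul' _ _ (by finiteness)

theorem lintegral_mul_sq_le {α : Type*} [MeasurableSpace α] {μ : Measure α} {f g : α → ℝ≥0∞}
    (hf : AEMeasurable f μ) (hg : AEMeasurable g μ) :
    (∫⁻ x, f x * g x ∂μ) ^ 2 ≤ (∫⁻ x, f x ^ 2 ∂μ) * ∫⁻ x, g x ^ 2 ∂μ := by
  have hholder := ENNReal.lintegral_mul_le_Lp_mul_Lq μ Real.HolderConjugate.two_two hf hg
  have hsqrt : ∀ a : ℝ≥0∞, (a ^ (1 / 2 : ℝ)) ^ 2 = a := fun a => by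
    rw [← ENNReal.rpow_mul_natCast]; norm_num
  simp only [ENNReal.rpow_two, Pi.mul_apply] at hholder
  calc (∫⁻ x, f x * g x ∂μ) ^ 2
      ≤ ((∫⁻ x, f x ^ 2 ∂μ) ^ (1 / 2 : ℝ) * (∫⁻ x, g x ^ 2 ∂μ) ^ (1 / 2 : ℝ)) ^ 2 := by gcongr
    _ = _ := by rw [mul_pow, hsqrt, hsqrt]

variable [BorelSpace V]

theorem enorm_integral_mul_conj_sq_le (δ : ℝ) {f g : V → ℂ}
    (hf : AEStronglyMeasurable f) (hg : AEStronglyMeasurable g) :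
    ‖∫ x, f x * (starRingEnd ℂ) (g x)‖ₑ ^ 2 ≤ weightedEnergy δ f * weightedEnergy (-δ) g := by
  have hw : ∀ δ : ℝ, AEMeasurable fun x : V => ((bracket x ^ δ : ℝ) : ℂ) := fun δ =>
    (continuous_bracket_rpow δ).measurable.complex_ofReal.aemeasurable
  have hsplit : ∀ x, ‖f x * (starRingEnd ℂ) (g x)‖ₑ =
      ‖((bracket x ^ δ : ℝ) : ℂ) * f x‖ₑ * ‖((bracket x ^ (-δ) : ℝ) : ℂ) * g x‖ₑ := fun x => by
    have hcancel : ((bracket x ^ δ : ℝ) : ℂ) * ((bracket x ^ (-δ) : ℝ) : ℂ) = 1 := by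
      rw [← ofReal_mul, ← rpow_add (bracket_pos x), add_neg_cancel, rpow_zero, ofReal_one]
    rw [← enorm_mul, mul_mul_mul_comm, hcancel, one_mul, enorm_mul, enorm_mul, RCLike.enorm_conj]
  calc ‖∫ x, f x * (starRingEnd ℂ) (g x)‖ₑ ^ 2
      ≤ (∫⁻ x, ‖((bracket x ^ δ : ℝ) : ℂ) * f x‖ₑ * ‖((bracket x ^ (-δ) : ℝ) : ℂ) * g x‖ₑ) ^ 2 := by
        simp only [← hsplit]
        gcongr
        exact enorm_integral_le_lintegral_enorm _
    _ ≤ _ := lintegral_mul_sq_le ((hw δ).mul hf.aemeasurable).enorm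
        ((hw (-δ)).mul hg.aemeasurable).enorm

/-- The dyadic shell `2^k ≤ ⟨x⟩ < 2^(k+1)`. -/
def dyadicShell (V : Type*) [NormedAddCommGroup V] (k : ℕ) : Set V :=
  {x | 2 ^ k ≤ bracket x ∧ bracket x < 2 ^ (k + 1)}

theorem measurableSet_dyadicShell (k : ℕ) : MeasurableSet (dyadicShell V k) :=
  (measurableSet_le measurable_const continuous_bracket.measurable).inter
    (measurableSet_lt continuous_bracket.measurable measurable_const)

/-- The sum over the dyadic shells of the weights `⟨x⟩^(-2δ)` against a growth `R^(2s)` of the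
energy in the ball of radius `R`. -/
def dyadicConst (s δ : ℝ) : ℝ≥0∞ :=
  ENNReal.ofReal (2 ^ (2 * s)) * (1 - ENNReal.ofReal (2 ^ (2 * (s - δ))))⁻¹

theorem dyadicConst_ne_top {s δ : ℝ} (h : s < δ) : dyadicConst s δ ≠ ∞ := by
  refine ENNReal.mul_ne_top ENNReal.ofReal_ne_top (ENNReal.inv_ne_top.2 ?_)
  rw [← pos_iff_ne_zero, tsub_pos_iff_lt, ENNReal.ofReal_lt_one]
  exact rpow_lt_one_of_one_lt_of_neg one_lt_two (by linarith)

theorem lintegral_dyadicShell_le {s δ : ℝ} (hδ : 0 ≤ δ) {g : V → ℂ} {K : ℝ≥0∞} (k : ℕ)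
    (hg : ∀ R, 1 ≤ R → ∫⁻ x in closedBall 0 R, ‖g x‖ₑ ^ 2 ≤ ENNReal.ofReal (R ^ (2 * s)) * K) :
    ∫⁻ x in dyadicShell V k, ‖((bracket x ^ (-δ) : ℝ) : ℂ) * g x‖ₑ ^ 2 ≤
      ENNReal.ofReal (2 ^ (2 * s)) * K * ENNReal.ofReal (2 ^ (2 * (s - δ))) ^ k := by
  have hball : dyadicShell V k ⊆ closedBall 0 (2 ^ (k + 1)) := fun x hx =>
    mem_closedBall_zero_iff.2 ((norm_le_bracket x).trans hx.2.le)
  have hpow : ((2 ^ k : ℝ) ^ (-δ)) ^ 2 * (2 ^ (k + 1) : ℝ) ^ (2 * s) =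
      2 ^ (2 * s) * (2 ^ (2 * (s - δ))) ^ k := by
    simp only [← rpow_natCast, ← rpow_mul zero_le_two, ← rpow_add zero_lt_two]
    push_cast
    ring_nf
  calc ∫⁻ x in dyadicShell V k, ‖((bracket x ^ (-δ) : ℝ) : ℂ) * g x‖ₑ ^ 2
      ≤ ∫⁻ x in dyadicShell V k, ENNReal.ofReal (((2 ^ k : ℝ) ^ (-δ)) ^ 2) * ‖g x‖ₑ ^ 2 := by
        refine setLIntegral_mono' (measurableSet_dyadicShell k) fun x hx => ?_
        have hb := bracket_pos x
        rw [enorm_mul, mul_pow, ← ofReal_norm, norm_real, norm_of_nonneg (by positivity),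
          ← ENNReal.ofReal_pow (by positivity)]
        gcongr ENNReal.ofReal (?_ ^ 2) * _
        exact rpow_le_rpow_of_nonpos (by positivity) hx.1 (neg_nonpos.2 hδ)
    _ = ENNReal.ofReal (((2 ^ k : ℝ) ^ (-δ)) ^ 2) * ∫⁻ x in dyadicShell V k, ‖g x‖ₑ ^ 2 :=
        lintegral_const_mul' _ _ ENNReal.ofReal_ne_top
    _ ≤ ENNReal.ofReal (((2 ^ k : ℝ) ^ (-δ)) ^ 2) *
          (ENNReal.ofReal ((2 ^ (k + 1) : ℝ) ^ (2 * s)) * K) := by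
        gcongr
        exact (lintegral_mono_set hball).trans (hg _ (one_le_pow₀ one_le_two))
    _ = _ := by
        rw [← mul_assoc, ← ENNReal.ofReal_mul (by positivity), hpow,
          ENNReal.ofReal_mul (by positivity), ENNReal.ofReal_pow (by positivity), mul_right_comm]

theorem weightedEnergy_neg_le {s δ : ℝ} (hδ : 0 ≤ δ) {g : V → ℂ} {K : ℝ≥0∞}
    (hg : ∀ R, 1 ≤ R → ∫⁻ x in closedBall 0 R, ‖g x‖ₑ ^ 2 ≤ ENNReal.ofReal (R ^ (2 * s)) * K) :
    weightedEnergy (-δ) g ≤ dyadicConst s δ * K := by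
  have hcover : ⋃ k, dyadicShell V k = univ := eq_univ_of_forall fun x =>
    mem_iUnion.2 (exists_nat_pow_near (one_le_bracket x) one_lt_two)
  calc weightedEnergy (-δ) g
      = ∫⁻ x in ⋃ k, dyadicShell V k, ‖((bracket x ^ (-δ) : ℝ) : ℂ) * g x‖ₑ ^ 2 := by
        rw [hcover, Measure.restrict_univ, weightedEnergy]
    _ ≤ ∑' k, ∫⁻ x in dyadicShell V k, ‖((bracket x ^ (-δ) : ℝ) : ℂ) * g x‖ₑ ^ 2 :=
        lintegral_iUnion_le _ _
    _ ≤ ∑' k, ENNReal.ofReal (2 ^ (2 * s)) * K * ENNReal.ofReal (2 ^ (2 * (s - δ))) ^ k :=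
        ENNReal.tsum_le_tsum fun k => lintegral_dyadicShell_le hδ k hg
    _ = dyadicConst s δ * K := by
        rw [ENNReal.tsum_mul_left, ENNReal.tsum_geometric, mul_right_comm, dyadicConst]

end Weighted

section WeightedMultiplier

open Set Metric FourierTransform
open scoped ENNReal

variable {V : Type*} [NormedAddCommGroup V] [InnerProductSpace ℝ V] [FiniteDimensional ℝ V]
  [MeasurableSpace V] [BorelSpace V] {s δ : ℝ} {K : ℝ≥0∞}

theorem BallSupported.indicator_closedBall {g : V → ℂ} (hg : MemLp g 2) {R : ℝ} (hR : 1 ≤ R) :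
    BallSupported ((closedBall 0 R).indicator g) R where
  one_le := hR
  memLp := hg.indicator measurableSet_closedBall
  eq_zero x hx := indicator_of_notMem (by simpa using hx) g

theorem BallSupported.ofReal_integral_norm_sq {φ : V → ℂ} {R : ℝ} (hφ : BallSupported φ R) :
    ENNReal.ofReal (∫ x, ‖φ x‖ ^ 2) = ∫⁻ x, ‖φ x‖ₑ ^ 2 := by
  rw [ofReal_integral_eq_lintegral_ofReal hφ.integrable_norm_sq (.of_forall fun x => sq_nonneg _)]
  simp only [ENNReal.ofReal_pow (norm_nonneg _), ofReal_norm]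

theorem BallSupported.ofReal_rpow_mul_sqrt_sq {φ : V → ℂ} {R : ℝ} (hφ : BallSupported φ R) :
    ENNReal.ofReal (R ^ s * √(∫ x, ‖φ x‖ ^ 2)) ^ 2 =
      ENNReal.ofReal (R ^ (2 * s)) * ∫⁻ x, ‖φ x‖ₑ ^ 2 := by
  have hR := hφ.pos
  rw [← ENNReal.ofReal_pow (by positivity), mul_pow, sq_sqrt (by positivity), ← rpow_mul_natCast
    hR.le, ENNReal.ofReal_mul (by positivity), hφ.ofReal_integral_norm_sq, Nat.cast_two, mul_comm s]

-- Duality in `L²(B_R)`: test against the restriction of `g` itself.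
theorem setLIntegral_enorm_sq_le_of_forall_ballSupported {g : V → ℂ} (hg : MemLp g 2) {R : ℝ}
    (hR : 1 ≤ R)
    (h : ∀ γ, BallSupported γ R →
      ‖∫ x, g x * (starRingEnd ℂ) (γ x)‖ₑ ^ 2 ≤ K * ∫⁻ x, ‖γ x‖ₑ ^ 2) :
    ∫⁻ x in closedBall 0 R, ‖g x‖ₑ ^ 2 ≤ K := by
  have hball := BallSupported.indicator_closedBall hg hR
  set γ := (closedBall (0 : V) R).indicator g
  have hpair : ∫ x, g x * (starRingEnd ℂ) (γ x) = ((∫ x, ‖γ x‖ ^ 2 : ℝ) : ℂ) := by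
    rw [← integral_complex_ofReal]
    refine integral_congr_ae (.of_forall fun x => ?_)
    by_cases hx : x ∈ closedBall (0 : V) R
    · simp only [γ, indicator_of_mem hx, mul_conj, normSq_eq_norm_sq]
    · simp [γ, indicator_of_notMem hx]
  have hset : ∫⁻ x in closedBall 0 R, ‖g x‖ₑ ^ 2 = ∫⁻ x, ‖γ x‖ₑ ^ 2 := by
    rw [← lintegral_indicator measurableSet_closedBall]
    refine lintegral_congr fun x => ?_
    by_cases hx : x ∈ closedBall (0 : V) R <;> simp [γ, hx]
  have htest := h γ hball
  rw [hpair, ← ofReal_norm, norm_real, norm_of_nonneg (integral_nonneg fun _ => sq_nonneg _),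
    hball.ofReal_integral_norm_sq, sq] at htest
  rw [hset]
  rcases eq_or_ne (∫⁻ x, ‖γ x‖ₑ ^ 2) 0 with h0 | h0
  · exact h0.trans_le zero_le
  · have htop : ∫⁻ x, ‖γ x‖ₑ ^ 2 ≠ ∞ := hball.ofReal_integral_norm_sq ▸ ENNReal.ofReal_ne_top
    exact (ENNReal.mul_le_mul_iff_left h0 htop).1 htest

theorem weightedEnergy_neg_le_of_forall_ballSupported (hδ : 0 ≤ δ) {g : V → ℂ} (hg : MemLp g 2)
    (h : ∀ γ R, BallSupported γ R → ‖∫ x, g x * (starRingEnd ℂ) (γ x)‖ₑ ^ 2 ≤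
      K * (ENNReal.ofReal (R ^ (2 * s)) * ∫⁻ x, ‖γ x‖ₑ ^ 2)) :
    weightedEnergy (-δ) g ≤ dyadicConst s δ * K := by
  refine weightedEnergy_neg_le hδ fun R hR => ?_
  refine setLIntegral_enorm_sq_le_of_forall_ballSupported hg hR fun γ hγ => ?_
  exact (h γ R hγ).trans_eq (by ring)

theorem enorm_integral_mul_fourier_sq_le (hδ : 0 ≤ δ) {q : V → ℂ} {φ γ : V → ℂ}
    (hq : MemLp (fun η => (starRingEnd ℂ) (q η) * 𝓕 γ η) 2)
    (h : ∀ (φ : V → ℂ) (R : ℝ), BallSupported φ R →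
      ‖∫ η, q η * (𝓕 φ η * (starRingEnd ℂ) (𝓕 γ η))‖ₑ ^ 2 ≤
        K * (ENNReal.ofReal (R ^ (2 * s)) * ∫⁻ x, ‖φ x‖ₑ ^ 2))
    (hφ : Integrable φ) (hφ2 : MemLp φ 2) :
    ‖∫ η, q η * (𝓕 φ η * (starRingEnd ℂ) (𝓕 γ η))‖ₑ ^ 2 ≤
      dyadicConst s δ * K * weightedEnergy δ φ := by
  obtain ⟨g, hg, hrep⟩ := exists_memLp_integral_mul_conj_eq hq
  have hform : ∀ φ : V → ℂ, Integrable φ → MemLp φ 2 →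
      ‖∫ η, q η * (𝓕 φ η * (starRingEnd ℂ) (𝓕 γ η))‖ₑ =
        ‖∫ x, g x * (starRingEnd ℂ) (φ x)‖ₑ := by
    intro φ hφ hφ2
    rw [hrep φ hφ hφ2, ← RCLike.enorm_conj, ← integral_conj]
    congr 2 with η
    simp only [map_mul, conj_conj]
    ring
  have hbound : weightedEnergy (-δ) g ≤ dyadicConst s δ * K :=
    weightedEnergy_neg_le_of_forall_ballSupported hδ hg fun φ R hφR =>
      hform φ hφR.integrable hφR.memLp ▸ h φ R hφR
  calc ‖∫ η, q η * (𝓕 φ η * (starRingEnd ℂ) (𝓕 γ η))‖ₑ ^ 2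
      ≤ weightedEnergy (-δ) g * weightedEnergy δ φ := by
        rw [hform φ hφ hφ2]
        simpa only [neg_neg] using enorm_integral_mul_conj_sq_le (-δ) hg.1 hφ2.1
    _ ≤ _ := by gcongr

theorem weightedEnergy_fourierInv_mul_le (hδ : 0 ≤ δ) {q : V → ℂ} (hq : Measurable q) {B : ℝ}
    (hqB : ∀ η, ‖q η‖ ≤ B)
    (h : ∀ (φ γ : V → ℂ) (R S : ℝ), BallSupported φ R → BallSupported γ S →
      ‖∫ η, q η * (𝓕 φ η * (starRingEnd ℂ) (𝓕 γ η))‖ₑ ^ 2 ≤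
        K * (ENNReal.ofReal (R ^ (2 * s)) * ∫⁻ x, ‖φ x‖ₑ ^ 2) *
          (ENNReal.ofReal (S ^ (2 * s)) * ∫⁻ x, ‖γ x‖ₑ ^ 2))
    {φ : V → ℂ} (hφ : Integrable φ) (hφ2 : MemLp φ 2)
    (hqφ : Integrable fun η => q η * 𝓕 φ η) :
    weightedEnergy (-δ) (𝓕⁻ fun η => q η * 𝓕 φ η) ≤
      dyadicConst s δ ^ 2 * K * weightedEnergy δ φ := by
  have hqφ2 : MemLp (fun η => q η * 𝓕 φ η) 2 :=
    (memLp_two_fourier hφ hφ2).mul (memLp_top_of_bound hq.aestronglyMeasurable B (.of_forall hqB))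
  have hg : MemLp (𝓕⁻ fun η => q η * 𝓕 φ η) 2 := by
    simp only [fourierInv_eq_fourier_comp_neg]
    exact memLp_two_fourier hqφ.comp_neg
      (hqφ2.comp_measurePreserving (Measure.measurePreserving_neg volume))
  refine (weightedEnergy_neg_le_of_forall_ballSupported (s := s) hδ hg
    (K := dyadicConst s δ * K * weightedEnergy δ φ) fun γ S hγ => ?_).trans_eq (by ring)
  have hqγ : MemLp (fun η => (starRingEnd ℂ) (q η) * 𝓕 γ η) 2 :=
    hγ.memLp_fourier.mul (memLp_top_of_bound
      (RCLike.continuous_conj.measurable.comp hq).aestronglyMeasurable B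
      (.of_forall fun η => (RCLike.norm_conj (q η)).trans_le (hqB η)))
  rw [integral_fourierInv_mul_conj hqφ hγ.integrable]
  simp only [mul_assoc (q _)]
  calc ‖∫ η, q η * (𝓕 φ η * (starRingEnd ℂ) (𝓕 γ η))‖ₑ ^ 2
      ≤ dyadicConst s δ * (K * (ENNReal.ofReal (S ^ (2 * s)) * ∫⁻ x, ‖γ x‖ₑ ^ 2)) *
          weightedEnergy δ φ :=
        enorm_integral_mul_fourier_sq_le hδ hqγ
          (fun φ R hφR => (h φ γ R S hφR hγ).trans_eq (by ring)) hφ hφ2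
    _ = _ := by ring

theorem EllipticSymbol.exists_forall_weightedEnergy_resolventSymbol_le {a : V → ℝ}
    (h : EllipticSymbol a) {m : ℝ} (hm : 1 ≤ m) {d : ℕ} (hd : 1 ≤ d)
    (hV : Module.finrank ℝ V = d + 1) (hδ : 1 / 2 < δ) :
    ∃ C : ℝ≥0∞, C ≠ ∞ ∧ ∀ τ ε, ε ≠ 0 → ∀ φ : V → ℂ, Integrable φ → MemLp φ 2 →
      Integrable (fun η => resolventSymbol a m τ ε η * 𝓕 φ η) →
      weightedEnergy (-δ) (𝓕⁻ fun η => resolventSymbol a m τ ε η * 𝓕 φ η) ≤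
        C * weightedEnergy δ φ := by
  obtain ⟨κ, hκ, hκ2, hκδ⟩ : ∃ κ : ℝ, 0 < κ ∧ κ ≤ 1 / 2 ∧ κ + 1 / 2 < δ :=
    ⟨min (1 / 2) ((δ - 1 / 2) / 2), lt_min (by norm_num) (by linarith), min_le_left _ _,
      by linarith [min_le_right (1 / 2 : ℝ) ((δ - 1 / 2) / 2)]⟩
  obtain ⟨C, hC, hbound⟩ :=
    h.exists_forall_norm_integral_resolventSymbol_mul_le hm hd hV hκ hκ2
  refine ⟨dyadicConst (κ + 1 / 2) δ ^ 2 * ENNReal.ofReal C ^ 2, ENNReal.mul_ne_top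
    (ENNReal.pow_ne_top (dyadicConst_ne_top hκδ)) (by finiteness), fun τ ε hε φ hφ hφ2 hint => ?_⟩
  obtain ⟨B, hB⟩ := h.exists_forall_norm_resolventSymbol_le hm τ hε
  refine weightedEnergy_fourierInv_mul_le (by linarith) (measurable_resolventSymbol h.cont m τ ε) hB
    (fun φ γ R S hφ hγ => ?_) hφ hφ2 hint
  rw [← hφ.ofReal_rpow_mul_sqrt_sq, ← hγ.ofReal_rpow_mul_sqrt_sq, ← mul_pow, ← mul_pow,
    ← ENNReal.ofReal_mul hC, ← ENNReal.ofReal_mul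
      (mul_nonneg hC (mul_nonneg (rpow_nonneg hφ.pos.le _) (sqrt_nonneg _))), ← ofReal_norm]
  gcongr
  exact hbound τ ε hε φ γ R S hφ hγ

end WeightedMultiplier

section Swap

open FourierTransform

variable {V : Type*} [NormedAddCommGroup V] [InnerProductSpace ℝ V] [FiniteDimensional ℝ V]
  [MeasurableSpace V] [BorelSpace V] {G : ℝ → V → ℂ}

theorem fourier_fourier_swap (hG : Integrable (Function.uncurry G) (volume.prod volume))
    (τ : ℝ) (η : V) : 𝓕 (fun x => 𝓕 (fun t => G t x) τ) η = 𝓕 (fun t => 𝓕 (G t) η) τ := by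
  simp only [Real.fourier_eq, Circle.smul_def, smul_eq_mul, ← integral_const_mul]
  rw [integral_integral_swap]
  · simp only [mul_left_comm]
  · have hchar : Integrable (fun p : V × ℝ =>
        ((𝐞 (-⟪p.1, η⟫) : ℂ) * (𝐞 (-⟪p.2, τ⟫) : ℂ)) * G p.2 p.1) (volume.prod volume) := by
      refine hG.swap.bdd_mul (c := 1) (Continuous.aestronglyMeasurable ?_) (.of_forall fun p => ?_)
      · have := Real.continuous_fourierChar
        fun_prop
      · rw [norm_mul, Circle.norm_coe, Circle.norm_coe, mul_one]
    exact hchar.congr (.of_forall fun p => mul_assoc _ _ _)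

end Swap

section Duhamel

open Set FourierTransform Filter Topology

variable {p ε B : ℝ} {g : ℝ → ℂ}

/-- The weight `e^(-εt)` on the half line `t > 0`, extended by zero. -/
def dampFactor (ε : ℝ) : ℝ → ℝ := (Ioi 0).indicator fun t => rexp (-ε * t)

/-- The function `e^(-εt) g(t)` on the half line `t > 0`, extended by zero; its Fourier transform is
the Laplace transform of `g` on the line `Re z = ε`. -/
def damp (ε : ℝ) (g : ℝ → ℂ) (t : ℝ) : ℂ := (dampFactor ε t : ℂ) * g t

/-- The Duhamel integral `∫₀ᵗ e^(i(t-s)p) g(s) ds`. -/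
def duhamel (p : ℝ) (g : ℝ → ℂ) (t : ℝ) : ℂ :=
  ∫ s in (0 : ℝ)..t, cexp (I * ((t - s : ℝ) : ℂ) * (p : ℂ)) * g s

theorem norm_duhamel_le (hg : ∀ s, ‖g s‖ ≤ B) (t : ℝ) : ‖duhamel p g t‖ ≤ B * |t| := by
  have hle := intervalIntegral.norm_integral_le_of_norm_le_const (a := 0) (b := t) (C := B)
    (f := fun s : ℝ => cexp (I * ((t - s : ℝ) : ℂ) * p) * g s) fun s _ => by
      simpa [norm_exp] using hg s
  rwa [sub_zero] at hle

theorem duhamel_eq_cexp_mul (p : ℝ) (g : ℝ → ℂ) (t : ℝ) :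
    duhamel p g t = cexp (I * p * t) * ∫ s in (0 : ℝ)..t, cexp (-(I * p * s)) * g s := by
  rw [duhamel, ← intervalIntegral.integral_const_mul]
  refine intervalIntegral.integral_congr fun s _ => ?_
  rw [← mul_assoc, ← Complex.exp_add]
  congr 2
  push_cast
  ring

theorem hasDerivAt_cexp_mul_ofReal (c : ℂ) (t : ℝ) :
    HasDerivAt (fun r : ℝ => cexp (c * r)) (cexp (c * t) * c) t := by
  simpa using ((hasDerivAt_id t).ofReal_comp.const_mul c).cexp

theorem hasDerivAt_duhamel (p : ℝ) (hg : Continuous g) (t : ℝ) :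
    HasDerivAt (duhamel p g) (I * p * duhamel p g t + g t) t := by
  have hc : Continuous fun s : ℝ => cexp (-(I * p * s)) * g s := by fun_prop
  have hprimitive := intervalIntegral.integral_hasDerivAt_right (hc.intervalIntegrable 0 t)
    (hc.stronglyMeasurableAtFilter _ _) hc.continuousAt
  rw [funext (duhamel_eq_cexp_mul p g)]
  refine ((hasDerivAt_cexp_mul_ofReal (I * p) t).mul hprimitive).congr_deriv ?_
  rw [← mul_assoc (cexp (I * p * t)) (cexp (-(I * p * t))), ← Complex.exp_add, add_neg_cancel,
    Complex.exp_zero]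
  ring

theorem continuous_duhamel (p : ℝ) (hg : Continuous g) : Continuous (duhamel p g) :=
  continuous_iff_continuousAt.2 fun t => (hasDerivAt_duhamel p hg t).continuousAt

theorem fourier_damp (ε : ℝ) (g : ℝ → ℂ) (τ : ℝ) :
    𝓕 (damp ε g) τ = ∫ t in Ioi (0 : ℝ), cexp (-(ε + 2 * π * τ * I) * t) * g t := by
  rw [Real.fourier_real_eq_integral_exp_smul, ← integral_indicator measurableSet_Ioi]
  refine integral_congr_ae (.of_forall fun t => ?_)
  by_cases ht : t ∈ Ioi (0 : ℝ)
  · simp only [damp, dampFactor, indicator_of_mem ht, smul_eq_mul]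
    rw [ofReal_exp, ← mul_assoc, ← Complex.exp_add]
    congr 2
    push_cast
    ring
  · simp [damp, dampFactor, indicator_of_notMem ht]

theorem integrableOn_exp_neg_mul_affine (hε : 0 < ε) (A B : ℝ) :
    IntegrableOn (fun t : ℝ => rexp (-ε * t) * (A * t + B)) (Ioi 0) := by
  have hlinear := integrableOn_rpow_mul_exp_neg_mul_rpow (s := 1) (p := 1) (b := ε) (by norm_num)
    one_pos hε
  refine IntegrableOn.congr_fun (Integrable.add (hlinear.const_mul A)
    ((exp_neg_integrableOn_Ioi 0 hε).const_mul B)) (fun t _ => ?_) measurableSet_Ioi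
  simp only [rpow_one, Pi.add_apply]
  ring

variable {c : ℂ}

theorem norm_cexp_neg_mul_ofReal (c : ℂ) (t : ℝ) : ‖cexp (-c * t)‖ = rexp (-c.re * t) := by
  simp [norm_exp]

theorem integrableOn_cexp_neg_mul_of_norm_le (hc : 0 < c.re) {A B : ℝ} (hg : Continuous g)
    (hgB : ∀ t, 0 < t → ‖g t‖ ≤ A * t + B) :
    IntegrableOn (fun t : ℝ => cexp (-c * t) * g t) (Ioi 0) := by
  refine (integrableOn_exp_neg_mul_affine hc A B).mono' (by fun_prop) ?_
  refine (ae_restrict_iff' measurableSet_Ioi).2 (.of_forall fun t ht => ?_)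
  rw [norm_mul, norm_cexp_neg_mul_ofReal]
  gcongr
  exact hgB t ht

theorem tendsto_cexp_neg_mul_duhamel (hc : 0 < c.re) (hB : ∀ s, ‖g s‖ ≤ B) :
    Tendsto (fun t : ℝ => cexp (-c * t) * duhamel p g t) atTop (𝓝 0) := by
  have hdecay : Tendsto (fun t : ℝ => B * (t ^ (1 : ℝ) * rexp (-c.re * t))) atTop (𝓝 0) := by
    simpa using (tendsto_rpow_mul_exp_neg_mul_atTop_nhds_zero 1 c.re hc).const_mul B
  refine squeeze_zero_norm' ?_ hdecay
  filter_upwards [eventually_gt_atTop 0] with t ht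
  calc ‖cexp (-c * t) * duhamel p g t‖ ≤ rexp (-c.re * t) * (B * |t|) := by
        rw [norm_mul, norm_cexp_neg_mul_ofReal]
        gcongr
        exact norm_duhamel_le hB t
    _ = B * (t ^ (1 : ℝ) * rexp (-c.re * t)) := by
        rw [abs_of_pos ht, rpow_one]
        ring

theorem integral_Ioi_cexp_neg_mul_duhamel (hc : 0 < c.re) (hg : Continuous g)
    (hB : ∀ s, ‖g s‖ ≤ B) :
    (c - I * p) * ∫ t in Ioi (0 : ℝ), cexp (-c * t) * duhamel p g t =
      ∫ t in Ioi (0 : ℝ), cexp (-c * t) * g t := by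
  have hderiv : ∀ t : ℝ, HasDerivAt (fun t : ℝ => cexp (-c * t) * duhamel p g t)
      (cexp (-c * t) * g t - (c - I * p) * (cexp (-c * t) * duhamel p g t)) t := fun t =>
    ((hasDerivAt_cexp_mul_ofReal (-c) t).mul (hasDerivAt_duhamel p hg t)).congr_deriv (by ring)
  have hint := integrableOn_cexp_neg_mul_of_norm_le hc (A := 0) hg fun t _ => by simpa using hB t
  have hint' := integrableOn_cexp_neg_mul_of_norm_le hc (A := B) (B := 0)
    (continuous_duhamel p hg) fun t ht => by
      simpa [abs_of_pos ht] using norm_duhamel_le (p := p) hB t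
  have hftc := integral_Ioi_of_hasDerivAt_of_tendsto' (a := 0) (fun t _ => hderiv t)
    (hint.sub (hint'.const_mul _)) (tendsto_cexp_neg_mul_duhamel hc hB)
  have hzero : duhamel p g 0 = 0 := intervalIntegral.integral_same
  rw [integral_sub hint (hint'.const_mul _), integral_const_mul, hzero, mul_zero, sub_zero,
    sub_eq_zero] at hftc
  exact hftc.symm

theorem fourier_damp_duhamel (hε : 0 < ε) (hg : Continuous g) (hB : ∀ s, ‖g s‖ ≤ B) (τ : ℝ) :
    𝓕 (damp ε (duhamel p g)) τ = (ε + 2 * π * τ * I - I * p)⁻¹ * 𝓕 (damp ε g) τ := by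
  have hre : ((ε : ℂ) + 2 * π * τ * I).re = ε := by simp
  have hne : (ε : ℂ) + 2 * π * τ * I - I * p ≠ 0 := fun h =>
    hε.ne' (by simpa using congrArg re h)
  rw [fourier_damp, fourier_damp, eq_inv_mul_iff_mul_eq₀ hne]
  exact integral_Ioi_cexp_neg_mul_duhamel (hε.trans_eq hre.symm) hg hB

end Duhamel

section Damping

open Set FourierTransform Filter Topology
open scoped ENNReal

variable {ε : ℝ}

theorem measurable_dampFactor (ε : ℝ) : Measurable (dampFactor ε) :=
  Measurable.indicator (by fun_prop) measurableSet_Ioi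

theorem dampFactor_nonneg (ε t : ℝ) : 0 ≤ dampFactor ε t :=
  indicator_nonneg (fun _ _ => (Real.exp_pos _).le) _

theorem dampFactor_of_pos (ε : ℝ) {t : ℝ} (ht : 0 < t) : dampFactor ε t = rexp (-ε * t) :=
  indicator_of_mem (mem_Ioi.2 ht) _

theorem dampFactor_of_nonpos (ε : ℝ) {t : ℝ} (ht : t ≤ 0) : dampFactor ε t = 0 :=
  indicator_of_notMem (notMem_Ioi.2 ht) _

theorem dampFactor_le_one (hε : 0 < ε) (t : ℝ) : dampFactor ε t ≤ 1 := by
  rcases lt_or_ge 0 t with ht | ht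
  · rw [dampFactor_of_pos ε ht, Real.exp_le_one_iff, neg_mul, neg_nonpos]
    positivity
  · exact (dampFactor_of_nonpos ε ht).trans_le zero_le_one

theorem dampFactor_sq (ε t : ℝ) : dampFactor ε t ^ 2 = dampFactor (2 * ε) t := by
  rcases lt_or_ge 0 t with ht | ht
  · rw [dampFactor_of_pos _ ht, dampFactor_of_pos _ ht, ← Real.exp_nat_mul]
    ring_nf
  · rw [dampFactor_of_nonpos _ ht, dampFactor_of_nonpos _ ht, zero_pow two_ne_zero]

theorem integrable_dampFactor (hε : 0 < ε) : Integrable (dampFactor ε) :=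
  (integrable_indicator_iff measurableSet_Ioi).2 (exp_neg_integrableOn_Ioi 0 hε)

theorem memLp_two_dampFactor (hε : 0 < ε) : MemLp (dampFactor ε) 2 := by
  refine (memLp_two_iff_integrable_sq (measurable_dampFactor ε).aestronglyMeasurable).2 ?_
  simpa only [dampFactor_sq] using integrable_dampFactor (mul_pos two_pos hε)

theorem dampFactor_mul_one_add_abs_le (hε : 0 < ε) (t : ℝ) :
    dampFactor ε t * (1 + |t|) ≤ (1 + 2 / ε) * dampFactor (ε / 2) t := by
  rcases lt_or_ge 0 t with ht | ht
  · have hexp : 1 + |t| ≤ (1 + 2 / ε) * rexp (ε / 2 * t) := by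
      have hlin := Real.add_one_le_exp (ε / 2 * t)
      have hone : 1 ≤ rexp (ε / 2 * t) := Real.one_le_exp (by positivity)
      calc 1 + |t| = 1 + 2 / ε * (ε / 2 * t) := by rw [abs_of_pos ht]; field_simp
        _ ≤ rexp (ε / 2 * t) + 2 / ε * rexp (ε / 2 * t) := by gcongr; linarith
        _ = _ := by ring
    have hsplit : rexp (-ε * t) * rexp (ε / 2 * t) = rexp (-(ε / 2) * t) := by
      rw [← Real.exp_add]
      ring_nf
    rw [dampFactor_of_pos _ ht, dampFactor_of_pos _ ht, ← hsplit, mul_left_comm]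
    gcongr
  · rw [dampFactor_of_nonpos _ ht, dampFactor_of_nonpos _ ht, zero_mul, mul_zero]

theorem integrable_dampFactor_mul_one_add_abs (hε : 0 < ε) :
    Integrable fun t => dampFactor ε t * (1 + |t|) :=
  ((integrable_dampFactor (half_pos hε)).const_mul (1 + 2 / ε)).mono'
    ((measurable_dampFactor ε).mul (by fun_prop)).aestronglyMeasurable (.of_forall fun t => by
      rw [norm_of_nonneg (mul_nonneg (dampFactor_nonneg ε t) (by positivity))]
      exact dampFactor_mul_one_add_abs_le hε t)

theorem memLp_two_dampFactor_mul_one_add_abs (hε : 0 < ε) :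
    MemLp (fun t => dampFactor ε t * (1 + |t|)) 2 :=
  (memLp_two_dampFactor (half_pos hε)).of_le_mul (c := 1 + 2 / ε)
    ((measurable_dampFactor ε).mul (by fun_prop)).aestronglyMeasurable (.of_forall fun t => by
      rw [norm_of_nonneg (mul_nonneg (dampFactor_nonneg ε t) (by positivity)),
        norm_of_nonneg (dampFactor_nonneg _ t)]
      exact dampFactor_mul_one_add_abs_le hε t)

theorem norm_damp_le {g : ℝ → ℂ} {A : ℝ} (hA : ∀ t, ‖g t‖ ≤ (1 + |t|) * A) (t : ℝ) :
    ‖damp ε g t‖ ≤ A * (dampFactor ε t * (1 + |t|)) := by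
  rw [damp, norm_mul, norm_real, norm_of_nonneg (dampFactor_nonneg ε t), mul_left_comm, mul_comm A]
  exact mul_le_mul_of_nonneg_left (hA t) (dampFactor_nonneg ε t)

theorem aestronglyMeasurable_damp {g : ℝ → ℂ} (hg : Measurable g) :
    AEStronglyMeasurable (damp ε g) :=
  ((measurable_dampFactor ε).complex_ofReal.mul hg).aestronglyMeasurable

theorem lintegral_enorm_sq_fourier_damp (hε : 0 < ε) {g : ℝ → ℂ} (hg : Measurable g) {A : ℝ}
    (hA : ∀ t, ‖g t‖ ≤ (1 + |t|) * A) :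
    ∫⁻ τ, ‖𝓕 (damp ε g) τ‖ₑ ^ 2 = ∫⁻ t, ‖damp ε g t‖ₑ ^ 2 :=
  lintegral_enorm_sq_fourier
    (((integrable_dampFactor_mul_one_add_abs hε).const_mul A).mono' (aestronglyMeasurable_damp hg)
      (.of_forall (norm_damp_le hA)))
    (((memLp_two_dampFactor_mul_one_add_abs hε).const_mul A).mono (aestronglyMeasurable_damp hg)
      (.of_forall fun t => (norm_damp_le hA t).trans (le_abs_self _)))

theorem lintegral_dampFactor_mul_le (hε : 0 < ε) (J : ℝ → ℝ≥0∞) :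
    ∫⁻ t, ‖dampFactor ε t‖ₑ ^ 2 * J t ≤ ∫⁻ t in Ioi 0, J t := by
  rw [← lintegral_indicator measurableSet_Ioi]
  refine lintegral_mono fun t => ?_
  rcases lt_or_ge 0 t with ht | ht
  · rw [indicator_of_mem (mem_Ioi.2 ht), Real.enorm_of_nonneg (dampFactor_nonneg ε t)]
    exact mul_le_of_le_one_left' (pow_le_one' (ENNReal.ofReal_le_one.2 (dampFactor_le_one hε t)) 2)
  · simp [dampFactor_of_nonpos ε ht]

theorem lintegral_Ioi_le_of_forall_dampFactor {J : ℝ → ℝ≥0∞} (hJ : Measurable J) {K : ℝ≥0∞}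
    (h : ∀ ε, 0 < ε → ∫⁻ t, ‖dampFactor ε t‖ₑ ^ 2 * J t ≤ K) : ∫⁻ t in Ioi 0, J t ≤ K := by
  have hlim : ∀ t, 0 < t →
      Tendsto (fun k : ℕ => ‖dampFactor (1 / ((k : ℝ) + 1)) t‖ₑ ^ 2 * J t) atTop (𝓝 (J t)) := by
    intro t ht
    have hexp : Tendsto (fun k : ℕ => rexp (-(1 / ((k : ℝ) + 1)) * t)) atTop (𝓝 1) := by
      simpa [Function.comp_def] using (Real.continuous_exp.tendsto _).comp
        (tendsto_one_div_add_atTop_nhds_zero_nat.neg.mul_const t)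
    have hsq : Tendsto (fun k : ℕ => ‖rexp (-(1 / ((k : ℝ) + 1)) * t)‖ₑ ^ 2) atTop (𝓝 1) := by
      simpa using ENNReal.Tendsto.pow (n := 2) hexp.enorm
    simp only [dampFactor_of_pos _ ht]
    simpa using ENNReal.Tendsto.mul_const (b := J t) hsq (.inl one_ne_zero)
  calc ∫⁻ t in Ioi 0, J t
      = ∫⁻ t in Ioi 0, liminf (fun k : ℕ => ‖dampFactor (1 / ((k : ℝ) + 1)) t‖ₑ ^ 2 * J t) atTop :=
        setLIntegral_congr_fun measurableSet_Ioi fun t ht => (hlim t ht).liminf_eq.symm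
    _ ≤ liminf (fun k : ℕ => ∫⁻ t in Ioi 0, ‖dampFactor (1 / ((k : ℝ) + 1)) t‖ₑ ^ 2 * J t) atTop :=
        lintegral_liminf_le fun k => ((measurable_dampFactor _).enorm.pow_const 2).mul hJ
    _ ≤ K := liminf_le_of_le (by isBoundedDefault) fun b hb => by
        obtain ⟨k, hk⟩ := hb.exists
        exact hk.trans ((setLIntegral_le_lintegral _ _).trans (h _ (by positivity)))

end Damping

section TimeFourier

open Set FourierTransform
open scoped ENNReal

variable {V : Type*} {ε : ℝ} {g : ℝ → V → ℂ} {A : V → ℝ}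

/-- The Fourier transform in time of the damped function `e^(-εt) g(t, x)` on `t > 0`. -/
def timeFourier (ε : ℝ) (g : ℝ → V → ℂ) (τ : ℝ) (x : V) : ℂ := 𝓕 (damp ε fun t => g t x) τ

theorem timeFourier_const_mul (ε : ℝ) (c : V → ℂ) (g : ℝ → V → ℂ) (τ : ℝ) (x : V) :
    timeFourier ε (fun t x => c x * g t x) τ x = c x * timeFourier ε g τ x := by
  simp only [timeFourier, Real.fourier_eq, damp, Circle.smul_def, smul_eq_mul,
    mul_left_comm _ (c x), integral_const_mul]

theorem norm_timeFourier_le (hε : 0 < ε) (hgA : ∀ t x, ‖g t x‖ ≤ (1 + |t|) * A x) (τ : ℝ)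
    (x : V) : ‖timeFourier ε g τ x‖ ≤ A x * ∫ t, dampFactor ε t * (1 + |t|) := by
  refine (norm_fourier_le_integral_norm _ _).trans ?_
  rw [← integral_const_mul]
  exact integral_mono_of_nonneg (.of_forall fun t => norm_nonneg _)
    ((integrable_dampFactor_mul_one_add_abs hε).const_mul _)
    (.of_forall (norm_damp_le fun t => hgA t x))

section Measure

variable [MeasureSpace V]

theorem measurable_damp_uncurry (hg : Measurable (Function.uncurry g)) :
    Measurable fun p : ℝ × V => damp ε (fun t => g t p.2) p.1 :=
  ((measurable_dampFactor ε).comp measurable_fst).complex_ofReal.mul hg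

theorem integrable_damp_uncurry (hε : 0 < ε) (hg : Measurable (Function.uncurry g))
    (hA : Integrable A) (hgA : ∀ t x, ‖g t x‖ ≤ (1 + |t|) * A x) :
    Integrable (Function.uncurry fun t x => damp ε (fun s => g s x) t) (volume.prod volume) :=
  ((integrable_dampFactor_mul_one_add_abs hε).mul_prod hA).mono'
    (measurable_damp_uncurry hg).aestronglyMeasurable
    (.of_forall fun p => (norm_damp_le (fun t => hgA t p.2) p.1).trans_eq (mul_comm _ _))

theorem measurable_timeFourier (hg : Measurable (Function.uncurry g)) :
    Measurable (Function.uncurry (timeFourier ε g)) := by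
  simp only [Function.uncurry_def, timeFourier, Real.fourier_eq]
  have := Real.continuous_fourierChar
  refine (StronglyMeasurable.integral_prod_right (f := fun (p : ℝ × V) (t : ℝ) =>
    𝐞 (-⟪t, p.1⟫) • damp ε (fun s => g s p.2) t) (Measurable.stronglyMeasurable ?_)).measurable
  have hdamp := (measurable_damp_uncurry (ε := ε) hg).comp
    (by fun_prop : Measurable fun q : (ℝ × V) × ℝ => (q.2, q.1.2))
  exact Measurable.smul (by fun_prop) hdamp

theorem memLp_timeFourier (hε : 0 < ε) (hg : Measurable (Function.uncurry g)) {q : ℝ≥0∞}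
    (hA : MemLp A q) (hgA : ∀ t x, ‖g t x‖ ≤ (1 + |t|) * A x) (τ : ℝ) :
    MemLp (timeFourier ε g τ) q :=
  (hA.mul_const (∫ t, dampFactor ε t * (1 + |t|))).mono
    ((measurable_timeFourier hg).comp measurable_prodMk_left).aestronglyMeasurable
    (.of_forall fun x => (norm_timeFourier_le hε hgA τ x).trans (le_abs_self _))

end Measure

variable [NormedAddCommGroup V]

theorem weightedEnergy_damp [MeasureSpace V] (δ ε t : ℝ) (g : ℝ → V → ℂ) :
    weightedEnergy δ (fun x => damp ε (fun s => g s x) t) =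
      ‖dampFactor ε t‖ₑ ^ 2 * weightedEnergy δ (g t) := by
  simp only [damp, weightedEnergy_const_mul, ← ofReal_norm, norm_real]

variable [InnerProductSpace ℝ V] [FiniteDimensional ℝ V] [MeasurableSpace V] [BorelSpace V]

theorem lintegral_weightedEnergy_timeFourier (δ : ℝ) (hε : 0 < ε)
    (hg : Measurable (Function.uncurry g)) (hgA : ∀ t x, ‖g t x‖ ≤ (1 + |t|) * A x) :
    ∫⁻ τ, weightedEnergy δ (timeFourier ε g τ) =
      ∫⁻ t, ‖dampFactor ε t‖ₑ ^ 2 * weightedEnergy δ (g t) := by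
  have hw : Measurable fun p : ℝ × V => ((bracket p.2 ^ δ : ℝ) : ℂ) :=
    ((continuous_bracket_rpow δ).measurable.comp measurable_snd).complex_ofReal
  have hfourier := ((hw.mul (measurable_timeFourier (ε := ε) hg)).enorm.pow_const 2).aemeasurable
    (μ := (volume : Measure ℝ).prod (volume : Measure V))
  have hdamp := ((hw.mul (measurable_damp_uncurry (ε := ε) hg)).enorm.pow_const 2).aemeasurable
    (μ := (volume : Measure ℝ).prod (volume : Measure V))
  simp only [← weightedEnergy_damp]
  refine (lintegral_lintegral_swap hfourier).trans
    (Eq.trans (lintegral_congr fun x => ?_) (lintegral_lintegral_swap hdamp).symm)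
  have hgx : Measurable fun t => g t x := hg.comp measurable_prodMk_right
  simp only [enorm_mul, mul_pow]
  rw [lintegral_const_mul' _ _ (by finiteness), lintegral_const_mul' _ _ (by finiteness)]
  simp only [timeFourier]
  rw [lintegral_enorm_sq_fourier_damp hε hgx fun t => hgA t x]

theorem fourier_timeFourier (hε : 0 < ε) (hg : Measurable (Function.uncurry g))
    (hA : Integrable A) (hgA : ∀ t x, ‖g t x‖ ≤ (1 + |t|) * A x) (τ : ℝ) :
    𝓕 (timeFourier ε g τ) = timeFourier ε (fun t => 𝓕 (g t)) τ := by
  funext η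
  rw [timeFourier]
  refine (fourier_fourier_swap (integrable_damp_uncurry hε hg hA hgA) τ η).trans ?_
  refine congrArg (fun k : ℝ → ℂ => 𝓕 k τ) (funext fun t => ?_)
  simp only [damp, Real.fourier_eq, Circle.smul_def, smul_eq_mul,
    mul_left_comm _ (dampFactor ε t : ℂ), integral_const_mul]

theorem fourierInv_timeFourier (hε : 0 < ε) (hg : Measurable (Function.uncurry g))
    (hA : Integrable A) (hgA : ∀ t x, ‖g t x‖ ≤ (1 + |t|) * A x) (τ : ℝ) :
    𝓕⁻ (timeFourier ε g τ) = timeFourier ε (fun t => 𝓕⁻ (g t)) τ := by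
  funext x
  simp only [Real.fourierInv_eq_fourier_neg, fourier_timeFourier hε hg hA hgA,
    timeFourier]

end TimeFourier

section HalfLine

open Set FourierTransform
open scoped ENNReal

theorem norm_rpow_mul_inv_eq_resolventSymbol {V : Type*} [NormedAddCommGroup V] {σ : ℝ}
    (hσ : σ ^ 2 = 1) (b : V → ℝ) (m ε τ : ℝ) (η : V) :
    ((‖η‖ ^ (m - 1) : ℝ) : ℂ) * ((ε : ℂ) + 2 * π * τ * I - I * (σ * b η ^ m : ℝ))⁻¹ =
      -I * σ * resolventSymbol b m (σ * (2 * π * τ)) (σ * ε) η := by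
  have hσc : (σ : ℂ) ^ 2 = 1 := by exact_mod_cast hσ
  have hne : -I * (σ : ℂ) ≠ 0 :=
    mul_ne_zero (neg_ne_zero.2 I_ne_zero) (pow_ne_zero_iff two_ne_zero |>.1 (hσc ▸ one_ne_zero))
  have hden : ((σ * (2 * π * τ) : ℝ) : ℂ) - ((b η ^ m : ℝ) : ℂ) - ((σ * ε : ℝ) : ℂ) * I =
      -I * σ * (ε + 2 * π * τ * I - I * (σ * b η ^ m : ℝ)) := by
    push_cast
    linear_combination (-((b η ^ m : ℝ) : ℂ) * I ^ 2) * hσc +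
      ((σ : ℂ) * (2 * π * τ) - ((b η ^ m : ℝ) : ℂ)) * I_sq
  rw [resolventSymbol, hden, div_eq_mul_inv, mul_inv, mul_left_comm _ _ (_⁻¹),
    mul_inv_cancel_left₀ hne]

variable {V : Type*} [NormedAddCommGroup V] [InnerProductSpace ℝ V] [FiniteDimensional ℝ V]
  [MeasurableSpace V] [BorelSpace V]

/-- A forcing term `f(s, x)` whose time slices are dominated by `A`, and the Fourier transforms of
whose time slices are dominated by `B`, uniformly in time. -/
structure AdmissibleForcing (m : ℝ) (f : ℝ → V → ℂ) (A B : V → ℝ) : Prop where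
  cont : Continuous (Function.uncurry f)
  norm_le : ∀ s x, ‖f s x‖ ≤ A x
  integrable : Integrable A
  memLp : MemLp A 2
  fourier_norm_le : ∀ s η, ‖𝓕 (f s) η‖ ≤ B η
  fourier_integrable : Integrable B
  fourier_weighted : Integrable fun η => ‖η‖ ^ (m - 1) * B η

/-- The spatial Fourier transform of `|D|^(m-1)` applied to the Duhamel integral of `f` with phase
`P`. -/
def duhamelHat (m : ℝ) (P : V → ℝ) (f : ℝ → V → ℂ) (t : ℝ) (η : V) : ℂ :=
  ((‖η‖ ^ (m - 1) : ℝ) : ℂ) * duhamel (P η) (fun s => 𝓕 (f s) η) t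

theorem measurable_fourierInv_uncurry {G : ℝ → V → ℂ} (hG : Measurable (Function.uncurry G)) :
    Measurable (Function.uncurry fun t => 𝓕⁻ (G t)) := by
  simp only [Function.uncurry_def, Real.fourierInv_eq]
  have := Real.continuous_fourierChar
  refine (StronglyMeasurable.integral_prod_right (f := fun (p : ℝ × V) (v : V) =>
    𝐞 ⟪v, p.2⟫ • G p.1 v) (Measurable.stronglyMeasurable ?_)).measurable
  have hcomp := hG.comp (by fun_prop : Measurable fun q : (ℝ × V) × V => (q.1.1, q.2))
  exact Measurable.smul (by fun_prop) hcomp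

theorem measurable_weightedEnergy {g : ℝ → V → ℂ} (δ : ℝ) (hg : Measurable (Function.uncurry g)) :
    Measurable fun t => weightedEnergy δ (g t) := by
  have hw : Measurable fun p : ℝ × V => ((bracket p.2 ^ δ : ℝ) : ℂ) :=
    ((continuous_bracket_rpow δ).measurable.comp measurable_snd).complex_ofReal
  exact ((hw.mul hg).enorm.pow_const 2).lintegral_prod_right'

theorem fourierInv_const_mul (c : ℂ) (F : V → ℂ) :
    𝓕⁻ (fun η => c * F η) = fun x => c * 𝓕⁻ F x := by
  funext x
  simp only [Real.fourierInv_eq, Circle.smul_def, smul_eq_mul, mul_left_comm _ c,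
    integral_const_mul]

namespace AdmissibleForcing

variable {m σ : ℝ} {f : ℝ → V → ℂ} {A B b P : V → ℝ}

theorem continuous_fourier (hf : AdmissibleForcing m f A B) :
    Continuous fun p : ℝ × V => 𝓕 (f p.1) p.2 := by
  simp only [Real.fourier_eq]
  have := Real.continuous_fourierChar
  refine continuous_of_dominated (bound := A) (fun p => ?_) (fun p => .of_forall fun x => ?_)
    hf.integrable (.of_forall fun x => ?_)
  · have : Continuous fun x => f p.1 x := hf.cont.comp (Continuous.prodMk_right p.1)
    exact Continuous.aestronglyMeasurable (by fun_prop)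
  · rw [Circle.norm_smul]
    exact hf.norm_le _ _
  · have : Continuous fun p : ℝ × V => f p.1 x :=
      hf.cont.comp (by fun_prop : Continuous fun p : ℝ × V => (p.1, x))
    exact Continuous.smul (by fun_prop) this

theorem continuous_duhamel (hf : AdmissibleForcing m f A B) (hP : Continuous P) :
    Continuous fun p : ℝ × V => duhamel (P p.2) (fun s => 𝓕 (f s) p.2) p.1 := by
  refine intervalIntegral.continuous_parametric_intervalIntegral_of_continuous
    (f := fun (p : ℝ × V) (s : ℝ) =>
      cexp (I * ((p.1 - s : ℝ) : ℂ) * (P p.2 : ℂ)) * 𝓕 (f s) p.2) ?_ continuous_fst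
  have hfourier := hf.continuous_fourier.comp
    (by fun_prop : Continuous fun q : (ℝ × V) × ℝ => (q.2, q.1.2))
  exact Continuous.mul (by fun_prop) hfourier

theorem continuous_duhamelHat (hf : AdmissibleForcing m f A B) (hm : 1 ≤ m) (hP : Continuous P) :
    Continuous (Function.uncurry (duhamelHat m P f)) :=
  (continuous_ofReal.comp (continuous_snd.norm.rpow_const fun _ => .inr (sub_nonneg.2 hm))).mul
    (hf.continuous_duhamel hP)

theorem norm_le_one_add_abs_mul (hf : AdmissibleForcing m f A B) (t : ℝ) (x : V) :
    ‖f t x‖ ≤ (1 + |t|) * A x :=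
  (hf.norm_le t x).trans (le_mul_of_one_le_left ((norm_nonneg _).trans (hf.norm_le t x))
    (le_add_of_nonneg_right (abs_nonneg t)))

theorem norm_duhamelHat_le (hf : AdmissibleForcing m f A B) (P : V → ℝ) (t : ℝ) (η : V) :
    ‖duhamelHat m P f t η‖ ≤ (1 + |t|) * (‖η‖ ^ (m - 1) * B η) := by
  have hB : 0 ≤ B η := (norm_nonneg _).trans (hf.fourier_norm_le 0 η)
  rw [duhamelHat, norm_mul, norm_real, norm_of_nonneg (by positivity)]
  calc ‖η‖ ^ (m - 1) * ‖duhamel (P η) (fun s => 𝓕 (f s) η) t‖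
      ≤ ‖η‖ ^ (m - 1) * (B η * |t|) := by
        gcongr
        exact norm_duhamel_le (fun s => hf.fourier_norm_le s η) t
    _ ≤ ‖η‖ ^ (m - 1) * (B η * (1 + |t|)) := by gcongr; exact le_add_of_nonneg_left zero_le_one
    _ = _ := by ring

theorem norm_fourierInv_duhamelHat_le (hf : AdmissibleForcing m f A B) (P : V → ℝ) (t : ℝ)
    (x : V) : ‖𝓕⁻ (duhamelHat m P f t) x‖ ≤ (1 + |t|) * ∫ η, ‖η‖ ^ (m - 1) * B η := by
  rw [Real.fourierInv_eq_fourier_neg, ← integral_const_mul]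
  exact (norm_fourier_le_integral_norm _ _).trans <|
    integral_mono_of_nonneg (.of_forall fun η => norm_nonneg _) (hf.fourier_weighted.const_mul _)
      (.of_forall (hf.norm_duhamelHat_le P t))

theorem timeFourier_duhamelHat (hf : AdmissibleForcing m f A B) (hσ : σ ^ 2 = 1) {ε : ℝ}
    (hε : 0 < ε) (τ : ℝ) (η : V) :
    timeFourier ε (duhamelHat m (fun η => σ * b η ^ m) f) τ η =
      -I * σ * (resolventSymbol b m (σ * (2 * π * τ)) (σ * ε) η * 𝓕 (timeFourier ε f τ) η) := by
  have hslice : Continuous fun s => 𝓕 (f s) η :=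
    hf.continuous_fourier.comp (Continuous.prodMk_left η)
  calc timeFourier ε (duhamelHat m (fun η => σ * b η ^ m) f) τ η
      = ((‖η‖ ^ (m - 1) : ℝ) : ℂ) *
          𝓕 (damp ε (duhamel (σ * b η ^ m) fun s => 𝓕 (f s) η)) τ :=
        timeFourier_const_mul ε (fun η => ((‖η‖ ^ (m - 1) : ℝ) : ℂ))
          (fun t η => duhamel (σ * b η ^ m) (fun s => 𝓕 (f s) η) t) τ η
    _ = _ := by
        rw [fourier_damp_duhamel hε hslice fun s => hf.fourier_norm_le s η, ← mul_assoc,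
          norm_rpow_mul_inv_eq_resolventSymbol hσ, mul_assoc (-I * (σ : ℂ)),
          fourier_timeFourier hε hf.cont.measurable hf.integrable hf.norm_le_one_add_abs_mul,
          timeFourier]

theorem weightedEnergy_timeFourier_fourierInv_duhamelHat (hf : AdmissibleForcing m f A B)
    (hm : 1 ≤ m) (hb : Continuous b) (δ : ℝ) (hσ : σ ^ 2 = 1) {ε : ℝ} (hε : 0 < ε) (τ : ℝ) :
    weightedEnergy δ (timeFourier ε (fun t => 𝓕⁻ (duhamelHat m (fun η => σ * b η ^ m) f t)) τ) =
      weightedEnergy δ (𝓕⁻ fun η =>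
        resolventSymbol b m (σ * (2 * π * τ)) (σ * ε) η * 𝓕 (timeFourier ε f τ) η) := by
  have hP : Continuous fun η => σ * b η ^ m :=
    continuous_const.mul (hb.rpow_const fun _ => .inr (zero_le_one.trans hm))
  have hσ1 : ‖-I * (σ : ℂ)‖ₑ = 1 := by
    rw [← ofReal_norm, norm_mul, norm_neg, norm_I, one_mul, norm_real, norm_eq_abs,
      (pow_eq_one_iff_of_nonneg (abs_nonneg σ) two_ne_zero).1 ((sq_abs σ).trans hσ),
      ENNReal.ofReal_one]
  rw [← fourierInv_timeFourier hε (hf.continuous_duhamelHat hm hP).measurable hf.fourier_weighted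
    (hf.norm_duhamelHat_le fun η => σ * b η ^ m),
    show timeFourier ε (duhamelHat m (fun η => σ * b η ^ m) f) τ = _ from
      funext (hf.timeFourier_duhamelHat hσ hε τ), fourierInv_const_mul, weightedEnergy_const_mul,
    hσ1, one_pow, one_mul]

theorem integrable_fourier_timeFourier (hf : AdmissibleForcing m f A B) {ε : ℝ} (hε : 0 < ε)
    (τ : ℝ) : Integrable (𝓕 (timeFourier ε f τ)) := by
  have hB : ∀ t η, ‖𝓕 (f t) η‖ ≤ (1 + |t|) * B η := fun t η =>
    (hf.fourier_norm_le t η).trans <| le_mul_of_one_le_left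
      ((norm_nonneg _).trans (hf.fourier_norm_le t η)) (le_add_of_nonneg_right (abs_nonneg t))
  rw [fourier_timeFourier hε hf.cont.measurable hf.integrable hf.norm_le_one_add_abs_mul]
  exact memLp_one_iff_integrable.1 <| memLp_timeFourier hε hf.continuous_fourier.measurable
    (memLp_one_iff_integrable.2 hf.fourier_integrable) hB τ

end AdmissibleForcing

theorem EllipticSymbol.exists_forall_lintegral_Ioi_le {b : V → ℝ} {d : ℕ} {m δ : ℝ}
    (hb : EllipticSymbol b) (hm : 1 ≤ m) (hd : 1 ≤ d) (hV : Module.finrank ℝ V = d + 1)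
    (hδ : 1 / 2 < δ) :
    ∃ C : ℝ≥0∞, C ≠ ∞ ∧ ∀ σ : ℝ, σ ^ 2 = 1 → ∀ f A B, AdmissibleForcing m f A B →
      ∫⁻ t in Ioi 0, weightedEnergy (-δ) (𝓕⁻ (duhamelHat m (fun η => σ * b η ^ m) f t)) ≤
        C * ∫⁻ t in Ioi 0, weightedEnergy δ (f t) := by
  obtain ⟨C, hC, hres⟩ := hb.exists_forall_weightedEnergy_resolventSymbol_le hm hd hV hδ
  refine ⟨C, hC, fun σ hσ f A B hf => ?_⟩
  have hσ0 : σ ≠ 0 := by rintro rfl; norm_num at hσ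
  have hP : Continuous fun η => σ * b η ^ m :=
    continuous_const.mul (hb.cont.rpow_const fun _ => .inr (zero_le_one.trans hm))
  have hu : Measurable (Function.uncurry fun t =>
      𝓕⁻ (duhamelHat m (fun η => σ * b η ^ m) f t)) :=
    measurable_fourierInv_uncurry (hf.continuous_duhamelHat hm hP).measurable
  refine lintegral_Ioi_le_of_forall_dampFactor (measurable_weightedEnergy _ hu) fun ε hε => ?_
  have hfreq : ∀ τ, weightedEnergy (-δ) (timeFourier ε
      (fun t => 𝓕⁻ (duhamelHat m (fun η => σ * b η ^ m) f t)) τ) ≤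
        C * weightedEnergy δ (timeFourier ε f τ) := fun τ => by
    have hφ : Integrable (timeFourier ε f τ) := memLp_one_iff_integrable.1 <|
      memLp_timeFourier hε hf.cont.measurable (memLp_one_iff_integrable.2 hf.integrable)
        hf.norm_le_one_add_abs_mul τ
    rw [hf.weightedEnergy_timeFourier_fourierInv_duhamelHat hm hb.cont _ hσ hε]
    exact hres _ _ (mul_ne_zero hσ0 hε.ne') _ hφ
      (memLp_timeFourier hε hf.cont.measurable hf.memLp hf.norm_le_one_add_abs_mul τ)
      (hb.integrable_resolventSymbol_mul hm _ (mul_ne_zero hσ0 hε.ne')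
        (hf.integrable_fourier_timeFourier hε τ))
  calc ∫⁻ t, ‖dampFactor ε t‖ₑ ^ 2 *
        weightedEnergy (-δ) (𝓕⁻ (duhamelHat m (fun η => σ * b η ^ m) f t))
      = ∫⁻ τ, weightedEnergy (-δ) (timeFourier ε
          (fun t => 𝓕⁻ (duhamelHat m (fun η => σ * b η ^ m) f t)) τ) :=
        (lintegral_weightedEnergy_timeFourier _ hε hu (hf.norm_fourierInv_duhamelHat_le _)).symm
    _ ≤ ∫⁻ τ, C * weightedEnergy δ (timeFourier ε f τ) := lintegral_mono hfreq
    _ = C * ∫⁻ t, ‖dampFactor ε t‖ₑ ^ 2 * weightedEnergy δ (f t) := by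
        rw [lintegral_const_mul' _ _ hC, lintegral_weightedEnergy_timeFourier _ hε
          hf.cont.measurable hf.norm_le_one_add_abs_mul]
    _ ≤ C * ∫⁻ t in Ioi 0, weightedEnergy δ (f t) := by
        gcongr C * ?_
        exact lintegral_dampFactor_mul_le hε _

end HalfLine

section SchwartzForcing

open FourierTransform
open scoped SchwartzMap

section Slice

variable {V F : Type*} [NormedAddCommGroup V] [NormedSpace ℝ V] [NormedAddCommGroup F]
  [NormedSpace ℝ F]

theorem norm_iteratedFDeriv_slice_le (f : 𝓢(ℝ × V, F)) (j : ℕ) (s : ℝ) (v : V) :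
    ‖iteratedFDeriv ℝ j (fun y => f (s, y)) v‖ ≤ ‖iteratedFDeriv ℝ j f (s, v)‖ := by
  have hcomp : (fun y => f (s, y)) =
      (fun z => f ((s, (0 : V)) + z)) ∘ ContinuousLinearMap.inr ℝ ℝ V := by
    ext y; simp
  have hsmooth : ContDiff ℝ j (fun z => f ((s, (0 : V)) + z)) :=
    (f.smooth j).comp (contDiff_const.add contDiff_id)
  have hinr : ‖ContinuousLinearMap.inr ℝ ℝ V‖ ≤ 1 :=
    ContinuousLinearMap.opNorm_le_bound _ zero_le_one fun y => by simp
  rw [hcomp, ContinuousLinearMap.iteratedFDeriv_comp_right _ hsmooth _ le_rfl,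
    iteratedFDeriv_comp_add_left]
  refine (ContinuousMultilinearMap.norm_compContinuousLinearMap_le _ _).trans ?_
  simpa using mul_le_mul_of_nonneg_left
    (Finset.prod_le_one (s := Finset.univ) (fun (_ : Fin j) _ => norm_nonneg _) fun _ _ => hinr)
    (norm_nonneg (iteratedFDeriv ℝ j f (s, v)))

theorem norm_pow_mul_iteratedFDeriv_slice_le (f : 𝓢(ℝ × V, F)) (k j : ℕ) (s : ℝ) (v : V) :
    ‖v‖ ^ k * ‖iteratedFDeriv ℝ j (fun y => f (s, y)) v‖ ≤ SchwartzMap.seminorm ℝ k j f :=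
  calc ‖v‖ ^ k * ‖iteratedFDeriv ℝ j (fun y => f (s, y)) v‖
      ≤ ‖(s, v)‖ ^ k * ‖iteratedFDeriv ℝ j f (s, v)‖ := by
        gcongr
        · exact le_max_right _ _
        · exact norm_iteratedFDeriv_slice_le f j s v
    _ ≤ SchwartzMap.seminorm ℝ k j f := f.le_seminorm ℝ k j (s, v)

/-- The restriction of a Schwartz function on space-time to the time `s`. -/
def schwartzSlice (f : 𝓢(ℝ × V, F)) (s : ℝ) : 𝓢(V, F) where
  toFun y := f (s, y)
  smooth' := f.smooth'.comp (contDiff_prodMk_right s)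
  decay' k j := ⟨SchwartzMap.seminorm ℝ k j f, norm_pow_mul_iteratedFDeriv_slice_le f k j s⟩

theorem seminorm_schwartzSlice_le (f : 𝓢(ℝ × V, F)) (k j : ℕ) (s : ℝ) :
    SchwartzMap.seminorm ℝ k j (schwartzSlice f s) ≤ SchwartzMap.seminorm ℝ k j f :=
  SchwartzMap.seminorm_le_bound ℝ k j _ (apply_nonneg _ f)
    (norm_pow_mul_iteratedFDeriv_slice_le f k j s)

-- A continuous linear map is bounded by finitely many Schwartz seminorms, and each of these is
-- bounded on all slices at once.
theorem exists_forall_norm_map_schwartzSlice_le {W G : Type*} [NormedAddCommGroup W]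
    [NormedSpace ℝ W] [NormedAddCommGroup G] [NormedSpace ℝ G] (T : 𝓢(V, F) →L[ℝ] 𝓢(W, G))
    (f : 𝓢(ℝ × V, F)) (N : ℕ) :
    ∃ K, ∀ s x, ‖T (schwartzSlice f s) x‖ ≤ K * (1 + ‖x‖) ^ (-(N : ℝ)) := by
  let q : Seminorm ℝ 𝓢(W, G) := (Finset.Iic (N, 0)).sup (schwartzSeminormFamily ℝ W G)
  have hq : Continuous (q.comp T.toLinearMap) :=
    (Seminorm.continuous_finsetSup fun i _ =>
      (schwartz_withSeminorms ℝ W G).continuous_seminorm i).comp T.continuous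
  obtain ⟨S, C, -, hC⟩ := Seminorm.bound_of_continuous (schwartz_withSeminorms ℝ V F) _ hq
  have hslice : ∀ s, S.sup (schwartzSeminormFamily ℝ V F) (schwartzSlice f s) ≤
      S.sup (schwartzSeminormFamily ℝ (ℝ × V) F) f := fun s =>
    Seminorm.finset_sup_apply_le (apply_nonneg _ f) fun i hi =>
      (seminorm_schwartzSlice_le f i.1 i.2 s).trans <|
        Seminorm.le_finset_sup_apply (p := schwartzSeminormFamily ℝ (ℝ × V) F) hi
  refine ⟨2 ^ N * (C * S.sup (schwartzSeminormFamily ℝ (ℝ × V) F) f), fun s x => ?_⟩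
  rw [Real.rpow_neg (by positivity), Real.rpow_natCast, ← div_eq_mul_inv,
    le_div_iff₀ (by positivity), mul_comm]
  calc (1 + ‖x‖) ^ N * ‖T (schwartzSlice f s) x‖
      ≤ 2 ^ N * q (T (schwartzSlice f s)) := by
        simpa only [norm_iteratedFDeriv_zero, q] using! SchwartzMap.one_add_le_sup_seminorm_apply
          (𝕜 := ℝ) (m := (N, 0)) le_rfl le_rfl (T (schwartzSlice f s)) x
    _ ≤ 2 ^ N * (C * S.sup (schwartzSeminormFamily ℝ V F) (schwartzSlice f s)) := by
        gcongr
        exact hC (schwartzSlice f s)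
    _ ≤ _ := by
        gcongr
        exact hslice s

end Slice

theorem continuous_one_add_norm_rpow {V : Type*} [SeminormedAddCommGroup V] (r : ℝ) :
    Continuous fun x : V => (1 + ‖x‖) ^ r :=
  (continuous_const.add continuous_norm).rpow_const fun x =>
    .inl (add_pos_of_pos_of_nonneg one_pos (norm_nonneg x)).ne'

variable {V : Type*} [NormedAddCommGroup V] [InnerProductSpace ℝ V] [FiniteDimensional ℝ V]
  [MeasurableSpace V] [BorelSpace V]

theorem memLp_two_one_add_norm_rpow_neg {r : ℝ} (hr : Module.finrank ℝ V < 2 * r) :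
    MemLp (fun x : V => (1 + ‖x‖) ^ (-r)) 2 := by
  rw [memLp_two_iff_integrable_sq (continuous_one_add_norm_rpow _).aestronglyMeasurable]
  refine (integrable_one_add_norm hr).congr (.of_forall fun x => ?_)
  simp only
  rw [← Real.rpow_natCast, ← Real.rpow_mul (by positivity)]
  congr 1
  push_cast
  ring

theorem integrable_norm_rpow_mul_one_add_norm_rpow_neg {k r : ℝ} (hk : 0 ≤ k)
    (hr : Module.finrank ℝ V < r - k) :
    Integrable fun x : V => ‖x‖ ^ k * (1 + ‖x‖) ^ (-r) := by
  refine (integrable_one_add_norm hr).mono' (((continuous_norm.rpow_const fun _ => .inr hk).mul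
    (continuous_one_add_norm_rpow _)).aestronglyMeasurable) (.of_forall fun x => ?_)
  rw [norm_of_nonneg (by positivity)]
  calc ‖x‖ ^ k * (1 + ‖x‖) ^ (-r)
      ≤ (1 + ‖x‖) ^ k * (1 + ‖x‖) ^ (-r) := by
        gcongr
        exact le_add_of_nonneg_left zero_le_one
    _ = (1 + ‖x‖) ^ (-(r - k)) := by
        rw [← Real.rpow_add (by positivity)]
        ring_nf

theorem exists_admissibleForcing (f : 𝓢(ℝ × V, ℂ)) {m : ℝ} (hm : 1 ≤ m) :
    ∃ A B : V → ℝ, AdmissibleForcing m (fun s y => f (s, y)) A B := by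
  obtain ⟨N, hN⟩ := exists_nat_gt (Module.finrank ℝ V + m)
  have : (0 : ℝ) ≤ Module.finrank ℝ V := Nat.cast_nonneg _
  obtain ⟨K, hK⟩ := exists_forall_norm_map_schwartzSlice_le (.id ℝ 𝓢(V, ℂ)) f N
  obtain ⟨L, hL⟩ := exists_forall_norm_map_schwartzSlice_le (fourierCLM ℝ 𝓢(V, ℂ)) f N
  have hint : Integrable fun x : V => (1 + ‖x‖) ^ (-(N : ℝ)) :=
    integrable_one_add_norm (by linarith)
  refine ⟨fun x => K * (1 + ‖x‖) ^ (-(N : ℝ)), fun x => L * (1 + ‖x‖) ^ (-(N : ℝ)),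
    f.continuous, hK, hint.const_mul K, ?_, hL, hint.const_mul L, ?_⟩
  · exact (memLp_two_one_add_norm_rpow_neg (by linarith)).const_mul K
  · simp only [mul_left_comm _ L]
    exact (integrable_norm_rpow_mul_one_add_norm_rpow_neg (by linarith)
      (by linarith)).const_mul L

theorem AdmissibleForcing.comp_neg {m : ℝ} {f : ℝ → V → ℂ} {A B : V → ℝ}
    (hf : AdmissibleForcing m f A B) : AdmissibleForcing m (fun s => f (-s)) A B where
  cont := hf.cont.comp (continuous_fst.neg.prodMk continuous_snd)
  norm_le s := hf.norm_le (-s)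
  integrable := hf.integrable
  memLp := hf.memLp
  fourier_norm_le s := hf.fourier_norm_le (-s)
  fourier_integrable := hf.fourier_integrable
  fourier_weighted := hf.fourier_weighted

end SchwartzForcing

section WholeLine

open Set FourierTransform
open scoped ENNReal

variable {V : Type*} [NormedAddCommGroup V] [InnerProductSpace ℝ V] [FiniteDimensional ℝ V]
  [MeasurableSpace V] [BorelSpace V] {m δ : ℝ} {f : ℝ → V → ℂ} {A B P : V → ℝ}

theorem AdmissibleForcing.intervalIntegral_fourierInv (hf : AdmissibleForcing m f A B)
    (hP : Continuous P) (t : ℝ) (y : V) :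
    ∫ s in (0 : ℝ)..t, 𝓕⁻ (fun η => cexp (I * ((t - s : ℝ) : ℂ) * (P η : ℂ)) * 𝓕 (f s) η) y =
      𝓕⁻ (fun η => duhamel (P η) (fun s => 𝓕 (f s) η) t) y := by
  have := Real.continuous_fourierChar
  have hfourier := hf.continuous_fourier
  have hfin : IsFiniteMeasure (volume.restrict (uIoc 0 t)) := ⟨by simp [uIoc]⟩
  have hdom : Integrable (fun p : ℝ × V => 1 * B p.2)
      ((volume.restrict (uIoc 0 t)).prod volume) :=
    (integrable_const (1 : ℝ)).mul_prod hf.fourier_integrable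
  simp only [Real.fourierInv_eq]
  rw [intervalIntegral_integral_swap]
  · simp only [duhamel, Circle.smul_def, intervalIntegral.integral_smul]
  refine hdom.mono' (Continuous.aestronglyMeasurable ?_) (.of_forall fun p => ?_)
  · simp only [Function.uncurry_def, Circle.smul_def]
    fun_prop
  · have hexp : ‖cexp (I * ((t - p.1 : ℝ) : ℂ) * (P p.2 : ℂ))‖ = 1 := by
      rw [mul_assoc, ← ofReal_mul, mul_comm, norm_exp_ofReal_mul_I]
    rw [Function.uncurry_def, Circle.norm_smul, norm_mul, hexp]
    gcongr
    exact hf.fourier_norm_le _ _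

-- Only an inequality: if the Duhamel integral is not integrable in space, then its Fourier integral
-- is `0` by convention. Otherwise Fourier inversion gives equality.
theorem AdmissibleForcing.norm_fourierInv_mul_fourier_le (hf : AdmissibleForcing m f A B)
    (hP : Continuous P) (t : ℝ) (x : V) :
    ‖𝓕⁻ (fun η => ((‖η‖ ^ (m - 1) : ℝ) : ℂ) *
        𝓕 (𝓕⁻ fun η => duhamel (P η) (fun s => 𝓕 (f s) η) t) η) x‖ ≤
      ‖𝓕⁻ (duhamelHat m P f t) x‖ := by
  set k : V → ℂ := fun η => duhamel (P η) (fun s => 𝓕 (f s) η) t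
  have hcont : Continuous k :=
    (hf.continuous_duhamel hP).comp (by fun_prop : Continuous fun η : V => (t, η))
  have hint : Integrable k :=
    (hf.fourier_integrable.mul_const |t|).mono' hcont.aestronglyMeasurable
      (.of_forall fun η => norm_duhamel_le (fun s => hf.fourier_norm_le s η) t)
  by_cases hinv : Integrable (𝓕⁻ k)
  · have hfourier : Integrable (𝓕 k) := by
      simpa only [Real.fourierInv_eq_fourier_neg, neg_neg] using hinv.comp_neg
    rw [hcont.fourier_fourierInv_eq hint hfourier]
    rfl
  · have hzero : ∀ η, 𝓕 (𝓕⁻ k) η = 0 := fun η =>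
      integral_undef fun h => hinv ((Real.fourierIntegral_convergent_iff η).1 h)
    have : 𝓕⁻ (fun η => ((‖η‖ ^ (m - 1) : ℝ) : ℂ) * 𝓕 (𝓕⁻ k) η) x = 0 := by
      simp only [hzero, mul_zero, Real.fourierInv_eq, smul_zero, integral_zero]
    rw [this, norm_zero]
    exact norm_nonneg _

theorem duhamel_neg_time (p : ℝ) (g : ℝ → ℂ) (t : ℝ) :
    duhamel p g (-t) = -duhamel (-p) (fun s => g (-s)) t := by
  have hneg := intervalIntegral.integral_comp_neg (a := 0) (b := t)
    (f := fun s => cexp (I * ((-t - s : ℝ) : ℂ) * (p : ℂ)) * g s)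
  rw [duhamel, duhamel, intervalIntegral.integral_symm, ← neg_zero, ← hneg, neg_zero]
  congr 2
  funext s
  push_cast
  ring_nf

theorem weightedEnergy_fourierInv_duhamelHat_neg_time (P : V → ℝ) (f : ℝ → V → ℂ) (t : ℝ) :
    weightedEnergy δ (𝓕⁻ (duhamelHat m P f (-t))) =
      weightedEnergy δ (𝓕⁻ (duhamelHat m (fun η => -P η) (fun s => f (-s)) t)) := by
  have hneg : duhamelHat m P f (-t) = fun η =>
      (-1) * duhamelHat m (fun η => -P η) (fun s => f (-s)) t η := by
    funext η
    rw [duhamelHat, duhamelHat, duhamel_neg_time]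
    ring
  rw [hneg, fourierInv_const_mul, weightedEnergy_const_mul, enorm_neg, enorm_one, one_pow, one_mul]

theorem lintegral_eq_Ioi_add_comp_neg (F : ℝ → ℝ≥0∞) :
    ∫⁻ t, F t = (∫⁻ t in Ioi 0, F t) + ∫⁻ t in Ioi 0, F (-t) := by
  have hneg : ∫⁻ t in Ioi (0 : ℝ), F (-t) = ∫⁻ t in Iio 0, F t := by
    simpa using (Measure.measurePreserving_neg (volume : Measure ℝ)).setLIntegral_comp_preimage_emb
      (MeasurableEquiv.neg ℝ).measurableEmbedding F (Iio 0)
  rw [hneg, ← lintegral_add_compl F (measurableSet_Ioi (a := (0 : ℝ))), compl_Ioi,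
    setLIntegral_congr (Iio_ae_eq_Iic (a := (0 : ℝ)))]

theorem EllipticSymbol.exists_forall_lintegral_weightedEnergy_le {b : V → ℝ} {d : ℕ}
    (hb : EllipticSymbol b) (hm : 1 ≤ m) (hd : 1 ≤ d) (hV : Module.finrank ℝ V = d + 1)
    (hδ : 1 / 2 < δ) :
    ∃ C : ℝ≥0∞, C ≠ ∞ ∧ ∀ f A B, AdmissibleForcing m f A B →
      ∫⁻ t, weightedEnergy (-δ) (𝓕⁻ (duhamelHat m (fun η => b η ^ m) f t)) ≤
        C * ∫⁻ t, weightedEnergy δ (f t) := by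
  obtain ⟨C, hC, hhalf⟩ := hb.exists_forall_lintegral_Ioi_le hm hd hV hδ
  refine ⟨C, hC, fun f A B hf => ?_⟩
  have hpos := hhalf 1 (by norm_num) f A B hf
  have hneg := hhalf (-1) (by norm_num) _ A B hf.comp_neg
  simp only [one_mul, neg_one_mul, ← weightedEnergy_fourierInv_duhamelHat_neg_time] at hpos hneg
  rw [lintegral_eq_Ioi_add_comp_neg, lintegral_eq_Ioi_add_comp_neg fun t => weightedEnergy δ (f t),
    mul_add]
  exact add_le_add hpos hneg

theorem eLpNorm_bracket_rpow_mul_sq {g : ℝ → V → ℂ} (δ : ℝ) (hg : Measurable (Function.uncurry g)) :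
    eLpNorm (fun p : ℝ × V => ((bracket p.2 ^ δ : ℝ) : ℂ) * g p.1 p.2) 2 volume ^ 2 =
      ∫⁻ t, weightedEnergy δ (g t) := by
  have hw : Measurable fun p : ℝ × V => ((bracket p.2 ^ δ : ℝ) : ℂ) :=
    ((continuous_bracket_rpow δ).measurable.comp measurable_snd).complex_ofReal
  rw [eLpNorm_two_sq, Measure.volume_eq_prod]
  exact lintegral_prod _ ((hw.mul hg).enorm.pow_const 2).aemeasurable

theorem EllipticSymbol.exists_forall_eLpNorm_fourierInv_duhamelHat_le {b : V → ℝ} {d : ℕ}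
    (hb : EllipticSymbol b) (hm : 1 ≤ m) (hd : 1 ≤ d) (hV : Module.finrank ℝ V = d + 1)
    (hδ : 1 / 2 < δ) :
    ∃ C : ℝ≥0∞, C ≠ ∞ ∧ ∀ f A B, AdmissibleForcing m f A B →
      eLpNorm (fun p : ℝ × V => ((bracket p.2 ^ (-δ) : ℝ) : ℂ) *
          𝓕⁻ (duhamelHat m (fun η => b η ^ m) f p.1) p.2) 2 volume ≤
        C * eLpNorm (fun p : ℝ × V => ((bracket p.2 ^ δ : ℝ) : ℂ) * f p.1 p.2) 2 volume := by
  obtain ⟨C, hC, henergy⟩ := hb.exists_forall_lintegral_weightedEnergy_le hm hd hV hδ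
  refine ⟨C ^ (1 / 2 : ℝ), ENNReal.rpow_ne_top_of_nonneg (by norm_num) hC, fun f A B hf => ?_⟩
  have hP : Continuous fun η => b η ^ m :=
    hb.cont.rpow_const fun _ => .inr (zero_le_one.trans hm)
  have hsqrt : (C ^ (1 / 2 : ℝ)) ^ 2 = C := by
    rw [← ENNReal.rpow_mul_natCast]; norm_num
  rw [← (ENNReal.pow_right_strictMono two_ne_zero).le_iff_le, mul_pow, hsqrt,
    eLpNorm_bracket_rpow_mul_sq _ hf.cont.measurable, eLpNorm_bracket_rpow_mul_sq (-δ)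
      (measurable_fourierInv_uncurry (hf.continuous_duhamelHat hm hP).measurable)]
  exact henergy f A B hf

end WholeLine

section Normalization

open FourierTransform

variable {n : ℕ}

theorem FT_two_pi_smul (f : EuclideanSpace ℝ (Fin n) → ℂ) (η : EuclideanSpace ℝ (Fin n)) :
    FT n f ((2 * π) • η) = (((2 * π) ^ (-(n : ℝ) / 2) : ℝ) : ℂ) * 𝓕 f η := by
  rw [FT, Real.fourier_eq', real_smul]
  congr 2
  funext x
  rw [real_inner_smul_right, smul_eq_mul]
  congr 2
  push_cast
  ring

theorem IFT_eq_fourierInv (F : EuclideanSpace ℝ (Fin n) → ℂ) (x : EuclideanSpace ℝ (Fin n)) :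
    IFT n F x = (((2 * π) ^ ((n : ℝ) / 2) : ℝ) : ℂ) * 𝓕⁻ (fun η => F ((2 * π) • η)) x := by
  have hpi : (0 : ℝ) < 2 * π := by positivity
  have hinv : 𝓕⁻ (fun η => F ((2 * π) • η)) x =
      ∫ η, cexp (I * ((⟪x, (2 * π) • η⟫ : ℝ) : ℂ)) * F ((2 * π) • η) := by
    rw [Real.fourierInv_eq']
    congr 1
    funext η
    rw [real_inner_smul_right, real_inner_comm, smul_eq_mul]
    congr 2
    push_cast
    ring
  rw [hinv, Measure.integral_comp_smul volume (fun ξ => cexp (I * ((⟪x, ξ⟫ : ℝ) : ℂ)) * F ξ),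
    finrank_euclideanSpace_fin, abs_of_pos (by positivity), ← real_smul, IFT, smul_smul]
  congr 1
  rw [← Real.rpow_natCast, ← Real.rpow_neg hpi.le, ← Real.rpow_add hpi]
  ring_nf

theorem mult_eq_fourierInv (q f : EuclideanSpace ℝ (Fin n) → ℂ) :
    mult n q f = 𝓕⁻ fun η => q ((2 * π) • η) * 𝓕 f η := by
  have hcancel :
      (((2 * π) ^ ((n : ℝ) / 2) : ℝ) : ℂ) * (((2 * π) ^ (-(n : ℝ) / 2) : ℝ) : ℂ) = 1 := by
    rw [← ofReal_mul, ← Real.rpow_add (by positivity), ← add_div, add_neg_cancel, zero_div,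
      Real.rpow_zero, ofReal_one]
  funext x
  rw [mult, IFT_eq_fourierInv]
  simp only [FT_two_pi_smul, mul_left_comm (q _), fourierInv_const_mul]
  rw [← mul_assoc, hcancel, one_mul]

theorem mult_norm_rpow_eq_mul_fourierInv (s : ℝ) (f : EuclideanSpace ℝ (Fin n) → ℂ)
    (x : EuclideanSpace ℝ (Fin n)) :
    mult n (fun ξ => ((‖ξ‖ ^ s : ℝ) : ℂ)) f x =
      (((2 * π) ^ s : ℝ) : ℂ) * 𝓕⁻ (fun η => ((‖η‖ ^ s : ℝ) : ℂ) * 𝓕 f η) x := by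
  have hpi : (0 : ℝ) ≤ 2 * π := by positivity
  simp only [mult_eq_fourierInv, norm_smul, norm_of_nonneg hpi, mul_rpow hpi (norm_nonneg _),
    ofReal_mul, mul_assoc ((_ ^ s : ℝ) : ℂ), fourierInv_const_mul]

theorem AdmissibleForcing.norm_mult_norm_rpow_duhamel_le {m : ℝ}
    {A B a : EuclideanSpace ℝ (Fin n) → ℝ} {f : ℝ → EuclideanSpace ℝ (Fin n) → ℂ}
    (hf : AdmissibleForcing m f A B) (hm : 0 ≤ m) (ha : Continuous a) (t : ℝ)
    (x : EuclideanSpace ℝ (Fin n)) :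
    ‖mult n (fun ξ => ((‖ξ‖ ^ (m - 1) : ℝ) : ℂ))
        (fun y => ∫ s in (0 : ℝ)..t,
          mult n (fun ξ => cexp (I * ((t - s : ℝ) : ℂ) * ((a ξ ^ m : ℝ) : ℂ))) (f s) y) x‖ ≤
      (2 * π) ^ (m - 1) * ‖𝓕⁻ (duhamelHat m (fun η => a ((2 * π) • η) ^ m) f t) x‖ := by
  have hP : Continuous fun η => a ((2 * π) • η) ^ m :=
    (ha.comp (continuous_const_smul _)).rpow_const fun _ => .inr hm
  have hinner : (fun y => ∫ s in (0 : ℝ)..t,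
      mult n (fun ξ => cexp (I * ((t - s : ℝ) : ℂ) * ((a ξ ^ m : ℝ) : ℂ))) (f s) y) =
      𝓕⁻ fun η => duhamel (a ((2 * π) • η) ^ m) (fun s => 𝓕 (f s) η) t := by
    funext y
    simp only [mult_eq_fourierInv]
    exact hf.intervalIntegral_fourierInv hP t y
  rw [hinner, mult_norm_rpow_eq_mul_fourierInv, norm_mul, norm_real,
    norm_of_nonneg (by positivity)]
  gcongr
  exact hf.norm_fourierInv_mul_fourier_le hP t x

end Normalization

theorem smoothing_type_I_inhomogeneous_general (n : ℕ) (hn : 2 ≤ n) (m : ℝ) (hm : 1 ≤ m)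
    (δ : ℝ) (hδ : 1 / 2 < δ)
    (a : EuclideanSpace ℝ (Fin n) → ℝ)
    (ha_cont : Continuous a)
    (ha_hom : ∀ t : ℝ, 0 < t → ∀ ξ, a (t • ξ) = t * a ξ)
    (ha_pos : ∀ ξ : EuclideanSpace ℝ (Fin n), ξ ≠ 0 → 0 < a ξ) :
    ∃ C > 0, ∀ f : SchwartzMap (ℝ × EuclideanSpace ℝ (Fin n)) ℂ,
      eLpNorm (fun tx : ℝ × EuclideanSpace ℝ (Fin n) =>
          ((Real.sqrt (1 + ‖tx.2‖ ^ 2) ^ (-δ) : ℝ) : ℂ) *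
            mult n (fun ξ => ((‖ξ‖ ^ (m - 1) : ℝ) : ℂ))
              (fun y => ∫ s in (0 : ℝ)..tx.1,
                mult n (fun ξ => Complex.exp (Complex.I * ((tx.1 - s : ℝ) : ℂ) *
                    ((a ξ ^ m : ℝ) : ℂ)))
                  (fun y' => f (s, y')) y) tx.2) 2 volume
        ≤ ENNReal.ofReal C *
            eLpNorm (fun tx : ℝ × EuclideanSpace ℝ (Fin n) =>
              ((Real.sqrt (1 + ‖tx.2‖ ^ 2) ^ (δ) : ℝ) : ℂ) * f tx) 2 volume := by
  have hb : EllipticSymbol fun η => a ((2 * π) • η) :=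
    ⟨ha_cont.comp (continuous_const_smul _), fun t ht η => by rw [smul_comm, ha_hom t ht],
      fun η hη => ha_pos _ (smul_ne_zero two_pi_pos.ne' hη)⟩
  obtain ⟨C, hC, hle⟩ := hb.exists_forall_eLpNorm_fourierInv_duhamelHat_le (d := n - 1) hm
    (by lia) (by rw [finrank_euclideanSpace_fin]; lia) hδ
  refine ⟨(2 * π) ^ (m - 1) * C.toReal + 1, by positivity, fun f => ?_⟩
  obtain ⟨A, B, hf⟩ := exists_admissibleForcing f hm
  refine (eLpNorm_le_mul_eLpNorm_of_ae_le_mul (c := (2 * π) ^ (m - 1))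
    (.of_forall fun tx => ?_) 2).trans ((mul_le_mul_right (hle _ A B hf) _).trans ?_)
  · rw [norm_mul, norm_mul, mul_left_comm]
    exact mul_le_mul_of_nonneg_left (hf.norm_mult_norm_rpow_duhamel_le (by linarith) ha_cont _ _)
      (norm_nonneg _)
  · rw [← mul_assoc]
    refine mul_le_mul_left ?_ _
    rw [ENNReal.ofReal_add (by positivity) zero_le_one, ENNReal.ofReal_mul (by positivity),
      ENNReal.ofReal_toReal hC]
    exact le_self_add

theorem smoothing_type_I_inhomogeneous (n : ℕ) (hn : 2 ≤ n) (m : ℝ) (hm : 1 < m)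
    (δ : ℝ) (hδ : 1 / 2 < δ)
    (a : EuclideanSpace ℝ (Fin n) → ℝ)
    (ha_cont : Continuous a)
    (ha_smooth : ContDiffOn ℝ (⊤ : ℕ∞) a {(0 : EuclideanSpace ℝ (Fin n))}ᶜ)
    (ha_hom : ∀ t : ℝ, 0 < t → ∀ ξ, a (t • ξ) = t * a ξ)
    (ha_pos : ∀ ξ : EuclideanSpace ℝ (Fin n), ξ ≠ 0 → 0 < a ξ) :
    ∃ C > 0, ∀ f : SchwartzMap (ℝ × EuclideanSpace ℝ (Fin n)) ℂ,
      eLpNorm (fun tx : ℝ × EuclideanSpace ℝ (Fin n) =>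
          ((Real.sqrt (1 + ‖tx.2‖ ^ 2) ^ (-δ) : ℝ) : ℂ) *
            mult n (fun ξ => ((‖ξ‖ ^ (m - 1) : ℝ) : ℂ))
              (fun y => ∫ s in (0 : ℝ)..tx.1,
                mult n (fun ξ => Complex.exp (Complex.I * ((tx.1 - s : ℝ) : ℂ) *
                    ((a ξ ^ m : ℝ) : ℂ)))
                  (fun y' => f (s, y')) y) tx.2) 2 volume
        ≤ ENNReal.ofReal C *
            eLpNorm (fun tx : ℝ × EuclideanSpace ℝ (Fin n) =>
              ((Real.sqrt (1 + ‖tx.2‖ ^ 2) ^ (δ) : ℝ) : ℂ) * f tx) 2 volume :=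
  smoothing_type_I_inhomogeneous_general n hn m hm.le δ hδ a ha_cont ha_hom ha_pos
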